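/- For the six-vertex model with weights a = b = c = 1, the free energy exists and equals f(1,1,1) = (3/2)·log(4/3). -/

import Mathlib

open MeasureTheory Filter
open scoped Real BigOperators

noncomputable section

namespace SixVertexFE

/-- Configurations on the `N × M` torus: each vertex `v` carries a horizontal edge
(from `v` to `v+(1,0)`) and a vertical edge (from `v` to `v+(0,1)`).
First component: `true` = the horizontal edge points East.
Second component: `true` = the vertical edge points North. -/
abbrev Cfg (N M : ℕ) := ((Fin N × Fin M) → Bool) × ((Fin N × Fin M) → Bool)

/-- the predecessor (`i - 1`) on the discrete circle `Fin N`. -/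
def predF {N : ℕ} (i : Fin N) : Fin N := ⟨(i.1 + (N - 1)) % N, Nat.mod_lt _ i.pos⟩

/-- number of edges incident to `v` that point towards `v`. -/
abbrev inArrows {N M : ℕ} (ω : Cfg N M) (v : Fin N × Fin M) : ℕ :=
  (if ω.1 (predF v.1, v.2) = true then 1 else 0) +
  (if ω.1 v = false then 1 else 0) +
  (if ω.2 (v.1, predF v.2) = true then 1 else 0) +
  (if ω.2 v = false then 1 else 0)

/-- the ice rule: exactly two incoming arrows at every vertex. -/
abbrev IsSixVertex {N M : ℕ} (ω : Cfg N M) : Prop := ∀ v, inArrows ω v = 2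

/-- weight of a vertex: `c` if the two horizontal edges at `v` point in opposite
directions, `a` for all-East-all-North or all-West-all-South, `b` for
all-East-all-South or all-West-all-North. -/
def vWeight (a b c : ℝ) {N M : ℕ} (ω : Cfg N M) (v : Fin N × Fin M) : ℝ :=
  if ω.1 (predF v.1, v.2) ≠ ω.1 v then c
  else if (ω.1 (predF v.1, v.2) = true ∧ ω.1 v = true ∧
            ω.2 (v.1, predF v.2) = true ∧ ω.2 v = true) ∨
          (ω.1 (predF v.1, v.2) = false ∧ ω.1 v = false ∧
            ω.2 (v.1, predF v.2) = false ∧ ω.2 v = false) then a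
  else if (ω.1 (predF v.1, v.2) = true ∧ ω.1 v = true ∧
            ω.2 (v.1, predF v.2) = false ∧ ω.2 v = false) ∨
          (ω.1 (predF v.1, v.2) = false ∧ ω.1 v = false ∧
            ω.2 (v.1, predF v.2) = true ∧ ω.2 v = true) then b
  else 0

/-- weight of a configuration. -/
def W (a b c : ℝ) {N M : ℕ} (ω : Cfg N M) : ℝ := ∏ v, vWeight a b c ω v

/-- partition function of the six-vertex model on the `N × M` torus. -/
def Z (N M : ℕ) (a b c : ℝ) : ℝ :=
  ∑ ω : Cfg N M, if IsSixVertex ω then W a b c ω else 0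

/-- number of North-pointing vertical edges in row `j`. -/
abbrev RowCount {N M : ℕ} (ω : Cfg N M) (j : Fin M) : ℕ :=
  (Finset.univ.filter fun i : Fin N => ω.2 (i, j) = true).card

/-- partition function restricted to configurations with exactly `n` up arrows per row. -/
def Zn (N M n : ℕ) (a b c : ℝ) : ℝ :=
  ∑ ω : Cfg N M, if IsSixVertex ω ∧ (∀ j, RowCount ω j = n) then W a b c ω else 0

/-- `F` is the per-site free energy of the six-vertex model with weights `a, b, c`:
the inner limit in `M` exists for every even `N ≥ 2`, and the resulting quantities
converge to `F` as `N → ∞` along even `N`. -/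
def FreeEnergyIs (a b c F : ℝ) : Prop :=
  ∃ g : ℕ → ℝ,
    (∀ N : ℕ, Even N → 2 ≤ N →
      Tendsto (fun M : ℕ => Real.log (Z N M a b c) / (M * N)) atTop (nhds (g N))) ∧
    Tendsto g (atTop ⊓ Filter.principal {N | Even N}) (nhds F)

/-- `L = f_N^{(n)}(a,b,c)`, the free energy of the six-vertex model in the sector
with `n` up arrows per row. -/
def SectorFE (N n : ℕ) (a b c L : ℝ) : Prop :=
  Tendsto (fun M : ℕ => Real.log (Zn N M n a b c) / (N * M)) atTop (nhds L)

end SixVertexFE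

/-!
At `a = b = c = 1` the crossing parameter is `2π/3`, a root of unity point at which the fusion
hierarchy of the transfer matrix closes: the eigenvalue `Λ(u)` of the Perron vector, as a function
of the spectral parameter, satisfies a cubic functional equation.  On the boundary of the strip
`0 ≤ Re u ≤ 2π/3` this equation determines `|Λ|` up to a factor `3`.  If `Λ` has no zeros in the
strip, the Phragmén–Lindelöf principle, applied to the quotient of `Λ` by an explicit function and
to its inverse, propagates the bound to the midpoint `u = π/3`, which is the ice point, and gives
`κ ^ N ≤ Λ_N ≤ 3 κ ^ N` in the balanced sector, with `κ = (4/3) ^ (3/2)`.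

Zero-freeness is proved by induction on `N`: inhomogeneities `±d` on two neighbouring sites are
deformed from `d = π/3`, where the two sites fuse and the eigenvalue is that of a shorter row times
an explicit factor, down to `d = 0`; along the way no zero can cross the boundary of the strip.

The other sectors are compared with the balanced one by gluing a row to its spin-reversed copy and
applying the Schur test.
-/

namespace SixVertexFE

/-! ### Perron–Frobenius theory on an invariant block -/

section PerronFrobenius

open Matrix

variable {ι : Type*} [Fintype ι]

/-- `A` is a nonnegative matrix for which the nonempty index set `s` is an isolated primitive block:
`A` has no entry between `s` and its complement, and some power of `A` is positive on `s × s`. -/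
structure IsPrimitiveOn [DecidableEq ι] (A : Matrix ι ι ℝ) (s : Set ι) : Prop where
  nonneg : ∀ i j, 0 ≤ A i j
  mem_iff_mem : ∀ i j, A i j ≠ 0 → (i ∈ s ↔ j ∈ s)
  exists_pow_pos : ∃ n : ℕ, ∀ i ∈ s, ∀ j ∈ s, 0 < (A ^ n) i j
  nonempty : s.Nonempty

/-- `ψ` is the Perron eigenvector of `A` on the block `s`, normalised to total mass one, and `μ` is
its eigenvalue. -/
structure IsPerronPair (A : Matrix ι ι ℝ) (s : Set ι) (ψ : ι → ℝ) (μ : ℝ) : Prop where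
  pos : ∀ i ∈ s, 0 < ψ i
  eq_zero : ∀ i ∉ s, ψ i = 0
  sum_eq_one : ∑ i, ψ i = 1
  mulVec_eq : A *ᵥ ψ = μ • ψ

/-- The quadratic form `∑ x i * A i j * x j` of a square matrix. -/
def quadForm (A : Matrix ι ι ℝ) (x : ι → ℝ) : ℝ :=
  ∑ i, ∑ j, x i * A i j * x j

lemma quadForm_transpose (A : Matrix ι ι ℝ) (x : ι → ℝ) : quadForm Aᵀ x = quadForm A x := by
  rw [quadForm, Finset.sum_comm]
  simp only [quadForm, transpose_apply, mul_comm, mul_left_comm]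

lemma quadForm_add (A B : Matrix ι ι ℝ) (x : ι → ℝ) :
    quadForm (A + B) x = quadForm A x + quadForm B x := by
  simp only [quadForm, Matrix.add_apply, mul_add, add_mul, Finset.sum_add_distrib]

lemma quadForm_mul_quadForm {κ : Type*} [Fintype κ] (A : Matrix ι ι ℝ) (B : Matrix κ κ ℝ)
    (x : ι → ℝ) (y : κ → ℝ) :
    quadForm A x * quadForm B y =
      ∑ i, ∑ k, ∑ j, ∑ l, (x i * y k) * (A i j * B k l) * (x j * y l) := by
  simp only [quadForm, Finset.sum_mul_sum]
  refine Finset.sum_congr rfl fun i _ => Finset.sum_congr rfl fun k _ =>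
    Finset.sum_congr rfl fun j _ => Finset.sum_congr rfl fun l _ => by ring

lemma quadForm_of_mulVec_eq {A : Matrix ι ι ℝ} {x : ι → ℝ} {μ : ℝ} (h : A *ᵥ x = μ • x) :
    quadForm A x = μ * ∑ i, x i ^ 2 := by
  rw [quadForm, Finset.mul_sum]
  refine Finset.sum_congr rfl fun i _ => ?_
  have hi : ∑ j, A i j * x j = μ * x i := congrFun h i
  simp only [mul_assoc, ← Finset.mul_sum, hi]
  ring

variable {A : Matrix ι ι ℝ} {s : Set ι}

lemma pow_mulVec_of_mulVec_eq_smul {R : Type*} [CommSemiring R] [DecidableEq ι] {A : Matrix ι ι R}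
    {x : ι → R} {μ : R} (hx : A *ᵥ x = μ • x) (n : ℕ) : (A ^ n) *ᵥ x = μ ^ n • x := by
  induction n with
  | zero => simp
  | succ n ih => rw [pow_succ, ← mulVec_mulVec, hx, mulVec_smul, ih, smul_smul, pow_succ']

namespace IsPerronPair

variable {ψ : ι → ℝ} {μ : ℝ}

lemma nonneg (h : IsPerronPair A s ψ μ) (i : ι) : 0 ≤ ψ i := by
  by_cases hi : i ∈ s
  · exact (h.pos i hi).le
  · exact (h.eq_zero i hi).ge

lemma le_one (h : IsPerronPair A s ψ μ) (i : ι) : ψ i ≤ 1 :=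
  h.sum_eq_one ▸ Finset.single_le_sum (fun j _ => h.nonneg j) (Finset.mem_univ i)

lemma mulVec_apply (h : IsPerronPair A s ψ μ) (i : ι) : ∑ j, A i j * ψ j = μ * ψ i :=
  congrFun h.mulVec_eq i

lemma pow_mulVec_apply [DecidableEq ι] (h : IsPerronPair A s ψ μ) (n : ℕ) (i : ι) :
    ∑ j, (A ^ n) i j * ψ j = μ ^ n * ψ i :=
  congrFun (pow_mulVec_of_mulVec_eq_smul h.mulVec_eq n) i

lemma sum_mulVec (h : IsPerronPair A s ψ μ) : ∑ i, (A *ᵥ ψ) i = μ := by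
  simp only [h.mulVec_eq, Pi.smul_apply, smul_eq_mul, ← Finset.mul_sum, h.sum_eq_one, mul_one]

lemma eigenvalue_nonneg (h : IsPerronPair A s ψ μ) (hA : ∀ i j, 0 ≤ A i j) : 0 ≤ μ := by
  rw [← h.sum_mulVec]
  exact Finset.sum_nonneg fun i _ => Finset.sum_nonneg fun j _ => mul_nonneg (hA i j) (h.nonneg j)

lemma smul (h : IsPerronPair A s ψ μ) (r : ℝ) : IsPerronPair (r • A) s ψ (r * μ) where
  pos := h.pos
  eq_zero := h.eq_zero
  sum_eq_one := h.sum_eq_one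
  mulVec_eq := by rw [smul_mulVec, h.mulVec_eq, smul_smul]

lemma apply_le (h : IsPerronPair A s ψ μ) (hA : ∀ i j, 0 ≤ A i j) {i : ι} (hi : i ∈ s) :
    A i i ≤ μ := by
  refine le_of_mul_le_mul_right ?_ (h.pos i hi)
  rw [← h.mulVec_apply i]
  exact Finset.single_le_sum (f := fun j => A i j * ψ j)
    (fun j _ => mul_nonneg (hA i j) (h.nonneg j)) (Finset.mem_univ i)

/-- A Schur test: the test function is the Perron eigenvector itself. -/
lemma quadForm_le (h : IsPerronPair A s ψ μ) (hA : ∀ i j, 0 ≤ A i j) (hsymm : A.IsSymm)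
    {x : ι → ℝ} (hx : ∀ i ∉ s, x i = 0) :
    quadForm A x ≤ μ * ∑ i, x i ^ 2 := by
  have weighted_am_gm : ∀ i j, x i * A i j * x j ≤
      (x i ^ 2 / ψ i * (A i j * ψ j) + x j ^ 2 / ψ j * (A j i * ψ i)) / 2 := by
    intro i j
    by_cases hi : i ∈ s
    swap; · simp [hx i hi, h.eq_zero i hi]
    by_cases hj : j ∈ s
    swap; · simp [hx j hj, h.eq_zero j hj]
    have hψi := h.pos i hi
    have hψj := h.pos j hj
    have hsq : (x i ^ 2 / ψ i * (A i j * ψ j) + x j ^ 2 / ψ j * (A i j * ψ i)) / 2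
        - x i * A i j * x j = A i j * (x i * ψ j - x j * ψ i) ^ 2 / (2 * ψ i * ψ j) := by
      field_simp; ring
    have hsq_nonneg : 0 ≤ A i j * (x i * ψ j - x j * ψ i) ^ 2 / (2 * ψ i * ψ j) := by
      have := hA i j
      positivity
    rw [hsymm.apply i j]
    linarith
  calc quadForm A x
      ≤ ∑ i, ∑ j, (x i ^ 2 / ψ i * (A i j * ψ j) + x j ^ 2 / ψ j * (A j i * ψ i)) / 2 :=
        Finset.sum_le_sum fun i _ => Finset.sum_le_sum fun j _ => weighted_am_gm i j
    _ = ∑ i, ∑ j, x i ^ 2 / ψ i * (A i j * ψ j) := by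
        simp only [← Finset.sum_div, Finset.sum_add_distrib]
        rw [Finset.sum_comm (f := fun i j => x j ^ 2 / ψ j * (A j i * ψ i))]
        ring
    _ = ∑ i, μ * x i ^ 2 := by
        refine Finset.sum_congr rfl fun i _ => ?_
        rw [← Finset.mul_sum, h.mulVec_apply]
        by_cases hi : i ∈ s
        · have := h.pos i hi
          field_simp
        · simp [hx i hi]
    _ = μ * ∑ i, x i ^ 2 := by rw [Finset.mul_sum]

lemma exists_mul_le (h : IsPerronPair A s ψ μ) (hs : s.Nonempty) {x : ι → ℝ}
    (hx : ∀ i ∉ s, x i = 0) : ∃ t : ℝ, (∀ j, t * ψ j ≤ x j) ∧ ∃ i ∈ s, x i = t * ψ i := by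
  obtain ⟨i, hi, hmin⟩ := s.toFinite.exists_minimalFor (fun i => x i / ψ i) s hs
  refine ⟨x i / ψ i, fun j => ?_, i, hi, (div_mul_cancel₀ _ (h.pos i hi).ne').symm⟩
  by_cases hj : j ∈ s
  · rw [← le_div_iff₀ (h.pos j hj)]
    exact (le_total (x j / ψ j) (x i / ψ i)).elim (hmin hj) id
  · rw [h.eq_zero j hj, hx j hj, mul_zero]

end IsPerronPair

namespace IsPrimitiveOn

variable [DecidableEq ι] {ψ φ x : ι → ℝ} {μ ν : ℝ}

lemma pow_nonneg (h : IsPrimitiveOn A s) (n : ℕ) (i j : ι) : 0 ≤ (A ^ n) i j :=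
  pow_apply_nonneg h.nonneg n i j

lemma pow_mem_iff_mem (h : IsPrimitiveOn A s) (n : ℕ) (i j : ι) (hij : (A ^ n) i j ≠ 0) :
    i ∈ s ↔ j ∈ s := by
  induction n generalizing j with
  | zero =>
    rw [pow_zero, one_apply, ne_eq, ite_eq_right_iff, Classical.not_imp] at hij
    rw [hij.1]
  | succ n ih =>
    rw [pow_succ, mul_apply] at hij
    obtain ⟨k, -, hk⟩ := Finset.exists_ne_zero_of_sum_ne_zero hij
    exact (ih k (left_ne_zero_of_mul hk)).trans (h.mem_iff_mem k j (right_ne_zero_of_mul hk))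

lemma pow_mulVec_eq_zero (h : IsPrimitiveOn A s) (n : ℕ) (hx : ∀ i ∉ s, x i = 0) {i : ι}
    (hi : i ∉ s) : ((A ^ n) *ᵥ x) i = 0 := by
  refine Finset.sum_eq_zero fun j _ => ?_
  by_cases hj : j ∈ s
  · exact mul_eq_zero_of_left (by_contra fun hij => hi ((h.pow_mem_iff_mem n i j hij).2 hj)) _
  · exact mul_eq_zero_of_right _ (hx j hj)

lemma pow_mulVec_pos (h : IsPrimitiveOn A s) {n : ℕ} (hn : ∀ i ∈ s, ∀ j ∈ s, 0 < (A ^ n) i j)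
    (hx : 0 ≤ x) (hxs : ∀ i ∉ s, x i = 0) (hx0 : x ≠ 0) {i : ι} (hi : i ∈ s) :
    0 < ((A ^ n) *ᵥ x) i := by
  obtain ⟨k, hk⟩ := Function.ne_iff.1 hx0
  have hks : k ∈ s := by_contra fun hks => hk (hxs k hks)
  exact Finset.sum_pos' (fun j _ => mul_nonneg (h.pow_nonneg n i j) (hx j))
    ⟨k, Finset.mem_univ k, mul_pos (hn i hi k hks) ((hx k).lt_of_ne' hk)⟩

lemma pos_of_eigenvector (h : IsPrimitiveOn A s) (hx : 0 ≤ x) (hxs : ∀ i ∉ s, x i = 0)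
    (hx0 : x ≠ 0) (he : A *ᵥ x = μ • x) {i : ι} (hi : i ∈ s) : 0 < x i := by
  obtain ⟨n, hn⟩ := h.exists_pow_pos
  have hpos := h.pow_mulVec_pos hn hx hxs hx0 hi
  rw [pow_mulVec_of_mulVec_eq_smul he] at hpos
  exact (hx i).lt_of_ne fun hxi => by simp [← hxi] at hpos

lemma isPerronPair (h : IsPrimitiveOn A s) (hx : 0 ≤ x) (hxs : ∀ i ∉ s, x i = 0)
    (hx1 : ∑ i, x i = 1) (he : A *ᵥ x = μ • x) : IsPerronPair A s x μ where
  pos _ := h.pos_of_eigenvector hx hxs (by rintro rfl; simp at hx1) he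
  eq_zero := hxs
  sum_eq_one := hx1
  mulVec_eq := he

lemma eq_smul_of_eigenvector (h : IsPrimitiveOn A s) (hψ : IsPerronPair A s ψ μ)
    (hxs : ∀ i ∉ s, x i = 0) (he : A *ᵥ x = μ • x) : ∃ t : ℝ, x = t • ψ := by
  obtain ⟨t, hle, i, hi, hxi⟩ := hψ.exists_mul_le h.nonempty hxs
  refine ⟨t, sub_eq_zero.1 (by_contra fun hne => ?_)⟩
  have hpos : 0 < (x - t • ψ) i :=
    h.pos_of_eigenvector (x := x - t • ψ) (μ := μ) (fun j => sub_nonneg.2 (hle j))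
      (fun j hj => by simp [hxs j hj, hψ.eq_zero j hj]) hne
      (by rw [mulVec_sub, mulVec_smul, he, hψ.mulVec_eq, smul_sub, smul_comm]) hi
  simp [hxi] at hpos

lemma eigenvalue_le (h : IsPrimitiveOn A s) (hψ : IsPerronPair A s ψ μ)
    (hφ : IsPerronPair A s φ ν) : μ ≤ ν := by
  obtain ⟨t, hle, i, hi, hφi⟩ := hψ.exists_mul_le h.nonempty hφ.eq_zero
  have hmul : μ * φ i ≤ ν * φ i := calc
    μ * φ i = ∑ j, A i j * (t * ψ j) := by
      rw [hφi, mul_left_comm, ← hψ.mulVec_apply, Finset.mul_sum]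
      simp only [mul_left_comm]
    _ ≤ ∑ j, A i j * φ j :=
      Finset.sum_le_sum fun j _ => mul_le_mul_of_nonneg_left (hle j) (h.nonneg i j)
    _ = ν * φ i := hφ.mulVec_apply i
  exact le_of_mul_le_mul_right hmul (hφ.pos i hi)

theorem perronVector_unique (h : IsPrimitiveOn A s) (hψ : IsPerronPair A s ψ μ)
    (hφ : IsPerronPair A s φ ν) : ψ = φ := by
  obtain rfl : μ = ν := le_antisymm (h.eigenvalue_le hψ hφ) (h.eigenvalue_le hφ hψ)
  obtain ⟨t, rfl⟩ := h.eq_smul_of_eigenvector hφ hψ.eq_zero hψ.mulVec_eq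
  have ht : t = 1 := by
    simpa [← Finset.mul_sum, hφ.sum_eq_one] using hψ.sum_eq_one
  rw [ht, one_smul]

end IsPrimitiveOn

/-- The pairs `(ρ, x)` with `x` a probability vector supported on `s` and `ρ x ≤ A x`. The
Collatz–Wielandt characterisation of the Perron eigenvalue is that it is the largest such `ρ`. -/
def collatzWielandtSet (A : Matrix ι ι ℝ) (s : Set ι) : Set (ℝ × (ι → ℝ)) :=
  {q | 0 ≤ q.1 ∧ q.2 ∈ stdSimplex ℝ ι ∧ (∀ i, q.1 * q.2 i ≤ (A *ᵥ q.2) i) ∧ ∀ i ∉ s, q.2 i = 0}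

lemma fst_le_of_mem_collatzWielandtSet (hA : ∀ i j, 0 ≤ A i j) {q : ℝ × (ι → ℝ)}
    (hq : q ∈ collatzWielandtSet A s) : q.1 ≤ ∑ i, ∑ j, A i j := by
  obtain ⟨-, hx, hle, -⟩ := hq
  have hx1 : ∀ j, q.2 j ≤ 1 := fun j =>
    hx.2 ▸ Finset.single_le_sum (fun k _ => hx.1 k) (Finset.mem_univ j)
  calc q.1 = ∑ i, q.1 * q.2 i := by rw [← Finset.mul_sum, hx.2, mul_one]
    _ ≤ ∑ i, ∑ j, A i j * q.2 j := Finset.sum_le_sum fun i _ => hle i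
    _ ≤ ∑ i, ∑ j, A i j := Finset.sum_le_sum fun i _ => Finset.sum_le_sum fun j _ =>
        mul_le_of_le_one_right (hA i j) (hx1 j)

lemma isClosed_collatzWielandtSet : IsClosed (collatzWielandtSet A s) := by
  have hsimplex : IsClosed {q : ℝ × (ι → ℝ) | q.2 ∈ stdSimplex ℝ ι} :=
    (isClosed_stdSimplex ℝ ι).preimage continuous_snd
  have hle : IsClosed {q : ℝ × (ι → ℝ) | ∀ i, q.1 * q.2 i ≤ (A *ᵥ q.2) i} := by
    simp only [Set.ofPred_forall]
    exact isClosed_iInter fun i => isClosed_le (by fun_prop)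
      ((continuous_apply i).comp (by fun_prop : Continuous fun q : ℝ × (ι → ℝ) => A *ᵥ q.2))
  have hsupp : IsClosed {q : ℝ × (ι → ℝ) | ∀ i ∉ s, q.2 i = 0} := by
    simp only [Set.ofPred_forall]
    exact isClosed_iInter fun i => isClosed_iInter fun _ => isClosed_eq (by fun_prop) (by fun_prop)
  exact (isClosed_le continuous_const continuous_fst).inter (hsimplex.inter (hle.inter hsupp))

lemma isCompact_collatzWielandtSet (hA : ∀ i j, 0 ≤ A i j) :
    IsCompact (collatzWielandtSet A s) :=
  (isCompact_Icc.prod (isCompact_stdSimplex ℝ ι)).of_isClosed_subset isClosed_collatzWielandtSet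
    fun _ hq => ⟨⟨hq.1, fst_le_of_mem_collatzWielandtSet hA hq⟩, hq.2.1⟩

lemma inv_sum_smul_mem_collatzWielandtSet {ρ : ℝ} {y : ι → ℝ} (hρ : 0 ≤ ρ) (hy : 0 ≤ y)
    (hy0 : y ≠ 0) (hle : ∀ i, ρ * y i ≤ (A *ᵥ y) i) (hys : ∀ i ∉ s, y i = 0) :
    (ρ, (∑ i, y i)⁻¹ • y) ∈ collatzWielandtSet A s := by
  obtain ⟨k, hk⟩ := Function.ne_iff.1 hy0
  have hsum : 0 < ∑ i, y i :=
    Finset.sum_pos' (fun i _ => hy i) ⟨k, Finset.mem_univ k, (hy k).lt_of_ne' hk⟩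
  refine ⟨hρ, ⟨fun i => mul_nonneg (inv_nonneg.2 hsum.le) (hy i), ?_⟩, fun i => ?_, fun i hi => ?_⟩
  · simp only [Pi.smul_apply, smul_eq_mul, ← Finset.mul_sum]
    exact inv_mul_cancel₀ hsum.ne'
  · simp only [mulVec_smul, Pi.smul_apply, smul_eq_mul, mul_left_comm ρ]
    exact mul_le_mul_of_nonneg_left (hle i) (inv_nonneg.2 hsum.le)
  · simp [hys i hi]

namespace IsPrimitiveOn

variable [DecidableEq ι] {ψ x : ι → ℝ} {μ ρ : ℝ}

lemma collatzWielandtSet_nonempty (h : IsPrimitiveOn A s) : (collatzWielandtSet A s).Nonempty := by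
  obtain ⟨i, hi⟩ := h.nonempty
  refine ⟨(0, Pi.single i 1), le_rfl, single_mem_stdSimplex ℝ i, fun j => ?_, fun j hj => ?_⟩
  · simpa using h.nonneg j i
  · simp [show j ≠ i from fun hji => hj (hji ▸ hi)]

/-- If `A x - ρ x` does not vanish, then a positive power of `A` makes it positive on all of `s`,
which leaves room to increase `ρ`. -/
lemma exists_lt_mem_collatzWielandtSet (h : IsPrimitiveOn A s)
    (hq : (ρ, x) ∈ collatzWielandtSet A s) (hne : A *ᵥ x ≠ ρ • x) :
    ∃ q ∈ collatzWielandtSet A s, ρ < q.1 := by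
  obtain ⟨n, hn⟩ := h.exists_pow_pos
  obtain ⟨hρ, hx, hle, hxs⟩ := hq
  set z : ι → ℝ := A *ᵥ x - ρ • x with hz
  set y : ι → ℝ := (A ^ n) *ᵥ x with hy
  have hzs : ∀ i ∉ s, z i = 0 := fun i hi => by
    have hxi : x i = 0 := hxs i hi
    have hAx : (A *ᵥ x) i = 0 := by simpa using h.pow_mulVec_eq_zero 1 hxs hi
    simp [hz, hAx, hxi]
  have hAy : A *ᵥ y = ρ • y + (A ^ n) *ᵥ z := by
    rw [hz, mulVec_sub, mulVec_smul, hy, mulVec_mulVec, mulVec_mulVec, ← pow_succ, ← pow_succ',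
      add_sub_cancel]
  have hy_pos : ∀ i ∈ s, 0 < y i := fun i =>
    h.pow_mulVec_pos hn hx.1 hxs (by rintro rfl; simpa using hx.2)
  have hys : ∀ i ∉ s, y i = 0 := fun i => h.pow_mulVec_eq_zero n hxs
  have hz_pos : ∀ i ∈ s, 0 < ((A ^ n) *ᵥ z) i := fun i =>
    h.pow_mulVec_pos hn (fun i => sub_nonneg.2 (hle i)) hzs (sub_ne_zero.2 hne)
  obtain ⟨i, hi, hmin⟩ :=
    s.toFinite.exists_minimalFor (fun i => ((A ^ n) *ᵥ z) i / y i) s h.nonempty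
  have hε : 0 < ((A ^ n) *ᵥ z) i / y i := div_pos (hz_pos i hi) (hy_pos i hi)
  refine ⟨_, inv_sum_smul_mem_collatzWielandtSet (y := y) (add_nonneg hρ hε.le) (fun j => ?_)
    (fun hy0 => (hy_pos i hi).ne' (congrFun hy0 i)) (fun j => ?_) hys, lt_add_of_pos_right ρ hε⟩
  · by_cases hj : j ∈ s
    exacts [(hy_pos j hj).le, (hys j hj).ge]
  · rw [hAy, add_mul]
    refine add_le_add le_rfl ?_
    by_cases hj : j ∈ s
    · rw [← le_div_iff₀ (hy_pos j hj)]
      exact (le_total (((A ^ n) *ᵥ z) j / y j) _).elim (hmin hj) id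
    · rw [hys j hj, h.pow_mulVec_eq_zero n hzs hj, mul_zero]

theorem exists_isPerronPair (h : IsPrimitiveOn A s) : ∃ ψ μ, IsPerronPair A s ψ μ := by
  obtain ⟨⟨ρ, x⟩, hq, hmax⟩ := (isCompact_collatzWielandtSet h.nonneg).exists_isMaxOn
    h.collatzWielandtSet_nonempty continuous_fst.continuousOn
  have he : A *ᵥ x = ρ • x := by
    by_contra hne
    obtain ⟨q, hqmem, hlt⟩ := h.exists_lt_mem_collatzWielandtSet hq hne
    exact hlt.not_ge (hmax hqmem)
  exact ⟨x, ρ, h.isPerronPair hq.2.1.1 hq.2.2.2 hq.2.1.2 he⟩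

lemma pow_apply_self_le (h : IsPrimitiveOn A s) (hψ : IsPerronPair A s ψ μ) (n : ℕ) {i : ι}
    (hi : i ∈ s) : (A ^ n) i i ≤ μ ^ n :=
  IsPerronPair.apply_le
    { hψ with mulVec_eq := pow_mulVec_of_mulVec_eq_smul hψ.mulVec_eq n } (h.pow_nonneg n) hi

lemma exists_mul_pow_le_trace_pow (h : IsPrimitiveOn A s) (hψ : IsPerronPair A s ψ μ)
    (hμ : 0 < μ) : ∃ c > 0, ∀ᶠ n : ℕ in atTop, c * μ ^ n ≤ (A ^ n).trace := by
  obtain ⟨K, hK⟩ := h.exists_pow_pos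
  obtain ⟨i, hi⟩ := h.nonempty
  obtain ⟨k, hk, hmin⟩ := s.toFinite.exists_minimalFor (fun j => (A ^ K) j i) s ⟨i, hi⟩
  have hκ : 0 < (A ^ K) k i := hK k hk i hi
  have hψi := hψ.pos i hi
  refine ⟨(A ^ K) k i * ψ i / μ ^ K, by positivity, ?_⟩
  filter_upwards [eventually_ge_atTop K] with n hn
  obtain ⟨n, rfl⟩ := Nat.exists_eq_add_of_le' hn
  have hterm : ∀ j, (A ^ K) k i * ((A ^ n) i j * ψ j) ≤ (A ^ n) i j * (A ^ K) j i := by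
    intro j
    by_cases hj : j ∈ s
    · have hκj : (A ^ K) k i ≤ (A ^ K) j i :=
        (le_total ((A ^ K) j i) ((A ^ K) k i)).elim (hmin hj) id
      calc (A ^ K) k i * ((A ^ n) i j * ψ j) = (A ^ n) i j * ((A ^ K) k i * ψ j) := by ring
        _ ≤ (A ^ n) i j * (A ^ K) k i :=
          mul_le_mul_of_nonneg_left (mul_le_of_le_one_right hκ.le (hψ.le_one j))
            (h.pow_nonneg n i j)
        _ ≤ (A ^ n) i j * (A ^ K) j i := mul_le_mul_of_nonneg_left hκj (h.pow_nonneg n i j)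
    · rw [hψ.eq_zero j hj, mul_zero, mul_zero]
      exact mul_nonneg (h.pow_nonneg n i j) (h.pow_nonneg K j i)
  calc (A ^ K) k i * ψ i / μ ^ K * μ ^ (n + K) = (A ^ K) k i * (μ ^ n * ψ i) := by
        field_simp; ring
    _ = ∑ j, (A ^ K) k i * ((A ^ n) i j * ψ j) := by rw [← hψ.pow_mulVec_apply, Finset.mul_sum]
    _ ≤ ∑ j, (A ^ n) i j * (A ^ K) j i := Finset.sum_le_sum fun j _ => hterm j
    _ = (A ^ (n + K)) i i := by rw [pow_add, mul_apply]
    _ ≤ (A ^ (n + K)).trace := Finset.single_le_sum (f := fun j => (A ^ (n + K)) j j)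
        (fun j _ => h.pow_nonneg _ j j) (Finset.mem_univ i)

end IsPrimitiveOn

end PerronFrobenius

/-! ### Ordered products and transfer matrices -/

section TransferMatrix

open scoped Kronecker Matrix

/-- The product `A 0 * A 1 * ⋯ * A (n - 1)` in a possibly noncommutative monoid. -/
def orderedProd {M : Type*} [Monoid M] {n : ℕ} (A : Fin n → M) : M := (List.ofFn A).prod

section Monoid

variable {M : Type*} [Monoid M] {n k : ℕ}

@[simp]
lemma orderedProd_zero (A : Fin 0 → M) : orderedProd A = 1 := by simp [orderedProd]

lemma orderedProd_succ (A : Fin (n + 1) → M) :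
    orderedProd A = A 0 * orderedProd fun i => A i.succ := by simp [orderedProd]

lemma orderedProd_append (A : Fin (n + k) → M) :
    orderedProd A =
      orderedProd (fun i => A (i.castAdd k)) * orderedProd fun i => A (i.natAdd n) := by
  rw [orderedProd, List.ofFn_add, List.prod_append]
  rfl

lemma orderedProd_const (a : M) (n : ℕ) : orderedProd (fun _ : Fin n => a) = a ^ n := by
  rw [orderedProd, List.ofFn_const, List.prod_replicate]

lemma map_orderedProd {N F : Type*} [Monoid N] [FunLike F M N] [MonoidHomClass F M N] (f : F)
    (A : Fin n → M) : f (orderedProd A) = orderedProd fun i => f (A i) := by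
  rw [orderedProd, map_list_prod, List.map_ofFn]
  rfl

lemma continuous_orderedProd {X : Type*} [TopologicalSpace X] [TopologicalSpace M] [ContinuousMul M]
    {A : X → Fin n → M} (hA : Continuous A) : Continuous fun x => orderedProd (A x) := by
  induction n with
  | zero => simpa using continuous_const
  | succ n ih =>
    simp only [orderedProd_succ]
    exact ((continuous_apply 0).comp hA).mul
      (ih (continuous_pi fun i => (continuous_apply i.succ).comp hA))

end Monoid

section Matrix

variable {ι κ R : Type*} [Fintype ι] [DecidableEq ι] [Fintype κ] [DecidableEq κ] [CommSemiring R]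
  {n : ℕ}

lemma transpose_orderedProd (A : Fin n → Matrix ι ι R) :
    (orderedProd A)ᵀ = orderedProd fun i => (A i.rev)ᵀ := by
  rw [orderedProd, Matrix.transpose_list_prod, List.map_ofFn, orderedProd]
  congr 1
  refine List.ext_getElem (by simp) fun i _ _ => ?_
  simp only [List.getElem_reverse, List.getElem_ofFn, List.length_ofFn, Function.comp_apply]
  congr 2
  ext
  simp only [Fin.val_rev]
  omega

lemma orderedProd_smul (c : Fin n → R) (A : Fin n → Matrix ι ι R) :
    orderedProd (fun i => c i • A i) = (∏ i, c i) • orderedProd A := by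
  induction n with
  | zero => simp
  | succ n ih => simp only [orderedProd_succ, ih, Fin.prod_univ_succ, smul_mul_smul_comm]

lemma orderedProd_diagonal (f : Fin n → ι → R) :
    orderedProd (fun i => Matrix.diagonal (f i)) = Matrix.diagonal fun a => ∏ i, f i a := by
  induction n with
  | zero => simp
  | succ n ih => simp only [orderedProd_succ, ih, Matrix.diagonal_mul_diagonal, Fin.prod_univ_succ]

lemma orderedProd_apply_nonneg {A : Fin n → Matrix ι ι ℝ} (hA : ∀ i α β, 0 ≤ A i α β) (α β : ι) :
    0 ≤ orderedProd A α β := by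
  induction n generalizing α with
  | zero => rw [orderedProd_zero]; exact Matrix.zero_le_one_elem α β
  | succ n ih =>
    rw [orderedProd_succ, Matrix.mul_apply]
    exact Finset.sum_nonneg fun γ _ => mul_nonneg (hA 0 α γ) (ih (fun i => hA i.succ) γ)

lemma mul_orderedProd_of_intertwine {A : Fin n → Matrix ι ι R} {B : Fin n → Matrix κ κ R}
    {G : Matrix κ ι R} (h : ∀ i, G * A i = B i * G) : G * orderedProd A = orderedProd B * G := by
  induction n with
  | zero => simp
  | succ n ih =>
    rw [orderedProd_succ, orderedProd_succ, ← Matrix.mul_assoc, h, Matrix.mul_assoc,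
      ih fun i => h i.succ, Matrix.mul_assoc]

/-- If `Q` and `Q'` span a left-invariant space on which the `A i` are block triangular with
diagonal blocks `B i` and `C i`, then the ordered product has diagonal block `∏ B i`. -/
lemma mul_orderedProd_mul_of_blockTriangular {A : Fin n → Matrix ι ι R}
    {B C E : Fin n → Matrix κ κ R} {Q Q' : Matrix κ ι R} {J : Matrix ι κ R}
    (hQ : ∀ i, Q * A i = B i * Q + E i * Q') (hQ' : ∀ i, Q' * A i = C i * Q')
    (hQJ : Q * J = 1) (hQ'J : Q' * J = 0) : Q * orderedProd A * J = orderedProd B := by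
  induction n with
  | zero => simpa using hQJ
  | succ n ih =>
    have hB := ih (fun i => hQ i.succ) fun i => hQ' i.succ
    have hC := mul_orderedProd_of_intertwine fun i => hQ' (Fin.succ i)
    calc Q * orderedProd A * J
        = B 0 * (Q * orderedProd (fun i => A i.succ) * J)
          + E 0 * (Q' * orderedProd (fun i => A i.succ) * J) := by
          rw [orderedProd_succ, ← Matrix.mul_assoc, hQ]
          simp only [Matrix.add_mul, Matrix.mul_assoc]
      _ = orderedProd B := by
          rw [hB, hC, Matrix.mul_assoc _ Q' J, hQ'J, Matrix.mul_zero, Matrix.mul_zero, add_zero,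
            ← orderedProd_succ]

lemma sum_cons {S M : Type*} [Fintype S] [AddCommMonoid M] (f : (Fin (n + 1) → S) → M) :
    ∑ ρ, f ρ = ∑ s : S, ∑ ρ : Fin n → S, f (Fin.cons s ρ) := by
  rw [← (Fin.consEquiv fun _ : Fin (n + 1) => S).sum_comp, Fintype.sum_prod_type]
  rfl

lemma sum_orderedProd_kronecker {S : Type*} [Fintype S] (A : Fin n → S → Matrix ι ι R)
    (B : Fin n → S → Matrix κ κ R) :
    ∑ ρ : Fin n → S, orderedProd (fun i => A i (ρ i)) ⊗ₖ orderedProd (fun i => B i (ρ i)) =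
      orderedProd fun i => ∑ s, A i s ⊗ₖ B i s := by
  induction n with
  | zero => simp
  | succ n ih =>
    simp only [sum_cons, orderedProd_succ, Fin.cons_zero, Fin.cons_succ, Matrix.mul_kronecker_mul,
      ← Finset.mul_sum, ih (fun i => A i.succ) fun i => B i.succ, Finset.sum_mul]

lemma orderedProd_apply (B : Fin n → Matrix ι ι R) (α β : ι) :
    orderedProd B α β = ∑ h : Fin n → ι,
      (∏ i, B i ((Fin.cons α h : Fin (n + 1) → ι) i.castSucc) (h i)) *
        if (Fin.cons α h : Fin (n + 1) → ι) (Fin.last n) = β then 1 else 0 := by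
  induction n generalizing α with
  | zero => simp [Matrix.one_apply]
  | succ n ih =>
    rw [orderedProd_succ, Matrix.mul_apply, sum_cons]
    refine Finset.sum_congr rfl fun γ _ => ?_
    rw [ih, Finset.mul_sum]
    refine Finset.sum_congr rfl fun h _ => ?_
    simp only [Fin.prod_univ_succ, ← mul_assoc, Fin.castSucc_zero, Fin.cons_zero, Fin.cons_succ,
      ← Fin.succ_castSucc, ← Fin.succ_last]

lemma predF_zero (n : ℕ) : predF (0 : Fin (n + 1)) = Fin.last n := by
  ext; simp [predF]

lemma predF_succ (i : Fin n) : predF i.succ = i.castSucc := by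
  ext
  simp only [predF, Fin.val_succ, Fin.val_castSucc]
  rw [show (i : ℕ) + 1 + (n + 1 - 1) = i + (n + 1) by omega, Nat.add_mod_right,
    Nat.mod_eq_of_lt (by omega)]

lemma trace_orderedProd (hn : 0 < n) (B : Fin n → Matrix ι ι R) :
    (orderedProd B).trace = ∑ h : Fin n → ι, ∏ i, B i (h (predF i)) (h i) := by
  obtain ⟨n, rfl⟩ := Nat.exists_eq_succ_of_ne_zero hn.ne'
  simp only [Matrix.trace, Matrix.diag_apply, orderedProd_apply]
  rw [Finset.sum_comm]
  refine Finset.sum_congr rfl fun h _ => ?_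
  simp only [← Fin.succ_last, Fin.cons_succ, mul_ite, mul_one, mul_zero]
  rw [Finset.sum_ite_eq, if_pos (Finset.mem_univ _)]
  refine Finset.prod_congr rfl fun i _ => ?_
  cases i using Fin.cases with
  | zero => simp [predF_zero]
  | succ i => simp [predF_succ]

end Matrix

section MatrixProductOperator

variable {ι κ R S : Type*} [Fintype ι] [DecidableEq ι] [Fintype κ] [DecidableEq κ] {n : ℕ}

/-- The row-to-row transfer matrix with local operators `A j`: the entry between two rows of spins
`σ, τ` is the trace over the auxiliary space `ι` of the ordered product of the `A j (σ j) (τ j)`. -/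
def transferMatrix [CommSemiring R] (A : Fin n → S → S → Matrix ι ι R) :
    Matrix (Fin n → S) (Fin n → S) R :=
  Matrix.of fun σ τ => (orderedProd fun j => A j (σ j) (τ j)).trace

/-- The local operator, with auxiliary space `ι × κ`, of the product of two transfer matrices with
local operators `A` and `B`. -/
def stackOp [CommSemiring R] [Fintype S] (A : S → S → Matrix ι ι R) (B : S → S → Matrix κ κ R)
    (s t : S) : Matrix (ι × κ) (ι × κ) R := ∑ p, A s p ⊗ₖ B p t

section CommSemiring

variable [CommSemiring R]

lemma transferMatrix_apply (A : Fin n → S → S → Matrix ι ι R) (σ τ : Fin n → S) :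
    transferMatrix A σ τ = (orderedProd fun j => A j (σ j) (τ j)).trace := rfl

lemma transferMatrix_mul [Fintype S] (A : Fin n → S → S → Matrix ι ι R)
    (B : Fin n → S → S → Matrix κ κ R) :
    transferMatrix A * transferMatrix B = transferMatrix fun j => stackOp (A j) (B j) := by
  ext σ τ
  simp only [Matrix.mul_apply, transferMatrix_apply, stackOp]
  rw [← sum_orderedProd_kronecker (fun j p => A j (σ j) p) fun j p => B j p (τ j),
    Matrix.trace_sum]
  simp only [Matrix.trace_kronecker]

lemma transferMatrix_smul (c : Fin n → R) (A : Fin n → S → S → Matrix ι ι R) :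
    transferMatrix (fun j s t => c j • A j s t) = (∏ j, c j) • transferMatrix A := by
  ext σ τ
  simp only [transferMatrix_apply, orderedProd_smul, Matrix.trace_smul, Matrix.smul_apply]

lemma transferMatrix_map {R' : Type*} [CommSemiring R'] (f : R →+* R')
    (A : Fin n → S → S → Matrix ι ι R) :
    (transferMatrix A).map f = transferMatrix fun j s t => (A j s t).map f := by
  ext σ τ
  have hprod := map_orderedProd f.mapMatrix fun j => A j (σ j) (τ j)
  simp only [RingHom.mapMatrix_apply] at hprod
  rw [Matrix.map_apply, transferMatrix_apply, transferMatrix_apply, ← hprod]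
  exact map_sum f _ _

end CommSemiring

lemma trace_orderedProd_congr_of_intertwine [CommRing R] {A B : Fin n → Matrix ι ι R}
    {G H : Matrix ι ι R} (hGH : G * H = 1) (h : ∀ i, G * A i = B i * G) :
    (orderedProd A).trace = (orderedProd B).trace := by
  calc (orderedProd A).trace = (H * (G * orderedProd A)).trace := by
        rw [← Matrix.mul_assoc, mul_eq_one_comm.1 hGH, Matrix.one_mul]
    _ = (orderedProd B).trace := by
        rw [mul_orderedProd_of_intertwine h, Matrix.trace_mul_comm, Matrix.mul_assoc, hGH,
          Matrix.mul_one]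

lemma transferMatrix_congr_of_intertwine [CommRing R] {A B : Fin n → S → S → Matrix ι ι R}
    {G H : Matrix ι ι R} (hGH : G * H = 1) (h : ∀ j s t, G * A j s t = B j s t * G) :
    transferMatrix A = transferMatrix B := by
  ext σ τ
  exact trace_orderedProd_congr_of_intertwine hGH fun j => h j (σ j) (τ j)

end MatrixProductOperator

end TransferMatrix

/-! ### The six-vertex Lax operator and commuting transfer matrices -/

section LaxOperator

open scoped Kronecker Matrix
open Complex (sin cos)

/-- The six-vertex Lax operator with weights `a`, `b`, `c`, as a matrix on the auxiliary
(horizontal) space for fixed spins `s` and `t` of the two vertical edges. -/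
def laxOp {R : Type*} [Zero R] (a b c : R) (s t : Bool) : Matrix Bool Bool R :=
  Matrix.of fun α β => if α = β then (if s = t then (if α = s then a else b) else 0)
    else (if s = β ∧ t = α then c else 0)

lemma laxOp_smul {R : Type*} [MulZeroClass R] (r a b c : R) (s t : Bool) :
    r • laxOp a b c s t = laxOp (r * a) (r * b) (r * c) s t := by
  ext α β
  simp only [laxOp, Matrix.smul_apply, Matrix.of_apply, smul_eq_mul]
  split_ifs <;> simp

lemma laxOp_map {R R' : Type*} [Zero R] [Zero R'] (f : ZeroHom R R') (a b c : R) (s t : Bool) :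
    (laxOp a b c s t).map f = laxOp (f a) (f b) (f c) s t := by
  ext α β
  simp only [laxOp, Matrix.map_apply, Matrix.of_apply]
  split_ifs <;> simp

lemma laxOp_nonneg {a b c : ℝ} (ha : 0 ≤ a) (hb : 0 ≤ b) (hc : 0 ≤ c) (s t α β : Bool) :
    0 ≤ laxOp a b c s t α β := by
  simp only [laxOp, Matrix.of_apply]
  split_ifs <;> first | assumption | exact le_rfl

/-- The trigonometric Lax operator with crossing parameter `η` and spectral parameter `v`. -/
def trigLax (η v : ℂ) : Bool → Bool → Matrix Bool Bool ℂ := laxOp (sin (η - v)) (sin v) (sin η)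

lemma continuous_trigLax {X : Type*} [TopologicalSpace X] (η : ℂ) {v : X → ℂ} (hv : Continuous v)
    (s t : Bool) : Continuous fun x => trigLax η (v x) s t := by
  refine continuous_matrix fun i j => ?_
  simp only [trigLax, laxOp, Matrix.of_apply]
  split_ifs <;> fun_prop

/-- The six-vertex `R`-matrix (composed with the flip) acting on two auxiliary spaces. -/
def intertwiner {R : Type*} [Zero R] (A B C : R) : Matrix (Bool × Bool) (Bool × Bool) R :=
  Matrix.of fun x y => if x.1 = x.2 then (if x = y then A else 0)
    else if x = y then B else if x = y.swap then C else 0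

lemma intertwiner_mul {R : Type*} [CommSemiring R] (A B C A' B' C' : R) :
    intertwiner A B C * intertwiner A' B' C' =
      intertwiner (A * A') (B * B' + C * C') (B * C' + C * B') := by
  ext ⟨a, b⟩ ⟨c, d⟩
  simp only [Matrix.mul_apply, Fintype.sum_prod_type, Fintype.sum_bool, intertwiner,
    Matrix.of_apply]
  cases a <;> cases b <;> cases c <;> cases d <;> simp <;> ring

lemma intertwiner_one {R : Type*} [CommSemiring R] : intertwiner (1 : R) 1 0 = 1 := by
  ext ⟨a, b⟩ ⟨c, d⟩
  cases a <;> cases b <;> cases c <;> cases d <;> simp [intertwiner]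

lemma intertwiner_mul_inv {K : Type*} [Field K] {A B C : K} (hA : A ≠ 0) (hBC : B ^ 2 - C ^ 2 ≠ 0) :
    intertwiner A B C * intertwiner A⁻¹ (B / (B ^ 2 - C ^ 2)) (-C / (B ^ 2 - C ^ 2)) = 1 := by
  rw [intertwiner_mul, ← intertwiner_one]
  congr 1 <;> field_simp <;> ring

set_option maxHeartbeats 4000000 in
-- 64 trigonometric identities, one for each choice of the external edges.
lemma trigLax_yangBaxter (η v v' : ℂ) (s t : Bool) :
    intertwiner (sin (η - (v - v'))) (sin η) (sin (v - v')) *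
        stackOp (trigLax η v) (trigLax η v') s t =
      stackOp (trigLax η v') (trigLax η v) s t *
        intertwiner (sin (η - (v - v'))) (sin η) (sin (v - v')) := by
  have hη := Complex.sin_sq_add_cos_sq η
  have hv := Complex.sin_sq_add_cos_sq v
  have hv' := Complex.sin_sq_add_cos_sq v'
  simp only [trigLax, Complex.sin_sub, Complex.cos_sub]
  generalize sin η = r at *
  generalize cos η = k at *
  generalize sin v = S at *
  generalize cos v = K at *
  generalize sin v' = S' at *
  generalize cos v' = K' at *
  ext ⟨a, b⟩ ⟨c, d⟩
  simp only [Matrix.mul_apply, Fintype.sum_prod_type, Fintype.sum_bool, stackOp, Matrix.add_apply,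
    Matrix.kroneckerMap_apply, intertwiner, laxOp, Matrix.of_apply]
  cases s <;> cases t <;> cases a <;> cases b <;> cases c <;> cases d <;> simp <;> try grind

/-- The inhomogeneous transfer matrix at spectral parameter `u`, with crossing parameter `η` and
inhomogeneities `w`. -/
def inhomTransfer {n : ℕ} (η : ℂ) (w : Fin n → ℝ) (u : ℂ) :
    Matrix (Fin n → Bool) (Fin n → Bool) ℂ :=
  transferMatrix fun j => trigLax η (u - w j)

variable {n : ℕ}

lemma continuous_inhomTransfer {X : Type*} [TopologicalSpace X] (η : ℂ) {w : X → Fin n → ℝ}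
    {u : X → ℂ} (hw : Continuous w) (hu : Continuous u) :
    Continuous fun x => inhomTransfer η (w x) (u x) := by
  refine continuous_matrix fun σ τ => ?_
  simp only [inhomTransfer, transferMatrix_apply]
  refine (continuous_orderedProd (continuous_pi fun j => ?_)).matrix_trace
  have hwj : Continuous fun x => w x j := (continuous_apply j).comp hw
  exact continuous_trigLax η (by fun_prop) (σ j) (τ j)

lemma inhomTransfer_commute_of_sin_ne_zero {η u u' : ℂ} (w : Fin n → ℝ)
    (hsub : sin (η - (u - u')) ≠ 0) (hadd : sin (η + (u - u')) ≠ 0) :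
    Commute (inhomTransfer η w u) (inhomTransfer η w u') := by
  have hdet : sin η ^ 2 - sin (u - u') ^ 2 = sin (η - (u - u')) * sin (η + (u - u')) := by
    simp only [Complex.sin_sub η, Complex.sin_add η]
    have := Complex.sin_sq_add_cos_sq η
    have := Complex.sin_sq_add_cos_sq (u - u')
    grind
  have hinv := intertwiner_mul_inv hsub (hdet ▸ mul_ne_zero hsub hadd)
  rw [Commute, SemiconjBy, inhomTransfer, inhomTransfer, transferMatrix_mul, transferMatrix_mul]
  refine transferMatrix_congr_of_intertwine hinv fun j s t => ?_
  simpa only [sub_sub_sub_cancel_right] using trigLax_yangBaxter η (u - w j) (u' - w j) s t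

lemma countable_sin_comp_eq_zero {f : ℂ → ℂ} (hf : Function.Injective f) :
    {u : ℂ | sin (f u) = 0}.Countable := by
  have hrange : {u : ℂ | sin (f u) = 0} = f ⁻¹' Set.range fun k : ℤ => (k : ℂ) * π := by
    ext u
    simp only [Set.mem_preimage, Set.mem_range, Set.mem_ofPred_eq, Complex.sin_eq_zero_iff, eq_comm]
  exact hrange ▸ (Set.countable_range _).preimage_of_injOn hf.injOn

theorem inhomTransfer_commute (η : ℂ) (w : Fin n → ℝ) (u u' : ℂ) :
    Commute (inhomTransfer η w u) (inhomTransfer η w u') := by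
  have hdense : Dense ({u : ℂ | sin (η - (u - u')) = 0} ∪ {u : ℂ | sin (η + (u - u')) = 0})ᶜ :=
    ((countable_sin_comp_eq_zero fun a b h => by simpa using h).union
      (countable_sin_comp_eq_zero fun a b h => by simpa using h)).dense_compl ℝ
  have hcont : Continuous fun u => inhomTransfer η w u :=
    continuous_inhomTransfer η continuous_const continuous_id
  refine congrFun (Continuous.ext_on hdense (hcont.matrix_mul continuous_const)
    (continuous_const.matrix_mul hcont) fun u hu => ?_) u
  simp only [Set.mem_compl_iff, Set.mem_union, Set.mem_ofPred_eq, not_or] at hu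
  exact inhomTransfer_commute_of_sin_ne_zero w hu.1 hu.2

end LaxOperator

/-! ### Fusion of three transfer matrices -/

section Fusion

open scoped Kronecker Matrix

variable {R : Type*} [CommRing R]

/-- The local operator of a product of three transfer matrices. When `x + y + z = 0` and
`c ^ 2 = x ^ 2 + x * z + z ^ 2`, it is block triangular with four `2 × 2` diagonal blocks, for the
decomposition given by `singletLeft`, `singletRight`, `alignedEmb` and `complementEmb`. -/
def tripleLax (x y z c : R) : Bool → Bool → Matrix (Bool × Bool × Bool) (Bool × Bool × Bool) R :=
  stackOp (laxOp (-z) x c) (stackOp (laxOp (-x) y c) (laxOp (-y) z c))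

variable (R) in
/-- The embedding `e ↦ s ⊗ e`, with `s` the singlet (in the gauge where it is symmetric). -/
def singletLeft : Matrix (Bool × Bool × Bool) Bool R :=
  Matrix.of fun p e => if p.1 = p.2.1 then 0 else if p.2.2 = e then 1 else 0

variable (R) in
/-- The embedding `e ↦ e ⊗ s`, with `s` the singlet (in the gauge where it is symmetric). -/
def singletRight : Matrix (Bool × Bool × Bool) Bool R :=
  Matrix.of fun p e => if p.2.1 = p.2.2 then 0 else if p.1 = e then 1 else 0

variable (R) in
/-- The embedding `e ↦ e ⊗ e ⊗ e`. -/
def alignedEmb : Matrix (Bool × Bool × Bool) Bool R :=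
  Matrix.of fun p e => if p = (e, e, e) then 1 else 0

variable (R) in
/-- The embedding `e ↦ true ⊗ e ⊗ false`, a complement of the images of `singletLeft`,
`singletRight` and `alignedEmb`. -/
def complementEmb : Matrix (Bool × Bool × Bool) Bool R :=
  Matrix.of fun p e => if p = (true, e, false) then 1 else 0

variable (R) in
/-- The coordinate along `singletLeft`. -/
def singletLeftProj : Matrix Bool (Bool × Bool × Bool) R :=
  Matrix.of fun e p => match e, p with
    | false, (false, true, false) => 1
    | false, (false, false, true) => -1
    | true, (false, true, true) => 1
    | _, _ => 0

variable (R) in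
/-- The coordinate along `singletRight`. -/
def singletRightProj : Matrix Bool (Bool × Bool × Bool) R :=
  Matrix.of fun e p => match e, p with
    | false, (false, false, true) => 1
    | true, (true, false, true) => 1
    | true, (false, true, true) => -1
    | _, _ => 0

variable (R) in
/-- The coordinate along `alignedEmb`. -/
def alignedProj : Matrix Bool (Bool × Bool × Bool) R :=
  Matrix.of fun e p => if p = (e, e, e) then 1 else 0

variable (R) in
/-- The coordinate along `complementEmb`. -/
def complementProj : Matrix Bool (Bool × Bool × Bool) R :=
  Matrix.of fun e p => match e, p with
    | false, (false, false, true) => 1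
    | false, (false, true, false) => -1
    | false, (true, false, false) => 1
    | true, (false, true, true) => 1
    | true, (true, false, true) => -1
    | true, (true, true, false) => 1
    | _, _ => 0

lemma sum_emb_mul_proj :
    singletLeft R * singletLeftProj R + singletRight R * singletRightProj R +
      alignedEmb R * alignedProj R + complementEmb R * complementProj R = 1 := by
  ext ⟨a, b, c⟩ ⟨a', b', c'⟩
  cases a <;> cases b <;> cases c <;> cases a' <;> cases b' <;> cases c' <;>
    simp [Matrix.mul_apply, singletLeft, singletLeftProj, singletRight, singletRightProj,
      alignedEmb, alignedProj, complementEmb, complementProj]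

lemma singletLeftProj_mul_emb : singletLeftProj R * singletLeft R = 1 := by
  ext a b
  cases a <;> cases b <;>
    simp [Matrix.mul_apply, Fintype.sum_prod_type, singletLeftProj, singletLeft]

lemma singletRightProj_mul_emb : singletRightProj R * singletRight R = 1 := by
  ext a b
  cases a <;> cases b <;>
    simp [Matrix.mul_apply, Fintype.sum_prod_type, singletRightProj, singletRight]

lemma alignedProj_mul_emb : alignedProj R * alignedEmb R = 1 := by
  ext a b
  cases a <;> cases b <;> simp [Matrix.mul_apply, alignedProj, alignedEmb]

lemma complementProj_mul_emb : complementProj R * complementEmb R = 1 := by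
  ext a b
  cases a <;> cases b <;> simp [Matrix.mul_apply, complementProj, complementEmb]

lemma complementProj_mul_alignedEmb : complementProj R * alignedEmb R = 0 := by
  ext a b
  cases a <;> cases b <;> simp [Matrix.mul_apply, complementProj, alignedEmb]

section Local

variable {x y z c : R}

set_option maxHeartbeats 4000000 in
-- 64 polynomial identities, one for each choice of the external edges.
lemma tripleLax_mul_singletLeft (hxyz : x + y + z = 0) (hc : c ^ 2 = x ^ 2 + x * z + z ^ 2)
    (s t : Bool) :
    tripleLax x y z c s t * singletLeft R = singletLeft R * (-(y * z)) • laxOp (-y) z c s t := by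
  obtain rfl : y = -x - z := by linear_combination hxyz
  ext ⟨a, b, d⟩ e
  simp only [Matrix.mul_apply, Fintype.sum_prod_type, Fintype.sum_bool, tripleLax, stackOp,
    Matrix.add_apply, Matrix.kroneckerMap_apply, singletLeft, laxOp, Matrix.of_apply,
    Matrix.smul_apply]
  cases s <;> cases t <;> cases a <;> cases b <;> cases d <;> cases e <;> simp <;> try grind

set_option maxHeartbeats 4000000 in
-- 64 polynomial identities, one for each choice of the external edges.
lemma tripleLax_mul_singletRight (hxyz : x + y + z = 0) (hc : c ^ 2 = x ^ 2 + x * z + z ^ 2)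
    (s t : Bool) :
    tripleLax x y z c s t * singletRight R = singletRight R * (-(z * x)) • laxOp (-z) x c s t := by
  obtain rfl : y = -x - z := by linear_combination hxyz
  ext ⟨a, b, d⟩ e
  simp only [Matrix.mul_apply, Fintype.sum_prod_type, Fintype.sum_bool, tripleLax, stackOp,
    Matrix.add_apply, Matrix.kroneckerMap_apply, singletRight, laxOp, Matrix.of_apply,
    Matrix.smul_apply]
  cases s <;> cases t <;> cases a <;> cases b <;> cases d <;> cases e <;> simp <;> try grind

set_option maxHeartbeats 4000000 in
-- 64 polynomial identities, one for each choice of the external edges.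
lemma complementProj_mul_tripleLax (hxyz : x + y + z = 0) (hc : c ^ 2 = x ^ 2 + x * z + z ^ 2)
    (s t : Bool) :
    complementProj R * tripleLax x y z c s t =
      (-(x * y)) • laxOp (-x) y c s t * complementProj R := by
  obtain rfl : y = -x - z := by linear_combination hxyz
  ext e ⟨a, b, d⟩
  simp only [Matrix.mul_apply, Fintype.sum_prod_type, Fintype.sum_bool, tripleLax, stackOp,
    Matrix.add_apply, Matrix.kroneckerMap_apply, complementProj, laxOp, Matrix.of_apply,
    Matrix.smul_apply]
  cases s <;> cases t <;> cases a <;> cases b <;> cases d <;> cases e <;> simp <;> try grind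

set_option maxHeartbeats 4000000 in
-- 64 polynomial identities, one for each choice of the external edges.
lemma alignedProj_mul_tripleLax (hxyz : x + y + z = 0) (s t : Bool) :
    alignedProj R * tripleLax x y z c s t =
      laxOp (-(x * y * z)) (x * y * z) 0 s t * alignedProj R +
        Matrix.diagonal (fun α => if s ≠ t ∧ α = t then c * x * y else 0) * complementProj R := by
  obtain rfl : y = -x - z := by linear_combination hxyz
  ext e ⟨a, b, d⟩
  simp only [Matrix.mul_apply, Fintype.sum_prod_type, Fintype.sum_bool, tripleLax, stackOp,
    Matrix.add_apply, Matrix.kroneckerMap_apply, complementProj, alignedProj, laxOp,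
    Matrix.of_apply, Matrix.diagonal_apply]
  cases s <;> cases t <;> cases a <;> cases b <;> cases d <;> cases e <;> simp <;> try grind

end Local

lemma trace_eq_sum_of_emb_proj (X : Matrix (Bool × Bool × Bool) (Bool × Bool × Bool) R) :
    X.trace = (singletLeftProj R * (X * singletLeft R)).trace +
      (singletRightProj R * (X * singletRight R)).trace +
      (alignedProj R * X * alignedEmb R).trace +
      (complementProj R * X * complementEmb R).trace := by
  conv_lhs => rw [← mul_one X, ← sum_emb_mul_proj]
  simp only [Matrix.mul_add, Matrix.trace_add, ← Matrix.mul_assoc]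
  rw [Matrix.trace_mul_comm _ (singletLeftProj R), Matrix.trace_mul_comm _ (singletRightProj R),
    Matrix.trace_mul_comm _ (alignedProj R), Matrix.trace_mul_comm _ (complementProj R)]
  simp only [← Matrix.mul_assoc]

theorem transferMatrix_laxOp_triple_mul {n : ℕ} {x y z : Fin n → R} {c : R}
    (hxyz : ∀ j, x j + y j + z j = 0) (hc : ∀ j, c ^ 2 = x j ^ 2 + x j * z j + z j ^ 2) :
    transferMatrix (fun j => laxOp (-z j) (x j) c) *
        (transferMatrix (fun j => laxOp (-x j) (y j) c) *
          transferMatrix fun j => laxOp (-y j) (z j) c) =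
      (∏ j, -(y j * z j)) • transferMatrix (fun j => laxOp (-y j) (z j) c) +
        (∏ j, -(z j * x j)) • transferMatrix (fun j => laxOp (-z j) (x j) c) +
        transferMatrix (fun j => laxOp (-(x j * y j * z j)) (x j * y j * z j) 0) +
        (∏ j, -(x j * y j)) • transferMatrix (fun j => laxOp (-x j) (y j) c) := by
  rw [transferMatrix_mul, transferMatrix_mul]
  simp only [← transferMatrix_smul]
  ext σ τ
  simp only [Matrix.add_apply, transferMatrix_apply]
  set X := orderedProd fun j => tripleLax (x j) (y j) (z j) c (σ j) (τ j)
  change X.trace = _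
  have hleft := mul_orderedProd_of_intertwine
    fun j => (tripleLax_mul_singletLeft (hxyz j) (hc j) (σ j) (τ j)).symm
  have hright := mul_orderedProd_of_intertwine
    fun j => (tripleLax_mul_singletRight (hxyz j) (hc j) (σ j) (τ j)).symm
  have hcompl := mul_orderedProd_of_intertwine
    fun j => complementProj_mul_tripleLax (hxyz j) (hc j) (σ j) (τ j)
  have halign := mul_orderedProd_mul_of_blockTriangular
    (fun j => alignedProj_mul_tripleLax (hxyz j) (σ j) (τ j))
    (fun j => complementProj_mul_tripleLax (hxyz j) (hc j) (σ j) (τ j))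
    alignedProj_mul_emb complementProj_mul_alignedEmb
  rw [trace_eq_sum_of_emb_proj, ← hleft, ← hright, hcompl, halign, ← Matrix.mul_assoc,
    singletLeftProj_mul_emb, Matrix.one_mul, ← Matrix.mul_assoc, singletRightProj_mul_emb,
    Matrix.one_mul, Matrix.mul_assoc _ (complementProj R), complementProj_mul_emb, Matrix.mul_one]

end Fusion

/-! ### Conservation of the number of up spins -/

section Sector

open scoped Matrix

/-- The number of up spins of a row. -/
def numUp {n : ℕ} (σ : Fin n → Bool) : ℕ := (Finset.univ.filter fun j => σ j = true).card

variable {n m k : ℕ}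

lemma numUp_succ (σ : Fin (n + 1) → Bool) :
    numUp σ = (σ 0).toNat + numUp fun j => σ j.succ := by
  simp only [numUp, Fin.card_filter_univ_succ]
  cases σ 0 <;> simp [add_comm]

@[simp]
lemma numUp_cons (s : Bool) (σ : Fin n → Bool) :
    numUp (Fin.cons s σ : Fin (n + 1) → Bool) = s.toNat + numUp σ := numUp_succ _

lemma numUp_not_add (σ : Fin n → Bool) : numUp (fun j => !σ j) + numUp σ = n := by
  have := Finset.card_filter_add_card_filter_not (s := (Finset.univ : Finset (Fin n)))
    fun j => σ j = true
  simp only [Bool.not_eq_true, Finset.card_univ, Fintype.card_fin] at this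
  simp only [numUp, Bool.not_eq_true']
  omega

lemma numUp_le (σ : Fin n → Bool) : numUp σ ≤ n := by
  have := numUp_not_add σ
  omega

lemma numUp_comp_perm (e : Equiv.Perm (Fin n)) (σ : Fin n → Bool) : numUp (σ ∘ e) = numUp σ :=
  Finset.card_equiv e (by simp)

lemma exists_numUp_eq (hk : k ≤ n) : ∃ σ : Fin n → Bool, numUp σ = k :=
  ⟨fun j => decide ((j : ℕ) < k), by simp [numUp, Fin.card_filter_val_lt, hk]⟩

lemma exists_up_down_of_numUp_eq {σ τ : Fin n → Bool} (h : numUp σ = numUp τ) (hne : σ ≠ τ) :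
    ∃ i, σ i = true ∧ τ i = false := by
  by_contra! hle
  have hsub : Finset.univ.filter (fun j => σ j = true) ⊆ Finset.univ.filter fun j => τ j = true :=
    Finset.monotone_filter_right _ fun j _ hj => by simpa using hle j hj
  refine hne (funext fun j => Bool.eq_iff_iff.2 ?_)
  simpa using Finset.ext_iff.1 (Finset.eq_of_subset_of_card_le hsub h.ge) j

lemma prod_ite_up_eq_pow {R : Type*} [CommMonoid R] (x y : R) {σ : Fin n → Bool} (hn : n = 2 * m)
    (hσ : numUp σ = m) (α : Bool) :
    ∏ j, (if α = σ j then x else y) = x ^ m * y ^ m := by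
  have hup : (Finset.univ.filter fun j => σ j = true).card = m := hσ
  have hdown : (Finset.univ.filter fun j => σ j = false).card = m := by
    have := numUp_not_add σ
    simp only [numUp, Bool.not_eq_true'] at this hup
    omega
  rw [Finset.prod_ite, Finset.prod_const, Finset.prod_const]
  cases α <;> simp [hup, hdown, eq_comm (b := σ _)]

section Lax

variable {R : Type*} [CommRing R]

lemma orderedProd_laxOp_conserves {a b c : Fin n → R} {σ τ : Fin n → Bool} {α β : Bool}
    (h : orderedProd (fun j => laxOp (a j) (b j) (c j) (σ j) (τ j)) α β ≠ 0) :
    α.toNat + numUp σ = β.toNat + numUp τ := by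
  induction n generalizing α with
  | zero =>
    rw [orderedProd_zero, Matrix.one_apply] at h
    rw [of_not_not fun hne => h (if_neg hne), Subsingleton.elim σ τ]
  | succ n ih =>
    rw [orderedProd_succ, Matrix.mul_apply] at h
    obtain ⟨γ, _, hγ⟩ := Finset.exists_ne_zero_of_sum_ne_zero h
    have htail := ih (right_ne_zero_of_mul hγ)
    have hhead := left_ne_zero_of_mul hγ
    rw [numUp_succ, numUp_succ]
    simp only [laxOp, Matrix.of_apply] at hhead
    revert htail hhead
    cases α <;> cases γ <;> cases σ 0 <;> cases τ 0 <;> simp <;> omega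

lemma numUp_eq_of_transferMatrix_laxOp_ne_zero {a b c : Fin n → R} {σ τ : Fin n → Bool}
    (h : transferMatrix (fun j => laxOp (a j) (b j) (c j)) σ τ ≠ 0) : numUp σ = numUp τ := by
  simp only [transferMatrix_apply, Matrix.trace, Matrix.diag_apply] at h
  obtain ⟨γ, _, hγ⟩ := Finset.exists_ne_zero_of_sum_ne_zero h
  exact Nat.add_left_cancel (orderedProd_laxOp_conserves hγ)

lemma laxOp_zero_eq_diagonal (a b : R) (s t : Bool) :
    laxOp a b 0 s t = Matrix.diagonal fun α => if s = t then (if α = s then a else b) else 0 := by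
  ext α β
  rcases eq_or_ne α β with rfl | hαβ
  · simp [laxOp]
  · simp [laxOp, hαβ]

lemma transferMatrix_laxOp_zero_apply (hn : n = 2 * m) (x y : R) (q : Fin n → R)
    {σ τ : Fin n → Bool} (hτ : numUp τ = m) :
    transferMatrix (fun j => laxOp (q j * x) (q j * y) 0) σ τ =
      if σ = τ then 2 * (x ^ m * y ^ m) * ∏ j, q j else 0 := by
  simp only [transferMatrix_apply, laxOp_zero_eq_diagonal, orderedProd_diagonal,
    Matrix.trace_diagonal]
  split_ifs with hστ
  · subst hστ
    simp only [if_true, ← mul_ite, Finset.prod_mul_distrib, prod_ite_up_eq_pow x y hn hτ,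
      Fintype.sum_bool]
    ring
  · obtain ⟨j, hj⟩ := Function.ne_iff.1 hστ
    exact Finset.sum_eq_zero fun α _ => Finset.prod_eq_zero (Finset.mem_univ j) (if_neg hj)

lemma transferMatrix_laxOp_zero_mulVec (hn : n = 2 * m) (x y : R) (q : Fin n → R)
    {ψ : (Fin n → Bool) → R} (hψ : ∀ σ, numUp σ ≠ m → ψ σ = 0) :
    transferMatrix (fun j => laxOp (q j * x) (q j * y) 0) *ᵥ ψ =
      (2 * (x ^ m * y ^ m) * ∏ j, q j) • ψ := by
  ext σ
  rw [Matrix.mulVec, dotProduct, Finset.sum_eq_single σ]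
  · by_cases hσ : numUp σ = m
    · rw [transferMatrix_laxOp_zero_apply hn x y q hσ, if_pos rfl, Pi.smul_apply, smul_eq_mul]
    · simp [hψ σ hσ]
  · intro τ _ hτ
    by_cases hτm : numUp τ = m
    · rw [transferMatrix_laxOp_zero_apply hn x y q hτm, if_neg hτ.symm, zero_mul]
    · rw [hψ τ hτm, mul_zero]
  · simp

end Lax

end Sector

/-! ### The functional equation at crossing parameter `2π/3` -/

section FunctionalEquation

open scoped Matrix
open Complex (sin cos)

/-- The crossing parameter of the six-vertex model with `Δ = 1/2`, that is with `a = b = c`. -/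
def crossing : ℂ := 2 * π / 3

lemma crossing_eq_ofReal : crossing = ((2 * π / 3 : ℝ) : ℂ) := by simp [crossing]

lemma sin_crossing : sin crossing = ((√3 / 2 : ℝ) : ℂ) := by
  rw [crossing_eq_ofReal, ← Complex.ofReal_sin, show 2 * π / 3 = π - π / 3 by ring,
    Real.sin_pi_sub, Real.sin_pi_div_three]

lemma cos_crossing : cos crossing = -1 / 2 := by
  rw [crossing_eq_ofReal, ← Complex.ofReal_cos, show 2 * π / 3 = π - π / 3 by ring,
    Real.cos_pi_sub, Real.cos_pi_div_three]
  push_cast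
  ring

lemma sin_crossing_sq : sin crossing ^ 2 = 3 / 4 := by
  rw [Complex.sin_sq, cos_crossing]
  norm_num

lemma sin_add_sin_add_sin_crossing (v : ℂ) :
    sin v + sin (v + crossing) + sin (v - crossing) = 0 := by
  rw [Complex.sin_add, Complex.sin_sub, cos_crossing]
  ring

lemma sin_crossing_sq_eq (v : ℂ) :
    sin crossing ^ 2 = sin v ^ 2 + sin v * sin (v - crossing) + sin (v - crossing) ^ 2 := by
  rw [Complex.sin_sub, cos_crossing]
  have := sin_crossing_sq
  have := Complex.sin_sq_add_cos_sq v
  grind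

lemma trigLax_crossing (v : ℂ) :
    trigLax crossing v = laxOp (-sin (v - crossing)) (sin v) (sin crossing) := by
  rw [trigLax, ← Complex.sin_neg, neg_sub]

lemma trigLax_crossing_add (v : ℂ) :
    trigLax crossing (v + crossing) = laxOp (-sin v) (sin (v + crossing)) (sin crossing) := by
  rw [trigLax_crossing, add_sub_cancel_right]

lemma trigLax_crossing_sub (v : ℂ) :
    trigLax crossing (v - crossing) =
      laxOp (-sin (v + crossing)) (sin (v - crossing)) (sin crossing) := by
  have hrec := sin_add_sin_add_sin_crossing (v - crossing)
  have hv := sin_add_sin_add_sin_crossing v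
  rw [sub_add_cancel] at hrec
  rw [trigLax_crossing, show sin (v - crossing - crossing) = sin (v + crossing) by
    linear_combination hrec - hv]

variable {n m : ℕ}

/-- The product `∏ⱼ sin (u - wⱼ)` of the vacuum weights. -/
def sinProd (w : Fin n → ℝ) (u : ℂ) : ℂ := ∏ j, sin (u - w j)

/-- The fusion hierarchy truncates: the product of three transfer matrices shifted by the crossing
parameter is linear in the transfer matrices, up to a diagonal term. -/
theorem inhomTransfer_triple_mul (hn : Even n) (w : Fin n → ℝ) (u : ℂ) :
    inhomTransfer crossing w u *
        (inhomTransfer crossing w (u + crossing) * inhomTransfer crossing w (u - crossing)) =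
      (sinProd w (u + crossing) * sinProd w (u - crossing)) •
          inhomTransfer crossing w (u - crossing) +
        (sinProd w (u - crossing) * sinProd w u) • inhomTransfer crossing w u +
        transferMatrix (fun j =>
          laxOp (sin (u - w j) * sin (u + crossing - w j) * sin (u - crossing - w j) * -1)
            (sin (u - w j) * sin (u + crossing - w j) * sin (u - crossing - w j) * 1) 0) +
        (sinProd w u * sinProd w (u + crossing)) • inhomTransfer crossing w (u + crossing) := by
  have hneg (f : Fin n → ℂ) : ∏ j, -f j = ∏ j, f j := by
    simp [Finset.prod_neg, hn.neg_one_pow]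
  have hadd (j : Fin n) : u + crossing - w j = u - w j + crossing := by ring
  have hsub (j : Fin n) : u - crossing - w j = u - w j - crossing := by ring
  have htriple := transferMatrix_laxOp_triple_mul (x := fun j => sin (u - w j))
    (y := fun j => sin (u - w j + crossing)) (z := fun j => sin (u - w j - crossing))
    (c := sin crossing) (fun j => sin_add_sin_add_sin_crossing _) fun j => sin_crossing_sq_eq _
  simp only [inhomTransfer, sinProd, hadd, hsub, trigLax_crossing_add, trigLax_crossing_sub]
  simpa only [trigLax_crossing, hneg, Finset.prod_mul_distrib, mul_neg, mul_one] using htriple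

lemma eigenvalue_functional_equation (hn : n = 2 * m) (w : Fin n → ℝ)
    {ψ : (Fin n → Bool) → ℂ} {Λ : ℂ → ℂ} (hsupp : ∀ σ, numUp σ ≠ m → ψ σ = 0) (hψ : ψ ≠ 0)
    (heig : ∀ u, inhomTransfer crossing w u *ᵥ ψ = Λ u • ψ) (u : ℂ) :
    Λ u * Λ (u + crossing) * Λ (u - crossing) =
      sinProd w (u + crossing) * sinProd w (u - crossing) * Λ (u - crossing) +
        sinProd w u * sinProd w (u - crossing) * Λ u +
        sinProd w u * sinProd w (u + crossing) * Λ (u + crossing) +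
        2 * (-1) ^ m * (sinProd w u * sinProd w (u + crossing) * sinProd w (u - crossing)) := by
  have hvec := congrArg (· *ᵥ ψ) (inhomTransfer_triple_mul ⟨m, by omega⟩ w u)
  simp only [Matrix.add_mulVec, ← Matrix.mulVec_mulVec, heig, Matrix.mulVec_smul,
    Matrix.smul_mulVec, transferMatrix_laxOp_zero_mulVec hn (-1) 1 _ hsupp,
    Finset.prod_mul_distrib] at hvec
  obtain ⟨σ, hσ⟩ := Function.ne_iff.1 hψ
  have hentry := congrFun hvec σ
  simp only [Pi.add_apply, Pi.smul_apply, smul_eq_mul] at hentry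
  refine mul_right_cancel₀ hσ ?_
  simp only [sinProd] at hentry ⊢
  linear_combination hentry

end FunctionalEquation

/-! ### Primitivity of the transfer matrix with positive weights -/

section Primitivity

open scoped Matrix

variable {n k : ℕ}

lemma prod_diag_le_orderedProd_apply {ι : Type*} [Fintype ι] [DecidableEq ι]
    {A : Fin n → Matrix ι ι ℝ} (hA : ∀ j α β, 0 ≤ A j α β) (α : ι) :
    ∏ j, A j α α ≤ orderedProd A α α := by
  induction n with
  | zero => simp
  | succ n ih =>
    rw [orderedProd_succ, Matrix.mul_apply, Fin.prod_univ_succ]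
    calc A 0 α α * ∏ j : Fin n, A j.succ α α
        ≤ A 0 α α * orderedProd (fun j => A j.succ) α α :=
          mul_le_mul_of_nonneg_left (ih fun j => hA j.succ) (hA 0 α α)
      _ ≤ _ := Finset.single_le_sum
          (f := fun γ => A 0 α γ * orderedProd (fun j => A j.succ) γ α)
          (fun γ _ => mul_nonneg (hA 0 α γ) (orderedProd_apply_nonneg (fun j => hA j.succ) γ α))
          (Finset.mem_univ α)

section Nonneg

variable {a b : Fin n → ℝ} {c : ℝ}

lemma transferMatrix_laxOp_nonneg (ha : ∀ j, 0 ≤ a j) (hb : ∀ j, 0 ≤ b j) (hc : 0 ≤ c)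
    (σ τ : Fin n → Bool) : 0 ≤ transferMatrix (fun j => laxOp (a j) (b j) c) σ τ := by
  rw [transferMatrix_apply]
  exact Finset.sum_nonneg fun α _ => orderedProd_apply_nonneg
    (fun j => laxOp_nonneg (ha j) (hb j) hc (σ j) (τ j)) α α

lemma prod_le_transferMatrix_laxOp_apply_self (ha : ∀ j, 0 ≤ a j) (hb : ∀ j, 0 ≤ b j)
    (hc : 0 ≤ c) (σ : Fin n → Bool) (α : Bool) :
    ∏ j, (if α = σ j then a j else b j) ≤ transferMatrix (fun j => laxOp (a j) (b j) c) σ σ := by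
  have hnonneg (j) := laxOp_nonneg (ha j) (hb j) hc (σ j) (σ j)
  calc ∏ j, (if α = σ j then a j else b j) = ∏ j, laxOp (a j) (b j) c (σ j) (σ j) α α := by
        simp [laxOp]
    _ ≤ orderedProd (fun j => laxOp (a j) (b j) c (σ j) (σ j)) α α :=
        prod_diag_le_orderedProd_apply hnonneg α
    _ ≤ _ := Finset.single_le_sum
        (f := fun γ => orderedProd (fun j => laxOp (a j) (b j) c (σ j) (σ j)) γ γ)
        (fun γ _ => orderedProd_apply_nonneg hnonneg γ γ) (Finset.mem_univ α)

end Nonneg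

lemma predF_val (i : Fin n) : (predF i : ℕ) = if (i : ℕ) = 0 then n - 1 else i - 1 := by
  obtain ⟨n, rfl⟩ := Nat.exists_eq_succ_of_ne_zero i.pos.ne'
  cases i using Fin.cases with
  | zero => simp [predF_zero]
  | succ i => simp [predF_succ]

/-- The indicator of the cyclic arc of `Fin n` from `i` (included) to `j` (excluded), for `i ≠ j`:
the horizontal edges crossed when an up spin is moved from `i` to `j`. -/
def cyclicArc (i j k : Fin n) : Bool :=
  if i < j then decide (i ≤ k ∧ k < j) else !decide (j ≤ k ∧ k < i)

section CyclicArc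

variable {i j : Fin n}

lemma cyclicArc_left (i j : Fin n) : cyclicArc i j i = true := by
  simp only [cyclicArc]
  split_ifs <;> simp_all

lemma cyclicArc_right (hij : i ≠ j) : cyclicArc i j j = false := by
  simp only [cyclicArc]
  split_ifs <;> simp
  omega

lemma cyclicArc_predF_left (hij : i ≠ j) : cyclicArc i j (predF i) = false := by
  simp only [cyclicArc, Fin.lt_def, Fin.le_def, predF_val]
  split_ifs <;> simp <;> omega

lemma cyclicArc_predF_right (i j : Fin n) : cyclicArc i j (predF j) = true := by
  simp only [cyclicArc, Fin.lt_def, Fin.le_def, predF_val]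
  split_ifs <;> simp <;> omega

lemma cyclicArc_predF_of_ne {l : Fin n} (hi : l ≠ i) (hj : l ≠ j) :
    cyclicArc i j (predF l) = cyclicArc i j l := by
  simp only [cyclicArc, Fin.lt_def, Fin.le_def, predF_val]
  split_ifs <;> rw [Bool.eq_iff_iff] <;> simp <;> omega

end CyclicArc

lemma hammingDist_comp_swap_lt {σ τ : Fin n → Bool} {i j : Fin n} (hσi : σ i = true)
    (hτi : τ i = false) (hσj : σ j = false) (hτj : τ j = true) :
    hammingDist (σ ∘ Equiv.swap i j) τ < hammingDist σ τ := by
  refine Finset.card_lt_card ((Finset.ssubset_iff_of_subset fun l hl => ?_).2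
    ⟨i, by simp [hσi, hτi], by simp [hσj, hτi]⟩)
  simp only [Finset.mem_filter, Finset.mem_univ, true_and, Function.comp_apply] at hl ⊢
  rcases eq_or_ne l i with rfl | hi
  · simp [hσi, hτi]
  rcases eq_or_ne l j with rfl | hj
  · simp [hσj, hτj]
  rwa [Equiv.swap_apply_of_ne_of_ne hi hj] at hl

section Pos

variable {a b : Fin n → ℝ} {c : ℝ}

lemma transferMatrix_laxOp_apply_self_pos (ha : ∀ j, 0 < a j) (hb : ∀ j, 0 < b j) (hc : 0 ≤ c)
    (σ : Fin n → Bool) : 0 < transferMatrix (fun j => laxOp (a j) (b j) c) σ σ := by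
  refine lt_of_lt_of_le (Finset.prod_pos fun j _ => ?_) (prod_le_transferMatrix_laxOp_apply_self
    (fun j => (ha j).le) (fun j => (hb j).le) hc σ true)
  split_ifs
  exacts [ha j, hb j]

lemma transferMatrix_laxOp_swap_pos (ha : ∀ j, 0 < a j) (hb : ∀ j, 0 < b j) (hc : 0 < c)
    {σ : Fin n → Bool} {i j : Fin n} (hi : σ i = true) (hj : σ j = false) :
    0 < transferMatrix (fun j => laxOp (a j) (b j) c) σ (σ ∘ Equiv.swap i j) := by
  have hij : i ≠ j := by rintro rfl; simp [hi] at hj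
  rw [transferMatrix_apply, trace_orderedProd i.pos]
  refine Finset.sum_pos' (fun h _ => Finset.prod_nonneg fun l _ =>
    laxOp_nonneg (ha l).le (hb l).le hc.le _ _ _ _)
    ⟨cyclicArc i j, Finset.mem_univ _, Finset.prod_pos fun l _ => ?_⟩
  rcases eq_or_ne l i with rfl | hli
  · simp [laxOp, cyclicArc_predF_left hij, cyclicArc_left, hi, hj, hc]
  rcases eq_or_ne l j with rfl | hlj
  · simp [laxOp, cyclicArc_predF_right, cyclicArc_right hij, hi, hj, hc]
  simp only [laxOp, cyclicArc_predF_of_ne hli hlj, Matrix.of_apply, if_true, Function.comp_apply,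
    Equiv.swap_apply_of_ne_of_ne hli hlj]
  split_ifs
  exacts [ha l, hb l]

lemma pow_transferMatrix_laxOp_pos (ha : ∀ j, 0 < a j) (hb : ∀ j, 0 < b j) (hc : 0 < c) {d : ℕ}
    {σ τ : Fin n → Bool} (hστ : numUp σ = numUp τ) (hd : hammingDist σ τ ≤ d) :
    0 < (transferMatrix (fun j => laxOp (a j) (b j) c) ^ d) σ τ := by
  set A := transferMatrix fun j => laxOp (a j) (b j) c
  have hnonneg : ∀ σ τ, 0 ≤ A σ τ :=
    transferMatrix_laxOp_nonneg (fun j => (ha j).le) (fun j => (hb j).le) hc.le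
  induction d generalizing σ with
  | zero => simp [eq_of_hammingDist_eq_zero (Nat.le_zero.1 hd)]
  | succ d ih =>
    have hstep (ρ) (hσρ : 0 < A σ ρ) (hρτ : 0 < (A ^ d) ρ τ) : 0 < (A ^ (d + 1)) σ τ := by
      rw [pow_succ', Matrix.mul_apply]
      exact Finset.sum_pos'
        (fun ρ _ => mul_nonneg (hnonneg _ _) (Matrix.pow_apply_nonneg hnonneg d _ _))
        ⟨ρ, Finset.mem_univ ρ, mul_pos hσρ hρτ⟩
    rcases eq_or_ne σ τ with rfl | hne
    · exact hstep σ (transferMatrix_laxOp_apply_self_pos ha hb hc.le σ) (ih rfl (by simp))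
    obtain ⟨i, hσi, hτi⟩ := exists_up_down_of_numUp_eq hστ hne
    obtain ⟨j, hτj, hσj⟩ := exists_up_down_of_numUp_eq hστ.symm hne.symm
    have hlt := hammingDist_comp_swap_lt hσi hτi hσj hτj
    exact hstep _ (transferMatrix_laxOp_swap_pos ha hb hc hσi hσj)
      (ih ((numUp_comp_perm _ σ).trans hστ) (by omega))

theorem isPrimitiveOn_transferMatrix_laxOp (ha : ∀ j, 0 < a j) (hb : ∀ j, 0 < b j) (hc : 0 < c)
    (hk : k ≤ n) :
    IsPrimitiveOn (transferMatrix fun j => laxOp (a j) (b j) c) {σ | numUp σ = k} where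
  nonneg := transferMatrix_laxOp_nonneg (fun j => (ha j).le) (fun j => (hb j).le) hc.le
  mem_iff_mem σ τ h := by
    simp only [Set.mem_ofPred_eq, numUp_eq_of_transferMatrix_laxOp_ne_zero h]
  exists_pow_pos := ⟨n, fun σ hσ τ hτ => pow_transferMatrix_laxOp_pos ha hb hc (hσ.trans hτ.symm)
    (hammingDist_le_card_fintype.trans_eq (Fintype.card_fin n))⟩
  nonempty := exists_numUp_eq hk

end Pos

end Primitivity

/-! ### Ground states -/

section GroundState

open scoped Matrix ComplexConjugate
open Complex (sin)

lemma IsPrimitiveOn.exists_eq_smul_of_complex_eigenvector {ι : Type*} [Fintype ι] [DecidableEq ι]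
    {A : Matrix ι ι ℝ} {s : Set ι} {ψ : ι → ℝ} {μ : ℝ} {y : ι → ℂ} (hA : IsPrimitiveOn A s)
    (hψ : IsPerronPair A s ψ μ) (hys : ∀ i ∉ s, y i = 0)
    (hy : A.map Complex.ofRealHom *ᵥ y = (μ : ℂ) • y) : ∃ t : ℂ, y = t • (Complex.ofReal ∘ ψ) := by
  have hre : A *ᵥ (fun i => (y i).re) = μ • fun i => (y i).re := by
    ext i
    simpa [Matrix.mulVec, dotProduct] using congrArg Complex.re (congrFun hy i)
  have him : A *ᵥ (fun i => (y i).im) = μ • fun i => (y i).im := by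
    ext i
    simpa [Matrix.mulVec, dotProduct] using congrArg Complex.im (congrFun hy i)
  obtain ⟨t, ht⟩ := hA.eq_smul_of_eigenvector hψ (fun i hi => by simp [hys i hi]) hre
  obtain ⟨t', ht'⟩ := hA.eq_smul_of_eigenvector hψ (fun i hi => by simp [hys i hi]) him
  refine ⟨t + t' * Complex.I, funext fun i => Complex.ext ?_ ?_⟩
  · simpa using congrFun ht i
  · simpa using congrFun ht' i

lemma map_ofRealHom_mulVec {ι κ : Type*} [Fintype κ] (A : Matrix ι κ ℝ) (x : κ → ℝ) :
    A.map Complex.ofRealHom *ᵥ (Complex.ofReal ∘ x) = Complex.ofReal ∘ (A *ᵥ x) :=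
  funext fun i => (RingHom.map_mulVec Complex.ofRealHom A x i).symm

variable {n k m : ℕ} {w : Fin n → ℝ} {ψ : (Fin n → Bool) → ℝ}

/-- The transfer matrix at the symmetric point `u = π/3`, where its weights are real. -/
def centralTransfer (w : Fin n → ℝ) : Matrix (Fin n → Bool) (Fin n → Bool) ℝ :=
  transferMatrix fun j => laxOp (Real.sin (π / 3 + w j)) (Real.sin (π / 3 - w j)) (√3 / 2)

/-- For an eigenvector `ψ` of total mass one, its eigenvalue at spectral parameter `u`. -/
def transferEigenvalue (w : Fin n → ℝ) (ψ : (Fin n → Bool) → ℝ) (u : ℂ) : ℂ :=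
  ∑ σ, (inhomTransfer crossing w u *ᵥ (Complex.ofReal ∘ ψ)) σ

/-- For an eigenvector `ψ` of total mass one, its eigenvalue at the symmetric point `u = π/3`. -/
def centralEigenvalue (w : Fin n → ℝ) (ψ : (Fin n → Bool) → ℝ) : ℝ :=
  ∑ σ, (centralTransfer w *ᵥ ψ) σ

/-- `ψ` is a probability vector supported on the rows with `k` up spins which is an eigenvector of
the transfer matrix for all spectral parameters. Positivity on the whole sector is not part of the
definition, so that ground states are stable under limits. -/
structure IsGroundState (w : Fin n → ℝ) (k : ℕ) (ψ : (Fin n → Bool) → ℝ) : Prop where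
  nonneg : 0 ≤ ψ
  eq_zero : ∀ σ, numUp σ ≠ k → ψ σ = 0
  sum_eq_one : ∑ σ, ψ σ = 1
  mulVec_eq : ∀ u, inhomTransfer crossing w u *ᵥ (Complex.ofReal ∘ ψ) =
    transferEigenvalue w ψ u • (Complex.ofReal ∘ ψ)

lemma inhomTransfer_pi_div_three (w : Fin n → ℝ) :
    inhomTransfer crossing w (π / 3) = (centralTransfer w).map Complex.ofRealHom := by
  rw [centralTransfer, transferMatrix_map, inhomTransfer]
  refine congrArg transferMatrix (funext fun j => funext₂ fun s t => ?_)
  have hmap := laxOp_map (Complex.ofRealHom : ZeroHom ℝ ℂ) (Real.sin (π / 3 + w j))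
    (Real.sin (π / 3 - w j)) (√3 / 2) s t
  refine Eq.trans ?_ hmap.symm
  rw [trigLax, sin_crossing]
  congr 1
  · simp only [crossing, ZeroHom.coe_coe, Complex.ofRealHom_eq_coe, Complex.ofReal_sin]
    congr 1
    push_cast
    ring
  · simp

lemma inhomTransfer_mulVec_eq_zero (w : Fin n → ℝ) (u : ℂ) {y : (Fin n → Bool) → ℂ}
    (hy : ∀ σ, numUp σ ≠ k → y σ = 0) {σ : Fin n → Bool} (hσ : numUp σ ≠ k) :
    (inhomTransfer crossing w u *ᵥ y) σ = 0 := by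
  rw [Matrix.mulVec, dotProduct]
  refine Finset.sum_eq_zero fun τ _ => ?_
  by_cases hτ : numUp τ = k
  · have hzero : inhomTransfer crossing w u σ τ = 0 := by_contra fun h =>
      hσ ((numUp_eq_of_transferMatrix_laxOp_ne_zero h).trans hτ)
    rw [hzero, zero_mul]
  · rw [hy τ hτ, mul_zero]

lemma isPrimitiveOn_centralTransfer (hw : ∀ j, |w j| < π / 3) (hk : k ≤ n) :
    IsPrimitiveOn (centralTransfer w) {σ | numUp σ = k} := by
  have hlt (j) := abs_lt.1 (hw j)
  refine isPrimitiveOn_transferMatrix_laxOp (fun j => ?_) (fun j => ?_) (by positivity) hk <;>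
  · refine Real.sin_pos_of_pos_of_lt_pi ?_ ?_ <;> linarith [hlt j, Real.pi_pos]

lemma transferEigenvalue_eq_of_mulVec_eq (hψ : ∑ σ, ψ σ = 1) {u μ : ℂ}
    (h : inhomTransfer crossing w u *ᵥ (Complex.ofReal ∘ ψ) = μ • (Complex.ofReal ∘ ψ)) :
    transferEigenvalue w ψ u = μ := by
  rw [transferEigenvalue, h]
  simp only [Pi.smul_apply, smul_eq_mul, ← Finset.mul_sum, Function.comp_apply,
    ← Complex.ofReal_sum, hψ, Complex.ofReal_one, mul_one]

lemma transferEigenvalue_pi_div_three (w : Fin n → ℝ) (ψ : (Fin n → Bool) → ℝ) :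
    transferEigenvalue w ψ (π / 3) = centralEigenvalue w ψ := by
  simp only [transferEigenvalue, inhomTransfer_pi_div_three, map_ofRealHom_mulVec,
    centralEigenvalue, Function.comp_apply, Complex.ofReal_sum]

lemma IsPerronPair.isGroundState (hw : ∀ j, |w j| < π / 3) (hk : k ≤ n) {μ : ℝ}
    (h : IsPerronPair (centralTransfer w) {σ | numUp σ = k} ψ μ) : IsGroundState w k ψ where
  nonneg := h.nonneg
  eq_zero := h.eq_zero
  sum_eq_one := h.sum_eq_one
  mulVec_eq u := by
    have hψ : inhomTransfer crossing w (π / 3) *ᵥ (Complex.ofReal ∘ ψ) =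
        (μ : ℂ) • (Complex.ofReal ∘ ψ) := by
      rw [inhomTransfer_pi_div_three, map_ofRealHom_mulVec, h.mulVec_eq]
      ext σ
      simp
    have hcomm : (centralTransfer w).map Complex.ofRealHom *ᵥ
        (inhomTransfer crossing w u *ᵥ (Complex.ofReal ∘ ψ)) =
        (μ : ℂ) • (inhomTransfer crossing w u *ᵥ (Complex.ofReal ∘ ψ)) := by
      rw [← inhomTransfer_pi_div_three, Matrix.mulVec_mulVec, (inhomTransfer_commute _ w _ u).eq,
        ← Matrix.mulVec_mulVec, hψ, Matrix.mulVec_smul]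
    obtain ⟨t, ht⟩ := (isPrimitiveOn_centralTransfer hw hk).exists_eq_smul_of_complex_eigenvector
      (y := inhomTransfer crossing w u *ᵥ (Complex.ofReal ∘ ψ)) h (fun σ hσ =>
        inhomTransfer_mulVec_eq_zero w u (fun τ hτ => by simp [h.eq_zero τ hτ]) hσ) hcomm
    rw [transferEigenvalue_eq_of_mulVec_eq h.sum_eq_one ht, ht]

lemma exists_isGroundState (hw : ∀ j, |w j| < π / 3) (hk : k ≤ n) : ∃ ψ, IsGroundState w k ψ := by
  obtain ⟨ψ, μ, hψ⟩ := (isPrimitiveOn_centralTransfer hw hk).exists_isPerronPair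
  exact ⟨ψ, hψ.isGroundState hw hk⟩

namespace IsGroundState

lemma ne_zero (h : IsGroundState w k ψ) : ψ ≠ 0 := by
  rintro rfl
  simpa using h.sum_eq_one

lemma sector_le (h : IsGroundState w k ψ) : k ≤ n := by
  obtain ⟨σ, hσ⟩ := Function.ne_iff.1 h.ne_zero
  exact (not_imp_comm.1 (h.eq_zero σ) hσ) ▸ numUp_le σ

lemma centralTransfer_mulVec_eq (h : IsGroundState w k ψ) :
    centralTransfer w *ᵥ ψ = centralEigenvalue w ψ • ψ := by
  have hu := h.mulVec_eq (π / 3)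
  rw [transferEigenvalue_pi_div_three, inhomTransfer_pi_div_three, map_ofRealHom_mulVec] at hu
  ext σ
  simpa [← Complex.ofReal_mul, Complex.ofReal_inj] using congrFun hu σ

lemma isPerronPair (h : IsGroundState w k ψ) (hw : ∀ j, |w j| < π / 3) :
    IsPerronPair (centralTransfer w) {σ | numUp σ = k} ψ (centralEigenvalue w ψ) :=
  (isPrimitiveOn_centralTransfer hw h.sector_le).isPerronPair h.nonneg h.eq_zero h.sum_eq_one
    h.centralTransfer_mulVec_eq

lemma functional_equation (h : IsGroundState w m ψ) (hn : n = 2 * m) (u : ℂ) :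
    transferEigenvalue w ψ u * transferEigenvalue w ψ (u + crossing) *
        transferEigenvalue w ψ (u - crossing) =
      sinProd w (u + crossing) * sinProd w (u - crossing) * transferEigenvalue w ψ (u - crossing) +
        sinProd w u * sinProd w (u - crossing) * transferEigenvalue w ψ u +
        sinProd w u * sinProd w (u + crossing) * transferEigenvalue w ψ (u + crossing) +
        2 * (-1) ^ m * (sinProd w u * sinProd w (u + crossing) * sinProd w (u - crossing)) :=
  eigenvalue_functional_equation hn w (fun σ hσ => by simp [h.eq_zero σ hσ])
    (fun h0 => h.ne_zero (funext fun σ => by simpa using congrFun h0 σ)) h.mulVec_eq u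

end IsGroundState

lemma conj_crossing : conj crossing = crossing := by rw [crossing_eq_ofReal, Complex.conj_ofReal]

lemma inhomTransfer_conj (w : Fin n → ℝ) (u : ℂ) :
    inhomTransfer crossing w (conj u) = (inhomTransfer crossing w u).map (starRingEnd ℂ) := by
  rw [inhomTransfer, inhomTransfer, transferMatrix_map]
  refine congrArg transferMatrix (funext fun j => funext₂ fun s t => ?_)
  refine Eq.trans ?_ (laxOp_map (starRingEnd ℂ : ZeroHom ℂ ℂ) _ _ _ s t).symm
  simp [trigLax, ← Complex.sin_conj, conj_crossing]

lemma transferEigenvalue_conj (w : Fin n → ℝ) (ψ : (Fin n → Bool) → ℝ) (u : ℂ) :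
    transferEigenvalue w ψ (conj u) = conj (transferEigenvalue w ψ u) := by
  simp only [transferEigenvalue, inhomTransfer_conj, map_sum, Matrix.mulVec, dotProduct, map_mul,
    Matrix.map_apply, Function.comp_apply, Complex.conj_ofReal]

lemma inhomTransfer_add_pi (hn : Even n) (w : Fin n → ℝ) (u : ℂ) :
    inhomTransfer crossing w (u + π) = inhomTransfer crossing w u := by
  let G : Matrix Bool Bool ℂ := Matrix.diagonal fun α => if α then 1 else -1
  have hG : G * G = 1 := by
    ext α β
    cases α <;> cases β <;> simp [G]
  have hlax : (fun j => trigLax crossing (u + π - w j)) = fun j s t => (-1 : ℂ) •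
      laxOp (sin (crossing - (u - w j))) (sin (u - w j)) (-sin crossing) s t := by
    funext j s t
    rw [trigLax, laxOp_smul, show u + π - w j = u - w j + π by ring, Complex.sin_add_pi,
      show crossing - (u - w j + π) = crossing - (u - w j) - π by ring, Complex.sin_sub_pi]
    simp
  rw [inhomTransfer, inhomTransfer, hlax]
  rw [transferMatrix_smul fun _ => (-1 : ℂ), Finset.prod_const, Finset.card_univ,
    Fintype.card_fin, hn.neg_one_pow, one_smul]
  refine transferMatrix_congr_of_intertwine hG fun j s t => ?_
  ext α β
  cases α <;> cases β <;> cases s <;> cases t <;> simp [G, Matrix.mul_apply, laxOp, trigLax]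

lemma transferEigenvalue_add_pi (hn : Even n) (w : Fin n → ℝ) (ψ : (Fin n → Bool) → ℝ) (u : ℂ) :
    transferEigenvalue w ψ (u + π) = transferEigenvalue w ψ u := by
  rw [transferEigenvalue, transferEigenvalue, inhomTransfer_add_pi hn]

end GroundState

/-! ### Crossing symmetry -/

section Crossing

open scoped Matrix

/-- The inhomogeneities `(d, -d, 0, …, 0)`. -/
def pairShift (n : ℕ) (d : ℝ) : Fin (n + 2) → ℝ := Fin.cons d (Fin.cons (-d) 0)

/-- The reflection of the circle `Fin (n + 2)` exchanging its first two sites. -/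
def mirror (n : ℕ) : Fin (n + 2) → Fin (n + 2) :=
  Fin.cons 1 (Fin.cons 0 fun j => j.rev.succ.succ)

variable {n k : ℕ} {d : ℝ}

lemma mirror_involutive (n : ℕ) : Function.Involutive (mirror n) := by
  refine Fin.cases ?_ (Fin.cases ?_ fun j => ?_) <;> simp [mirror]

lemma pairShift_mirror (n : ℕ) (d : ℝ) (j : Fin (n + 2)) :
    pairShift n d (mirror n j) = -pairShift n d j := by
  refine Fin.cases ?_ (Fin.cases ?_ fun j => ?_) j <;> simp [mirror, pairShift]

lemma abs_pairShift_lt (h0 : 0 ≤ d) (h1 : d < π / 3) (j : Fin (n + 2)) :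
    |pairShift n d j| < π / 3 := by
  refine Fin.cases ?_ (Fin.cases ?_ fun j => ?_) j <;>
    simp [pairShift, abs_of_nonneg h0, h1, Real.pi_pos]

lemma trigLax_crossing_symm (v : ℂ) (s t : Bool) :
    (Equiv.boolNot.toPEquiv.toMatrix : Matrix Bool Bool ℂ) * trigLax crossing (crossing - v) s t =
      (trigLax crossing v s t)ᵀ * Equiv.boolNot.toPEquiv.toMatrix := by
  ext α β
  cases α <;> cases β <;> cases s <;> cases t <;>
    simp [PEquiv.toMatrix_apply, Matrix.mul_apply, laxOp, trigLax]

lemma inhomTransfer_crossing_sub (w : Fin n → ℝ) (u : ℂ) :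
    inhomTransfer crossing w (crossing - u) =
      transferMatrix fun j s t => (trigLax crossing (u + w j) s t)ᵀ := by
  have hflip : (Equiv.boolNot.toPEquiv.toMatrix : Matrix Bool Bool ℂ) *
      Equiv.boolNot.toPEquiv.toMatrix = 1 := by
    ext α β
    cases α <;> cases β <;> simp [PEquiv.toMatrix_apply, Matrix.mul_apply]
  refine transferMatrix_congr_of_intertwine hflip fun j s t => ?_
  rw [← trigLax_crossing_symm, sub_sub]

lemma trace_mul_mul_eq_trace_transpose {ι R : Type*} [Fintype ι] [CommSemiring R]
    (X Y Q : Matrix ι ι R) : (X * (Y * Q)).trace = (Yᵀ * (Xᵀ * Qᵀ)).trace := by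
  rw [← Matrix.trace_transpose, Matrix.transpose_mul, Matrix.transpose_mul, Matrix.mul_assoc,
    Matrix.trace_mul_comm, Matrix.mul_assoc]

lemma inhomTransfer_comp_mirror (d : ℝ) (u : ℂ) (σ τ : Fin (n + 2) → Bool) :
    inhomTransfer crossing (pairShift n d) (crossing - u) (σ ∘ mirror n) (τ ∘ mirror n) =
      inhomTransfer crossing (pairShift n d) u σ τ := by
  have hw (j : Fin (n + 2)) :
      u + (pairShift n d j : ℂ) = u - (pairShift n d (mirror n j) : ℂ) := by
    rw [pairShift_mirror]
    push_cast
    ring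
  rw [inhomTransfer_crossing_sub]
  simp only [hw, inhomTransfer, transferMatrix_apply, orderedProd_succ, Function.comp_apply]
  rw [trace_mul_mul_eq_trace_transpose (trigLax _ _ _ _) (trigLax _ _ _ _), transpose_orderedProd]
  rfl

lemma centralTransfer_comp_mirror (d : ℝ) (σ τ : Fin (n + 2) → Bool) :
    centralTransfer (pairShift n d) (σ ∘ mirror n) (τ ∘ mirror n) =
      centralTransfer (pairShift n d) σ τ := by
  have hmirror := inhomTransfer_comp_mirror (n := n) d (π / 3) σ τ
  rw [show crossing - π / 3 = π / 3 by rw [crossing]; ring, inhomTransfer_pi_div_three] at hmirror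
  simpa using hmirror

/-- The action of `mirror` on rows. -/
def mirrorRow (n : ℕ) : Equiv.Perm (Fin (n + 2) → Bool) :=
  (mirror_involutive n).toPerm.arrowCongr (Equiv.refl _)

lemma mirrorRow_apply (σ : Fin (n + 2) → Bool) : mirrorRow n σ = σ ∘ mirror n := rfl

lemma mulVec_mirrorRow {R : Type*} [NonUnitalNonAssocSemiring R]
    {A B : Matrix (Fin (n + 2) → Bool) (Fin (n + 2) → Bool) R}
    (hAB : ∀ σ τ, A (σ ∘ mirror n) (τ ∘ mirror n) = B σ τ)
    (ψ : (Fin (n + 2) → Bool) → R) (σ : Fin (n + 2) → Bool) :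
    (A *ᵥ ψ) (mirrorRow n σ) = (B *ᵥ (ψ ∘ mirrorRow n)) σ := by
  simp only [Matrix.mulVec, dotProduct]
  rw [← Equiv.sum_comp (mirrorRow n)]
  simp only [mirrorRow_apply, hAB, Function.comp_apply]

namespace IsGroundState

variable {ψ : (Fin (n + 2) → Bool) → ℝ}

lemma comp_mirrorRow (h : IsGroundState (pairShift n d) k ψ) (h0 : 0 ≤ d) (h1 : d < π / 3) :
    ψ ∘ mirrorRow n = ψ := by
  have hprim := isPrimitiveOn_centralTransfer (abs_pairShift_lt (n := n) h0 h1) h.sector_le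
  refine hprim.perronVector_unique (hprim.isPerronPair (μ := centralEigenvalue (pairShift n d) ψ)
    (fun σ => h.nonneg (mirrorRow n σ)) (fun σ hσ => ?_)
    ((Equiv.sum_comp (mirrorRow n) ψ).trans h.sum_eq_one) ?_)
    (h.isPerronPair (abs_pairShift_lt h0 h1))
  · exact h.eq_zero _ ((numUp_comp_perm (mirror_involutive n).toPerm σ).trans_ne hσ)
  · ext σ
    rw [← mulVec_mirrorRow (centralTransfer_comp_mirror d), h.centralTransfer_mulVec_eq]
    rfl

theorem transferEigenvalue_crossing_sub (h : IsGroundState (pairShift n d) k ψ) (h0 : 0 ≤ d)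
    (h1 : d < π / 3) (u : ℂ) :
    transferEigenvalue (pairShift n d) ψ (crossing - u) =
      transferEigenvalue (pairShift n d) ψ u := by
  rw [transferEigenvalue, ← Equiv.sum_comp (mirrorRow n)]
  simp only [mulVec_mirrorRow (inhomTransfer_comp_mirror d u), Function.comp_assoc,
    h.comp_mirrorRow h0 h1, transferEigenvalue]

end IsGroundState

end Crossing

/-! ### Fusion of two sites -/

section Fusion

open scoped Matrix
open Complex (sin cos)

variable {n k : ℕ} {d : ℝ}

lemma sqrt_three_div_two_le_sin (h0 : 0 ≤ d) (h1 : d ≤ π / 3) :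
    √3 / 2 ≤ Real.sin (π / 3 + d) := by
  have hpi := Real.pi_pos
  rw [← Real.sin_pi_div_three]
  rcases le_or_gt d (π / 6) with hd | hd
  · exact Real.sin_le_sin_of_le_of_le_pi_div_two (by linarith) (by linarith) (by linarith)
  · rw [← Real.sin_pi_sub (π / 3 + d)]
    exact Real.sin_le_sin_of_le_of_le_pi_div_two (by linarith) (by linarith) (by linarith)

lemma le_centralTransfer_pairShift_apply_self (h0 : 0 ≤ d) (h1 : d < π / 3) (ρ : Fin n → Bool) :
    (√3 / 2) ^ (n + 2) ≤ centralTransfer (pairShift n d) (Fin.cons true (Fin.cons false ρ))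
      (Fin.cons true (Fin.cons false ρ)) := by
  have hlt (j) := abs_lt.1 (abs_pairShift_lt (n := n) h0 h1 j)
  have hsin : √3 / 2 ≤ Real.sin (π / 3 + d) := sqrt_three_div_two_le_sin h0 h1.le
  calc (√3 / 2) ^ (n + 2) = √3 / 2 * (√3 / 2 * ∏ _i : Fin n, √3 / 2) := by
        rw [Finset.prod_const, Finset.card_univ, Fintype.card_fin]
        ring
    _ ≤ Real.sin (π / 3 + d) * (Real.sin (π / 3 + d) * ∏ _i : Fin n, √3 / 2) := by
        have hnonneg : 0 ≤ Real.sin (π / 3 + d) := hsin.trans' (by positivity)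
        gcongr
    _ = ∏ j, if true = (Fin.cons true (Fin.cons false ρ) : Fin (n + 2) → Bool) j
          then Real.sin (π / 3 + pairShift n d j) else Real.sin (π / 3 - pairShift n d j) := by
        simp [Fin.prod_univ_succ, pairShift]
    _ ≤ _ := by
        refine prod_le_transferMatrix_laxOp_apply_self (fun j => ?_) (fun j => ?_) (by positivity)
          _ true <;>
        · refine Real.sin_nonneg_of_nonneg_of_le_pi ?_ ?_ <;> linarith [hlt j, Real.pi_pos]

lemma IsGroundState.le_centralEigenvalue_pairShift {ψ : (Fin (n + 2) → Bool) → ℝ}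
    (h : IsGroundState (pairShift n d) (k + 1) ψ) (hk : k ≤ n) (h0 : 0 ≤ d) (h1 : d < π / 3) :
    (√3 / 2) ^ (n + 2) ≤ centralEigenvalue (pairShift n d) ψ := by
  obtain ⟨ρ, hρ⟩ := exists_numUp_eq hk
  have hw := abs_pairShift_lt (n := n) h0 h1
  refine (le_centralTransfer_pairShift_apply_self h0 h1 ρ).trans ((h.isPerronPair hw).apply_le
    (isPrimitiveOn_centralTransfer hw h.sector_le).nonneg ?_)
  simp [hρ, add_comm]

/-- The tensor product of the triplet state `↑↓ + ↓↑` on the first two sites with `φ` on the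
remaining ones. -/
def pairTensor {R : Type*} [Zero R] (φ : (Fin n → Bool) → R) (τ : Fin (n + 2) → Bool) : R :=
  if τ 0 ≠ τ 1 then φ fun j => τ j.succ.succ else 0

@[simp]
lemma pairTensor_cons_cons {R : Type*} [Zero R] (φ : (Fin n → Bool) → R) (ρ : Fin n → Bool) :
    pairTensor φ (Fin.cons true (Fin.cons false ρ)) = φ ρ := by
  simp [pairTensor]

lemma sum_pairTensor {R : Type*} [AddCommMonoid R] (φ : (Fin n → Bool) → R) :
    ∑ τ, pairTensor φ τ = 2 • ∑ ρ, φ ρ := by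
  simp [sum_cons, pairTensor, two_nsmul]

lemma ofReal_comp_pairTensor (φ : (Fin n → Bool) → ℝ) :
    Complex.ofReal ∘ pairTensor φ = pairTensor (Complex.ofReal ∘ φ) := by
  ext τ
  simp only [Function.comp_apply, pairTensor]
  split_ifs <;> simp

lemma sin_pi_div_three_eq : sin (π / 3) = sin crossing := by
  rw [sin_crossing, ← Real.sin_pi_div_three, Complex.ofReal_sin]
  norm_cast

lemma cos_pi_div_three_eq : cos (π / 3) = 1 / 2 := by
  rw [← Complex.ofReal_ofNat, ← Complex.ofReal_div, ← Complex.ofReal_cos, Real.cos_pi_div_three]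
  norm_num

/-- The triplet state is mapped to a multiple of itself: this is the fusion identity. -/
lemma trigLax_mul_trigLax_triplet (u : ℂ) (s₀ s₁ : Bool) :
    trigLax crossing (u - π / 3) s₀ true * trigLax crossing (u + π / 3) s₁ false +
        trigLax crossing (u - π / 3) s₀ false * trigLax crossing (u + π / 3) s₁ true =
      (if s₀ ≠ s₁ then sin u * sin (u + π / 3) else 0) • (1 : Matrix Bool Bool ℂ) := by
  have hsq := sin_crossing_sq
  have hpyth := Complex.sin_sq_add_cos_sq u
  ext α β
  cases α <;> cases β <;> cases s₀ <;> cases s₁ <;>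
    simp [laxOp, trigLax, Matrix.mul_apply, Complex.sin_sub, Complex.sin_add, Complex.cos_sub,
      Complex.cos_add, sin_pi_div_three_eq, cos_pi_div_three_eq, cos_crossing] <;> grind

lemma inhomTransfer_mulVec_pairTensor (u : ℂ) (φ : (Fin n → Bool) → ℂ) :
    inhomTransfer crossing (pairShift n (π / 3)) u *ᵥ pairTensor φ =
      (sin u * sin (u + π / 3)) • pairTensor (inhomTransfer crossing (0 : Fin n → ℝ) u *ᵥ φ) := by
  ext σ
  have fuse (Q : Matrix Bool Bool ℂ) (x : ℂ) :
      (trigLax crossing (u - π / 3) (σ 0) true *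
        (trigLax crossing (u + π / 3) (σ 1) false * Q)).trace * x +
      (trigLax crossing (u - π / 3) (σ 0) false *
        (trigLax crossing (u + π / 3) (σ 1) true * Q)).trace * x =
      (if σ 0 ≠ σ 1 then sin u * sin (u + π / 3) else 0) * (Q.trace * x) := by
    rw [← Matrix.mul_assoc, ← Matrix.mul_assoc, ← add_mul, ← Matrix.trace_add, ← Matrix.add_mul,
      trigLax_mul_trigLax_triplet, Matrix.smul_mul, one_mul, Matrix.trace_smul, smul_eq_mul,
      mul_assoc]
  calc (inhomTransfer crossing (pairShift n (π / 3)) u *ᵥ pairTensor φ) σ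
      = ∑ ρ : Fin n → Bool, (if σ 0 ≠ σ 1 then sin u * sin (u + π / 3) else 0) *
          (inhomTransfer crossing (0 : Fin n → ℝ) u (fun j => σ j.succ.succ) ρ * φ ρ) := by
        simp only [Matrix.mulVec, dotProduct, sum_cons, inhomTransfer, transferMatrix,
          Matrix.of_apply, orderedProd_succ, pairTensor, ← fuse, Finset.sum_add_distrib]
        simp [pairShift]
    _ = _ := by
        simp only [← Finset.mul_sum, Pi.smul_apply, smul_eq_mul, pairTensor, Matrix.mulVec,
          dotProduct]
        split_ifs <;> simp

lemma laxOp_mul_laxOp_eq_ite {R : Type*} [NonUnitalNonAssocSemiring R] (x : R)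
    (s₀ s₁ t₀ t₁ : Bool) :
    laxOp x 0 x s₀ t₀ * laxOp 0 x x s₁ t₁ =
      if s₀ ≠ s₁ then laxOp x 0 x true t₀ * laxOp 0 x x false t₁ else 0 := by
  ext α β
  cases s₀ <;> cases s₁ <;> cases t₀ <;> cases t₁ <;> cases α <;> cases β <;>
    simp [laxOp, Matrix.mul_apply]

lemma centralTransfer_eq_pairTensor (σ τ : Fin (n + 2) → Bool) :
    centralTransfer (pairShift n (π / 3)) σ τ =
      pairTensor (fun ρ => centralTransfer (pairShift n (π / 3))
        (Fin.cons true (Fin.cons false ρ)) τ) σ := by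
  have hsin : Real.sin (π / 3 + π / 3) = √3 / 2 := by
    rw [← Real.sin_pi_sub, ← Real.sin_pi_div_three]
    ring_nf
  have hfirst : laxOp (Real.sin (π / 3 + pairShift n (π / 3) 0))
      (Real.sin (π / 3 - pairShift n (π / 3) 0)) (√3 / 2) = laxOp (√3 / 2) 0 (√3 / 2) := by
    simp [pairShift, hsin]
  have hsecond : laxOp (Real.sin (π / 3 + pairShift n (π / 3) 1))
      (Real.sin (π / 3 - pairShift n (π / 3) 1)) (√3 / 2) = laxOp 0 (√3 / 2) (√3 / 2) := by
    simp [pairShift, hsin]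
  simp only [pairTensor, centralTransfer, transferMatrix, Matrix.of_apply, orderedProd_succ,
    Fin.succ_zero_eq_one, Fin.cons_zero, Fin.cons_one, Fin.cons_succ, hfirst, hsecond,
    ← Matrix.mul_assoc]
  rw [laxOp_mul_laxOp_eq_ite]
  split_ifs <;> simp

namespace IsGroundState

variable {ψ : (Fin (n + 2) → Bool) → ℝ} {φ : (Fin n → Bool) → ℝ}

lemma eq_pairTensor (h : IsGroundState (pairShift n (π / 3)) (k + 1) ψ)
    (hμ : centralEigenvalue (pairShift n (π / 3)) ψ ≠ 0) :
    ψ = pairTensor fun ρ => ψ (Fin.cons true (Fin.cons false ρ)) := by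
  have hψ (σ) : ψ σ = (centralEigenvalue (pairShift n (π / 3)) ψ)⁻¹ *
      (centralTransfer (pairShift n (π / 3)) *ᵥ ψ) σ := by
    rw [h.centralTransfer_mulVec_eq, Pi.smul_apply, smul_eq_mul, inv_mul_cancel_left₀ hμ]
  funext σ
  simp only [pairTensor]
  rw [hψ σ, Matrix.mulVec, dotProduct]
  simp only [centralTransfer_eq_pairTensor σ, pairTensor]
  split_ifs
  · rw [hψ (Fin.cons _ _)]
    rfl
  · simp

lemma fused_mulVec_eq (h : IsGroundState (pairShift n (π / 3)) (k + 1) ψ) {x : (Fin n → Bool) → ℝ}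
    (hx : ψ = pairTensor x) (u : ℂ) :
    (sin u * sin (u + π / 3)) • (inhomTransfer crossing (0 : Fin n → ℝ) u *ᵥ (Complex.ofReal ∘ x)) =
      transferEigenvalue (pairShift n (π / 3)) ψ u • (Complex.ofReal ∘ x) := by
  have hu := h.mulVec_eq u
  rw [congrArg (Complex.ofReal ∘ ·) hx, ofReal_comp_pairTensor,
    inhomTransfer_mulVec_pairTensor] at hu
  funext ρ
  simpa using congrFun hu (Fin.cons true (Fin.cons false ρ))

lemma fused_centralTransfer_mulVec_eq (h : IsGroundState (pairShift n (π / 3)) (k + 1) ψ)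
    {x : (Fin n → Bool) → ℝ} (hx : ψ = pairTensor x) :
    centralTransfer (0 : Fin n → ℝ) *ᵥ x =
      (4 / 3 * centralEigenvalue (pairShift n (π / 3)) ψ) • x := by
  have hu := h.fused_mulVec_eq hx (π / 3)
  have hsin : sin (π / 3) * sin (π / 3 + π / 3) = 3 / 4 := by
    rw [show (π / 3 + π / 3 : ℂ) = crossing by rw [crossing]; ring, sin_pi_div_three_eq,
      ← sin_crossing_sq, sq]
  rw [hsin, transferEigenvalue_pi_div_three, inhomTransfer_pi_div_three,
    map_ofRealHom_mulVec] at hu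
  funext ρ
  have hρ : 3 / 4 * (centralTransfer (0 : Fin n → ℝ) *ᵥ x) ρ =
      centralEigenvalue (pairShift n (π / 3)) ψ * x ρ := by
    refine Complex.ofReal_injective ?_
    push_cast
    exact congrFun hu ρ
  rw [Pi.smul_apply, smul_eq_mul]
  linarith

lemma isGroundState_of_eq_pairTensor (h : IsGroundState (pairShift n (π / 3)) (k + 1) ψ)
    (hk : k ≤ n) {x : (Fin n → Bool) → ℝ} (hx : ψ = pairTensor x) :
    IsGroundState (0 : Fin n → ℝ) k ((2 : ℝ) • x) := by
  have hw : ∀ j, |(0 : Fin n → ℝ) j| < π / 3 := fun j => by simp [Real.pi_pos]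
  have hxψ (ρ) : x ρ = ψ (Fin.cons true (Fin.cons false ρ)) := by rw [hx, pairTensor_cons_cons]
  refine IsPerronPair.isGroundState hw hk ((isPrimitiveOn_centralTransfer hw hk).isPerronPair
    (μ := 4 / 3 * centralEigenvalue (pairShift n (π / 3)) ψ) (fun ρ => ?_) (fun ρ hρ => ?_) ?_ ?_)
  · simpa [hxψ] using h.nonneg (Fin.cons true (Fin.cons false ρ))
  · have hne : numUp ρ ≠ k := hρ
    rw [Pi.smul_apply, hxψ, h.eq_zero _ (by simpa [add_comm 1] using hne), smul_zero]
  · have hsum := h.sum_eq_one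
    rw [hx, sum_pairTensor] at hsum
    simpa [← Finset.mul_sum] using hsum
  · rw [Matrix.mulVec_smul, h.fused_centralTransfer_mulVec_eq hx, smul_comm]

lemma unique {w : Fin n → ℝ} {φ' : (Fin n → Bool) → ℝ} (h : IsGroundState w k φ)
    (h' : IsGroundState w k φ') (hw : ∀ j, |w j| < π / 3) : φ = φ' :=
  (isPrimitiveOn_centralTransfer hw h.sector_le).perronVector_unique (h.isPerronPair hw)
    (h'.isPerronPair hw)

theorem transferEigenvalue_pairShift_pi_div_three
    (h : IsGroundState (pairShift n (π / 3)) (k + 1) ψ)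
    (hμ : centralEigenvalue (pairShift n (π / 3)) ψ ≠ 0) (hφ : IsGroundState (0 : Fin n → ℝ) k φ)
    (u : ℂ) : transferEigenvalue (pairShift n (π / 3)) ψ u =
      sin u * sin (u + π / 3) * transferEigenvalue 0 φ u := by
  obtain ⟨x, hx⟩ : ∃ x, ψ = pairTensor x := ⟨_, h.eq_pairTensor hμ⟩
  obtain rfl : φ = (2 : ℝ) • x := hφ.unique (h.isGroundState_of_eq_pairTensor hφ.sector_le hx)
    fun j => by simp [Real.pi_pos]
  have hcomp : Complex.ofReal ∘ ((2 : ℝ) • x) = (2 : ℂ) • (Complex.ofReal ∘ x) := by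
    ext ρ
    simp
  have hmul : (sin u * sin (u + π / 3)) •
      (inhomTransfer crossing (0 : Fin n → ℝ) u *ᵥ (Complex.ofReal ∘ ((2 : ℝ) • x))) =
      transferEigenvalue (pairShift n (π / 3)) ψ u • (Complex.ofReal ∘ ((2 : ℝ) • x)) := by
    rw [hcomp, Matrix.mulVec_smul, smul_comm, h.fused_mulVec_eq hx, smul_comm]
  have hsum : ∑ ρ, (((2 : ℝ) • x) ρ : ℂ) = 1 := by
    rw [← Complex.ofReal_sum, hφ.sum_eq_one, Complex.ofReal_one]
  have htotal := congrArg (fun y => ∑ ρ, y ρ) hmul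
  simp only [Pi.smul_apply (M := fun _ => ℂ), smul_eq_mul, ← Finset.mul_sum,
    Function.comp_apply, hsum, mul_one] at htotal
  exact htotal.symm

end IsGroundState

end Fusion

/-! ### Regularity and growth of the eigenvalue -/

section Regularity

open scoped Matrix Topology
open Complex (I exp sin)

section ContDiff

variable {𝕜 X : Type*} [NontriviallyNormedField 𝕜] [NormedAlgebra 𝕜 ℂ] [NormedAddCommGroup X]
  [NormedSpace 𝕜 X] {r : ℕ∞} {n : ℕ}

lemma contDiff_orderedProd_apply {ι : Type*} [Fintype ι] [DecidableEq ι]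
    {A : X → Fin n → Matrix ι ι ℂ} (hA : ∀ j α β, ContDiff 𝕜 r fun x => A x j α β) (α β : ι) :
    ContDiff 𝕜 r fun x => orderedProd (A x) α β := by
  induction n generalizing α β with
  | zero => simpa only [orderedProd_zero] using contDiff_const
  | succ n ih =>
    simp only [orderedProd_succ, Matrix.mul_apply]
    exact ContDiff.sum fun γ _ => (hA 0 α γ).mul (ih (fun j => hA j.succ) γ β)

lemma contDiff_trigLax_apply (η : ℂ) {v : X → ℂ} (hv : ContDiff 𝕜 r v) (s t α β : Bool) :
    ContDiff 𝕜 r fun x => trigLax η (v x) s t α β := by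
  have hsin : ContDiff 𝕜 r sin := Complex.contDiff_sin.restrict_scalars 𝕜
  simp only [trigLax, laxOp, Matrix.of_apply]
  split_ifs
  · exact hsin.comp (contDiff_const.sub hv)
  · exact hsin.comp hv
  all_goals exact contDiff_const

theorem contDiff_transferEigenvalue {w : X → Fin n → ℝ} {ψ : X → (Fin n → Bool) → ℝ} {u : X → ℂ}
    (hw : ∀ j, ContDiff 𝕜 r fun x => (w x j : ℂ)) (hψ : ∀ σ, ContDiff 𝕜 r fun x => (ψ x σ : ℂ))
    (hu : ContDiff 𝕜 r u) : ContDiff 𝕜 r fun x => transferEigenvalue (w x) (ψ x) (u x) := by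
  simp only [transferEigenvalue, Matrix.mulVec, dotProduct]
  refine ContDiff.sum fun σ _ => ContDiff.sum fun τ _ => ContDiff.mul ?_ (hψ τ)
  simp only [inhomTransfer, transferMatrix_apply, Matrix.trace, Matrix.diag_apply]
  exact ContDiff.sum fun α _ => contDiff_orderedProd_apply
    (fun j => contDiff_trigLax_apply _ (hu.sub (hw j)) _ _) α α

end ContDiff

variable {n m : ℕ}

lemma differentiable_transferEigenvalue (w : Fin n → ℝ) (ψ : (Fin n → Bool) → ℝ) :
    Differentiable ℂ (transferEigenvalue w ψ) := by
  have hdiff : ContDiff ℂ (1 : ℕ∞) fun u => transferEigenvalue w ψ u :=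
    contDiff_transferEigenvalue (w := fun _ => w) (ψ := fun _ => ψ) (fun _ => contDiff_const)
      (fun _ => contDiff_const) contDiff_id
  exact hdiff.differentiable one_ne_zero

/-- The polynomial in `z = exp (i u)` that equals `z * sin (u - v)`. -/
def scaledSin (v z : ℂ) : ℂ := (z ^ 2 * exp (-(I * v)) - exp (I * v)) / (2 * I)

lemma scaledSin_exp (u v : ℂ) : scaledSin v (exp (I * u)) = exp (I * u) * sin (u - v) := by
  have hsin : sin (u - v) =
      (exp (I * u) * exp (-(I * v)) - exp (-(I * u)) * exp (I * v)) / (2 * I) := by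
    rw [eq_div_iff (by simp), ← Complex.exp_add, ← Complex.exp_add, Complex.sin]
    ring_nf
    rw [Complex.I_sq]
    ring
  have hone : exp (I * u) * exp (-(I * u)) = 1 := by
    rw [← Complex.exp_add, add_neg_cancel, Complex.exp_zero]
  rw [hsin, scaledSin, mul_div_assoc', mul_sub, ← mul_assoc, ← mul_assoc, hone, one_mul, sq]

lemma scaledSin_zero (v : ℂ) : scaledSin v 0 = exp (I * v) / (2 * I) * -1 := by
  rw [scaledSin]
  ring

/-- The transfer eigenvalue, multiplied by `z ^ n`, as a polynomial in `z = exp (i u)`. -/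
def scaledEigenvalue (w : Fin n → ℝ) (ψ : (Fin n → Bool) → ℝ) (z : ℂ) : ℂ :=
  ∑ σ, (transferMatrix (fun j => laxOp (-scaledSin (crossing + w j) z) (scaledSin (w j) z)
    (z * sin crossing)) *ᵥ (Complex.ofReal ∘ ψ)) σ

lemma scaledEigenvalue_exp (w : Fin n → ℝ) (ψ : (Fin n → Bool) → ℝ) (u : ℂ) :
    scaledEigenvalue w ψ (exp (I * u)) = exp (I * u) ^ n * transferEigenvalue w ψ u := by
  have hlax (j : Fin n) : laxOp (-scaledSin (crossing + w j) (exp (I * u)))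
      (scaledSin (w j) (exp (I * u))) (exp (I * u) * sin crossing) =
        fun s t => exp (I * u) • trigLax crossing (u - w j) s t := by
    funext s t
    rw [trigLax, laxOp_smul, scaledSin_exp, scaledSin_exp, ← mul_neg, ← Complex.sin_neg]
    congr 3
    ring
  simp only [scaledEigenvalue, hlax]
  rw [transferMatrix_smul]
  simp only [Finset.prod_const, Finset.card_univ, Fintype.card_fin, Matrix.smul_mulVec,
    Pi.smul_apply, smul_eq_mul, ← Finset.mul_sum, transferEigenvalue, inhomTransfer]

lemma continuous_scaledEigenvalue {X : Type*} [TopologicalSpace X] {w : X → Fin n → ℝ}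
    {ψ : X → (Fin n → Bool) → ℝ} {z : X → ℂ} (hw : Continuous w) (hψ : Continuous ψ)
    (hz : Continuous z) : Continuous fun x => scaledEigenvalue (w x) (ψ x) (z x) := by
  simp only [scaledEigenvalue, Matrix.mulVec, dotProduct, transferMatrix_apply]
  refine continuous_finsetSum _ fun σ _ => continuous_finsetSum _ fun τ _ => .mul ?_ ?_
  · refine (continuous_orderedProd (continuous_pi fun j => continuous_matrix fun α β => ?_))
      |>.matrix_trace
    simp only [laxOp, scaledSin, Matrix.of_apply]
    split_ifs <;> fun_prop
  · exact Complex.continuous_ofReal.comp ((continuous_apply τ).comp hψ)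

/-- At `z = 0` the scaled transfer matrix is a nonzero scalar on the balanced sector. -/
lemma IsGroundState.scaledEigenvalue_zero_ne_zero {w : Fin n → ℝ} {ψ : (Fin n → Bool) → ℝ}
    (h : IsGroundState w m ψ) (hn : n = 2 * m) : scaledEigenvalue w ψ 0 ≠ 0 := by
  have hlax (j : Fin n) : laxOp (-scaledSin (crossing + w j) 0) (scaledSin (w j) 0)
      (0 * sin crossing) = laxOp (exp (I * w j) / (2 * I) * exp (I * crossing))
        (exp (I * w j) / (2 * I) * -1) 0 := by
    rw [scaledSin_zero, scaledSin_zero, mul_add, Complex.exp_add, zero_mul]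
    congr 1
    ring
  have hsum : ∑ σ, (ψ σ : ℂ) = 1 := mod_cast h.sum_eq_one
  have hψ (σ) (hσ : numUp σ ≠ m) : (Complex.ofReal ∘ ψ) σ = 0 := by simp [h.eq_zero σ hσ]
  simp only [scaledEigenvalue, hlax]
  rw [transferMatrix_laxOp_zero_mulVec hn _ _ _ hψ]
  simp only [Pi.smul_apply, smul_eq_mul, Function.comp_apply, ← Finset.mul_sum, hsum, mul_one]
  simp [Finset.prod_ne_zero_iff]

lemma norm_exp_I_mul (u : ℂ) : ‖exp (I * u)‖ = Real.exp (-u.im) := by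
  rw [Complex.norm_exp]
  simp

lemma norm_scaledEigenvalue_exp (w : Fin n → ℝ) (ψ : (Fin n → Bool) → ℝ) (u : ℂ) :
    ‖scaledEigenvalue w ψ (exp (I * u))‖ = Real.exp (-u.im) ^ n * ‖transferEigenvalue w ψ u‖ := by
  rw [scaledEigenvalue_exp, norm_mul, norm_pow, norm_exp_I_mul]

lemma norm_transferEigenvalue_conj (w : Fin n → ℝ) (ψ : (Fin n → Bool) → ℝ) (u : ℂ) :
    ‖transferEigenvalue w ψ (starRingEnd ℂ u)‖ = ‖transferEigenvalue w ψ u‖ := by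
  rw [transferEigenvalue_conj, Complex.norm_conj]

theorem exists_norm_transferEigenvalue_le (w : Fin n → ℝ) (ψ : (Fin n → Bool) → ℝ) :
    ∃ C, ∀ u, ‖transferEigenvalue w ψ u‖ ≤ C * Real.exp (n * |u.im|) := by
  have hcont : Continuous (scaledEigenvalue w ψ) :=
    continuous_scaledEigenvalue continuous_const continuous_const continuous_id
  obtain ⟨C, hC⟩ :=
    (isCompact_closedBall (0 : ℂ) 1).exists_bound_of_continuousOn hcont.continuousOn
  have upper {u : ℂ} (hu : 0 ≤ u.im) :
      ‖transferEigenvalue w ψ u‖ ≤ C * Real.exp (n * |u.im|) := by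
    have hle := hC (exp (I * u)) (by simpa [norm_exp_I_mul] using hu)
    rwa [norm_scaledEigenvalue_exp, Real.exp_neg, inv_pow, inv_mul_le_iff₀ (by positivity),
      ← Real.exp_nat_mul, mul_comm, ← abs_of_nonneg hu] at hle
  refine ⟨C, fun u => ?_⟩
  rcases le_total 0 u.im with hu | hu
  · exact upper hu
  · simpa [norm_transferEigenvalue_conj] using upper (u := starRingEnd ℂ u) (by simpa using hu)

lemma exists_le_norm_of_isCompact {X : Type*} [TopologicalSpace X] {K : Set X} (hK : IsCompact K)
    {G : X → ℂ → ℂ} (hG : Continuous fun p : X × ℂ => G p.1 p.2) (h0 : ∀ x ∈ K, G x 0 ≠ 0) :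
    ∃ δ > 0, ∃ c > 0, ∀ x ∈ K, ∀ z, ‖z‖ < δ → c ≤ ‖G x z‖ := by
  have hzero : ContinuousOn (fun x => ‖G x 0‖) K := by fun_prop
  obtain ⟨c, hc, hmin⟩ := hK.exists_forall_le' hzero (a := 0) fun x hx => norm_pos_iff.2 (h0 x hx)
  have hopen : IsOpen {p : X × ℂ | c / 2 < ‖G p.1 p.2‖} := isOpen_lt continuous_const hG.norm
  obtain ⟨U, V, -, hV, hKU, hV0, hUV⟩ := generalized_tube_lemma hK
    (isCompact_singleton (x := (0 : ℂ))) hopen (by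
      rintro ⟨x, z⟩ ⟨hx, rfl⟩
      exact (half_lt_self hc).trans_le (hmin x hx))
  obtain ⟨δ, hδ, hball⟩ := Metric.isOpen_iff.1 hV 0 (hV0 rfl)
  exact ⟨δ, hδ, c / 2, half_pos hc, fun x hx z hz =>
    (hUV (Set.mk_mem_prod (hKU hx) (hball (by simpa using hz)))).le⟩

theorem exists_le_norm_transferEigenvalue (hn : n = 2 * m) {X : Type*} [TopologicalSpace X]
    {K : Set X} (hK : IsCompact K) {w : X → Fin n → ℝ} {ψ : X → (Fin n → Bool) → ℝ}
    (hw : Continuous w) (hψ : Continuous ψ) (h : ∀ x ∈ K, IsGroundState (w x) m (ψ x)) :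
    ∃ V, ∃ c > 0, ∀ x ∈ K, ∀ u : ℂ, V < |u.im| → c ≤ ‖transferEigenvalue (w x) (ψ x) u‖ := by
  obtain ⟨δ, hδ, c, hc, hle⟩ := exists_le_norm_of_isCompact hK
    (G := fun x => scaledEigenvalue (w x) (ψ x))
    (continuous_scaledEigenvalue (hw.comp continuous_fst) (hψ.comp continuous_fst) continuous_snd)
    fun x hx => (h x hx).scaledEigenvalue_zero_ne_zero hn
  have upper {x : X} (hx : x ∈ K) {u : ℂ} (hu : max 0 (-Real.log δ) < u.im) :
      c ≤ ‖transferEigenvalue (w x) (ψ x) u‖ := by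
    obtain ⟨hpos, hlog⟩ := max_lt_iff.1 hu
    have hexp : ‖exp (I * u)‖ < δ := by
      rw [norm_exp_I_mul, ← Real.lt_log_iff_exp_lt hδ]
      linarith
    refine (hle x hx _ hexp).trans ?_
    rw [norm_scaledEigenvalue_exp]
    exact mul_le_of_le_one_left (norm_nonneg _)
      (pow_le_one₀ (Real.exp_pos _).le (Real.exp_le_one_iff.2 (by linarith)))
  refine ⟨max 0 (-Real.log δ), c, hc, fun x hx u hu => ?_⟩
  rcases le_total 0 u.im with him | him
  · exact upper hx (by rwa [abs_of_nonneg him] at hu)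
  · rw [← norm_transferEigenvalue_conj]
    exact upper hx (by rwa [abs_of_nonpos him] at hu)

end Regularity

/-! ### Comparison of entire functions on a vertical strip -/

section Strip

open Complex (I sin)

/-- Functions on the complex plane that grow at most exponentially in the imaginary direction,
uniformly in the real part. -/
def HasExpGrowth (g : ℂ → ℂ) : Prop := ∃ C B : ℝ, ∀ u, ‖g u‖ ≤ C * Real.exp (B * |u.im|)

namespace HasExpGrowth

variable {g h : ℂ → ℂ}

lemma exists_nonneg (hg : HasExpGrowth g) :
    ∃ C ≥ 0, ∃ B ≥ 0, ∀ u, ‖g u‖ ≤ C * Real.exp (B * |u.im|) := by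
  obtain ⟨C, B, hle⟩ := hg
  refine ⟨|C|, abs_nonneg C, |B|, abs_nonneg B, fun u => (hle u).trans ?_⟩
  gcongr <;> exact le_abs_self _

lemma const (c : ℂ) : HasExpGrowth fun _ => c := ⟨‖c‖, 0, by simp⟩

lemma add (hg : HasExpGrowth g) (hh : HasExpGrowth h) : HasExpGrowth fun u => g u + h u := by
  obtain ⟨C, hC, B, -, hg⟩ := hg.exists_nonneg
  obtain ⟨C', hC', B', -, hh⟩ := hh.exists_nonneg
  refine ⟨C + C', max B B', fun u => ?_⟩
  calc ‖g u + h u‖ ≤ C * Real.exp (B * |u.im|) + C' * Real.exp (B' * |u.im|) :=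
        norm_add_le_of_le (hg u) (hh u)
    _ ≤ C * Real.exp (max B B' * |u.im|) + C' * Real.exp (max B B' * |u.im|) := by
        gcongr
        exacts [le_max_left B B', le_max_right B B']
    _ = _ := by ring

lemma mul (hg : HasExpGrowth g) (hh : HasExpGrowth h) : HasExpGrowth fun u => g u * h u := by
  obtain ⟨C, hC, B, -, hg⟩ := hg.exists_nonneg
  obtain ⟨C', -, B', -, hh⟩ := hh.exists_nonneg
  refine ⟨C * C', B + B', fun u => ?_⟩
  rw [norm_mul, add_mul, Real.exp_add, mul_mul_mul_comm]
  exact mul_le_mul (hg u) (hh u) (norm_nonneg _) (by positivity)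

lemma pow (hg : HasExpGrowth g) (k : ℕ) : HasExpGrowth fun u => g u ^ k := by
  induction k with
  | zero => simpa using const 1
  | succ k ih => simpa only [pow_succ] using ih.mul hg

end HasExpGrowth

lemma complex_sin_eq_re_add_im (z : ℂ) : sin z =
    (Real.sin z.re * Real.cosh z.im : ℝ) + (Real.cos z.re * Real.sinh z.im : ℝ) * I := by
  rw [Complex.sin_eq]
  push_cast
  ring

lemma norm_sin_sq (z : ℂ) : ‖sin z‖ ^ 2 = Real.sin z.re ^ 2 + Real.sinh z.im ^ 2 := by
  rw [← Complex.normSq_eq_norm_sq, complex_sin_eq_re_add_im, Complex.normSq_add_mul_I]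
  linear_combination Real.sin z.re ^ 2 * Real.cosh_sq z.im +
    Real.sinh z.im ^ 2 * Real.sin_sq_add_cos_sq z.re

lemma norm_sin_le_cosh (z : ℂ) : ‖sin z‖ ≤ Real.cosh z.im := by
  rw [← sq_le_sq₀ (norm_nonneg _) (Real.cosh_pos _).le, norm_sin_sq, Real.cosh_sq]
  linarith [Real.sin_sq_le_one z.re]

lemma le_norm_sin {z : ℂ} {x : ℝ} (hx : Real.sin z.re = x) : x ≤ ‖sin z‖ := by
  refine le_trans (le_abs_self x) (abs_le_of_sq_le_sq ?_ (norm_nonneg _))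
  rw [norm_sin_sq, hx]
  linarith [sq_nonneg (Real.sinh z.im)]

lemma sin_ne_zero_of_re_mem_Ioo {z : ℂ} (hz : z.re ∈ Set.Ioo 0 π) : sin z ≠ 0 := fun hzero => by
  have hle := le_norm_sin (z := z) rfl
  rw [hzero, norm_zero] at hle
  exact hle.not_gt (Real.sin_pos_of_mem_Ioo hz)

lemma eq_zero_of_sin_eq_zero {z : ℂ} (h0 : 0 ≤ z.re) (h1 : z.re < π) (hz : sin z = 0) : z = 0 := by
  have hre : z.re = 0 := by
    by_contra hne
    exact sin_ne_zero_of_re_mem_Ioo ⟨h0.lt_of_ne' hne, h1⟩ hz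
  have him : Real.sinh z.im = 0 := by simpa [hz, hre, eq_comm (a := (0 : ℝ))] using norm_sin_sq z
  exact Complex.ext hre (Real.sinh_eq_zero.1 him)

lemma hasExpGrowth_sin (r : ℝ) (z : ℂ) : HasExpGrowth fun u => sin (r * u + z) := by
  refine ⟨Real.exp |z.im|, |r|, fun u => (norm_sin_le_cosh _).trans ?_⟩
  have hcosh (y : ℝ) : Real.cosh y ≤ Real.exp |y| := by
    rw [← Real.cosh_abs, Real.cosh_eq]
    have hexp : Real.exp (-|y|) ≤ Real.exp |y| := Real.exp_le_exp.2 (by linarith [abs_nonneg y])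
    linarith
  rw [← Real.exp_add, ← abs_mul, add_comm |z.im|]
  refine (hcosh _).trans (Real.exp_le_exp.2 ?_)
  simpa using abs_add_le (r * u.im) z.im

/-- Phragmén–Lindelöf for the quotient `g / h`. -/
theorem norm_le_norm_of_verticalStrip {a b : ℝ} (hab : a < b) {g h : ℂ → ℂ}
    (hg : Differentiable ℂ g) (hh : Differentiable ℂ h) (hgrowth : HasExpGrowth g)
    (hne : ∀ u, u.re ∈ Set.Icc a b → h u ≠ 0)
    (hlower : ∃ V, ∃ c > 0, ∀ u, u.re ∈ Set.Icc a b → V < |u.im| → c ≤ ‖h u‖)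
    (ha : ∀ u, u.re = a → ‖g u‖ ≤ ‖h u‖) (hb : ∀ u, u.re = b → ‖g u‖ ≤ ‖h u‖) {u : ℂ}
    (hu : u.re ∈ Set.Icc a b) : ‖g u‖ ≤ ‖h u‖ := by
  obtain ⟨V, c, hc, hle⟩ := hlower
  obtain ⟨C, hC, B, hB, hgrowth⟩ := hgrowth.exists_nonneg
  have hslope : 0 < π / (b - a) := div_pos Real.pi_pos (sub_pos.2 hab)
  set s := π / (b - a) / 2
  have hspos : 0 < s := half_pos hslope
  have hquot : ‖g u / h u‖ ≤ 1 := by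
    refine PhragmenLindelof.vertical_strip (f := fun u => g u / h u) ?_ ⟨s, half_lt_self hslope,
      B / s, ?_⟩ (fun u hu => ?_) (fun u hu => ?_) hu.1 hu.2
    · refine ⟨fun z hz => ?_, fun z hz => ?_⟩
      · exact ((hg z).div (hh z) (hne z (Set.Ioo_subset_Icc_self hz))).differentiableWithinAt
      · rw [Complex.closure_preimage_re, closure_Ioo hab.ne] at hz
        exact ((hg z).continuousAt.div (hh z).continuousAt (hne z hz)).continuousWithinAt
    · refine Asymptotics.IsBigO.of_bound (C / c) ?_
      rw [Filter.eventually_inf_principal, Filter.eventually_comap]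
      filter_upwards [Filter.eventually_gt_atTop V] with y hy z hzy hz
      obtain rfl : |z.im| = y := hzy
      have hlin : B * |z.im| ≤ B / s * Real.exp (s * |z.im|) := by
        rw [div_mul_eq_mul_div, le_div_iff₀ hspos, mul_assoc]
        gcongr
        linarith [Real.add_one_le_exp (s * |z.im|)]
      rw [norm_div, Real.norm_of_nonneg (Real.exp_pos _).le, div_mul_eq_mul_div]
      refine div_le_div₀ (by positivity) ((hgrowth z).trans ?_) hc
        (hle z (Set.Ioo_subset_Icc_self hz) hy)
      gcongr
    · exact (norm_div _ _).trans_le (div_le_one_of_le₀ (ha u hu) (norm_nonneg _))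
    · exact (norm_div _ _).trans_le (div_le_one_of_le₀ (hb u hu) (norm_nonneg _))
  rwa [norm_div, div_le_one (norm_pos_iff.2 (hne u hu))] at hquot

/-- The closed strip between the imaginary axis and its mirror image under `u ↦ crossing - u`. -/
def physicalStrip : Set ℂ := Complex.re ⁻¹' Set.Icc 0 (2 * π / 3)

lemma crossing_re : crossing.re = 2 * π / 3 := by rw [crossing_eq_ofReal, Complex.ofReal_re]

lemma crossing_im : crossing.im = 0 := by rw [crossing_eq_ofReal, Complex.ofReal_im]

lemma pi_div_three_add_mul_I_re (v : ℝ) : (π / 3 + v * I : ℂ).re = π / 3 := by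
  simp

lemma pi_div_three_add_mul_I_mem_physicalStrip (v : ℝ) : (π / 3 + v * I : ℂ) ∈ physicalStrip := by
  have hpi := Real.pi_pos
  rw [physicalStrip, Set.mem_preimage, pi_div_three_add_mul_I_re]
  constructor <;> linarith

theorem norm_le_norm_of_crossing_symmetric {g h : ℂ → ℂ} (hg : Differentiable ℂ g)
    (hh : Differentiable ℂ h) (hgrowth : HasExpGrowth g) (hne : ∀ u ∈ physicalStrip, h u ≠ 0)
    (hlower : ∃ V, ∃ c > 0, ∀ u ∈ physicalStrip, V < |u.im| → c ≤ ‖h u‖)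
    (hgsymm : ∀ u, g (crossing - u) = g u) (hhsymm : ∀ u, h (crossing - u) = h u)
    (haxis : ∀ v : ℝ, ‖g (v * I)‖ ≤ ‖h (v * I)‖) {u : ℂ} (hu : u ∈ physicalStrip) :
    ‖g u‖ ≤ ‖h u‖ := by
  have hleft (z : ℂ) (hz : z.re = 0) : ‖g z‖ ≤ ‖h z‖ := by
    have hz' : z = z.im * I := by apply Complex.ext <;> simp [hz]
    rw [hz']
    exact haxis z.im
  refine norm_le_norm_of_verticalStrip (by positivity) hg hh hgrowth hne hlower hleft
    (fun z hz => ?_) hu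
  rw [← hgsymm, ← hhsymm]
  exact hleft _ (by rw [Complex.sub_re, crossing_re, hz, sub_self])

end Strip

/-! ### The eigenvalue on the boundary and on the middle line of the strip -/

section Boundary

open Complex (I sin)
open scoped ComplexConjugate

section BoundaryIdentity

variable {A s : ℂ} {B t : ℝ}

lemma abs_re_mul_conj_le (A s : ℂ) : |(A * conj s).re| ≤ ‖A‖ * ‖s‖ :=
  (Complex.abs_re_le_norm _).trans_eq (by simp)

lemma norm_le_of_boundary_identity (ht : 0 ≤ t) (hB : 0 < B)
    (h : (‖A‖ ^ 2 - ‖s‖ ^ 2) * B = 2 * t * ((A * conj s).re + ‖s‖ ^ 2)) : ‖s‖ ≤ ‖A‖ := by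
  by_contra! hlt
  have hre := neg_le_of_abs_le (abs_re_mul_conj_le A s)
  have hright : 0 ≤ 2 * t * ((A * conj s).re + ‖s‖ ^ 2) :=
    mul_nonneg (by positivity) (by nlinarith [norm_nonneg A])
  have hleft : ‖A‖ ^ 2 - ‖s‖ ^ 2 < 0 := by nlinarith [norm_nonneg A]
  exact (mul_neg_of_neg_of_pos hleft hB).not_ge (h ▸ hright)

lemma norm_le_three_mul_of_boundary_identity (ht : 0 ≤ t) (hB : 0 < B) (htB : t ≤ B)
    (h : (‖A‖ ^ 2 - ‖s‖ ^ 2) * B = 2 * t * ((A * conj s).re + ‖s‖ ^ 2)) : ‖A‖ ≤ 3 * ‖s‖ := by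
  by_contra! hlt
  have hs := norm_nonneg s
  have hre : (A * conj s).re + ‖s‖ ^ 2 ≤ ‖s‖ * (‖A‖ + ‖s‖) := by
    nlinarith [le_of_abs_le (abs_re_mul_conj_le A s)]
  have hmul : (‖A‖ - ‖s‖) * B * (‖A‖ + ‖s‖) ≤ 2 * B * ‖s‖ * (‖A‖ + ‖s‖) := calc
    _ = 2 * t * ((A * conj s).re + ‖s‖ ^ 2) := by rw [← h]; ring
    _ ≤ 2 * t * (‖s‖ * (‖A‖ + ‖s‖)) := by gcongr
    _ ≤ 2 * B * (‖s‖ * (‖A‖ + ‖s‖)) := by gcongr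
    _ = _ := by ring
  have hle := le_of_mul_le_mul_right hmul (by linarith)
  nlinarith

end BoundaryIdentity

lemma sinProd_pairShift (n : ℕ) (d : ℝ) (u : ℂ) :
    sinProd (pairShift n d) u = sin (u - d) * sin (u + d) * sin u ^ n := by
  simp [sinProd, pairShift, Fin.prod_univ_succ, mul_assoc]

lemma sinProd_pairShift_conj (n : ℕ) (d : ℝ) (u : ℂ) :
    sinProd (pairShift n d) (conj u) = conj (sinProd (pairShift n d) u) := by
  simp only [sinProd, map_prod, ← Complex.sin_conj, map_sub, Complex.conj_ofReal]

lemma sinProd_pairShift_neg (m : ℕ) (d : ℝ) (u : ℂ) :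
    sinProd (pairShift (2 * m) d) (-u) = sinProd (pairShift (2 * m) d) u := by
  rw [sinProd_pairShift, sinProd_pairShift, show -u - d = -(u + d) by ring,
    show -u + d = -(u - d) by ring, Complex.sin_neg, Complex.sin_neg, Complex.sin_neg,
    (even_two_mul m).neg_pow]
  ring

lemma conj_mul_I (v : ℝ) : conj (v * I) = -(v * I) := by simp

lemma sinProd_pairShift_sub_crossing (m : ℕ) (d v : ℝ) :
    sinProd (pairShift (2 * m) d) (v * I - crossing) =
      conj (sinProd (pairShift (2 * m) d) (v * I + crossing)) := by
  rw [← sinProd_pairShift_conj, ← sinProd_pairShift_neg, map_add, conj_mul_I, conj_crossing]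
  congr 1
  ring

/-- The modulus of `sinProd (pairShift (2 * m) d)` at the point `v * I`. -/
def axisWeight (m : ℕ) (d v : ℝ) : ℝ :=
  (Real.sinh v ^ 2 + Real.sin d ^ 2) * (Real.sinh v ^ 2) ^ m

lemma axisWeight_nonneg (m : ℕ) (d v : ℝ) : 0 ≤ axisWeight m d v := by
  unfold axisWeight
  positivity

lemma sin_mul_I_sub_mul_sin_mul_I_add (d v : ℝ) :
    sin (v * I - d) * sin (v * I + d) = -(Real.sinh v ^ 2 + Real.sin d ^ 2 : ℝ) := by
  have hcosh : (Complex.cosh v) ^ 2 = Complex.sinh v ^ 2 + 1 := Complex.cosh_sq v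
  rw [Complex.sin_sub, Complex.sin_add, Complex.sin_mul_I, Complex.cos_mul_I]
  push_cast
  linear_combination Complex.sinh v ^ 2 * Complex.cos d ^ 2 * Complex.I_sq -
    sin d ^ 2 * hcosh - Complex.sinh v ^ 2 * Complex.sin_sq_add_cos_sq d

lemma sinProd_pairShift_mul_I (m : ℕ) (d v : ℝ) :
    sinProd (pairShift (2 * m) d) (v * I) = (-1) ^ (m + 1) * axisWeight m d v := by
  rw [sinProd_pairShift, sin_mul_I_sub_mul_sin_mul_I_add, Complex.sin_mul_I, pow_mul, mul_pow,
    Complex.I_sq, mul_pow, axisWeight]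
  push_cast
  ring

/-- A lower bound for `sinProd (pairShift (2 * m) d)` on the line `re u = 2 * π / 3`. -/
def boundaryBound (m : ℕ) (d : ℝ) : ℝ :=
  Real.sin (π / 3 + d) * Real.sin (π / 3 - d) * (√3 / 2) ^ (2 * m)

section Bound

variable {m : ℕ} {d : ℝ}

lemma sin_pi_div_three_add_pos (h0 : 0 ≤ d) (h1 : d < π / 3) : 0 < Real.sin (π / 3 + d) :=
  (sqrt_three_div_two_le_sin h0 h1.le).trans_lt' (by positivity)

lemma sin_pi_div_three_sub_pos (h0 : 0 ≤ d) (h1 : d < π / 3) : 0 < Real.sin (π / 3 - d) :=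
  Real.sin_pos_of_pos_of_lt_pi (by linarith) (by linarith [Real.pi_pos])

lemma boundaryBound_pos (h0 : 0 ≤ d) (h1 : d < π / 3) : 0 < boundaryBound m d := by
  have hadd := sin_pi_div_three_add_pos h0 h1
  have hsub := sin_pi_div_three_sub_pos h0 h1
  unfold boundaryBound
  positivity

lemma boundaryBound_le (h0 : 0 ≤ d) (h1 : d < π / 3) (v : ℝ) :
    boundaryBound m d ≤ ‖sinProd (pairShift (2 * m) d) (v * I + crossing)‖ := by
  have hleft : Real.sin (π / 3 + d) ≤ ‖sin (v * I + crossing - d)‖ := le_norm_sin <| by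
    rw [← Real.sin_pi_sub (π / 3 + d)]
    simp only [Complex.sub_re, Complex.add_re, Complex.re_ofReal_mul, Complex.I_re, crossing_re,
      Complex.ofReal_re]
    ring_nf
  have hright : Real.sin (π / 3 - d) ≤ ‖sin (v * I + crossing + d)‖ := le_norm_sin <| by
    rw [← Real.sin_pi_sub (π / 3 - d)]
    simp only [Complex.add_re, Complex.re_ofReal_mul, Complex.I_re, crossing_re,
      Complex.ofReal_re]
    ring_nf
  have hmid : √3 / 2 ≤ ‖sin (v * I + crossing)‖ := le_norm_sin <| by
    rw [← Real.sin_pi_div_three, ← Real.sin_pi_sub (π / 3)]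
    simp only [Complex.add_re, Complex.re_ofReal_mul, Complex.I_re, crossing_re]
    ring_nf
  have hsub := sin_pi_div_three_sub_pos h0 h1
  rw [sinProd_pairShift, norm_mul, norm_mul, norm_pow, boundaryBound]
  gcongr

end Bound

lemma ofReal_re_transferEigenvalue_zero {n : ℕ} (w : Fin n → ℝ) (ψ : (Fin n → Bool) → ℝ) :
    ((transferEigenvalue w ψ 0).re : ℂ) = transferEigenvalue w ψ 0 := by
  rw [← Complex.conj_eq_iff_re, ← transferEigenvalue_conj, map_zero]

lemma transferEigenvalue_mul_I_sub_crossing {n : ℕ} (hn : Even n) (w : Fin n → ℝ)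
    (ψ : (Fin n → Bool) → ℝ) (v : ℝ) :
    transferEigenvalue w ψ (v * I - crossing) = transferEigenvalue w ψ (π / 3 + v * I) := by
  rw [← transferEigenvalue_add_pi hn, crossing]
  congr 1
  ring

namespace IsGroundState

section Symmetry

variable {n k : ℕ} {d : ℝ} {ψ : (Fin (n + 2) → Bool) → ℝ}

lemma transferEigenvalue_mul_I_add_crossing (h : IsGroundState (pairShift n d) k ψ) (h0 : 0 ≤ d)
    (h1 : d < π / 3) (v : ℝ) : transferEigenvalue (pairShift n d) ψ (v * I + crossing) =
      conj (transferEigenvalue (pairShift n d) ψ (v * I)) := by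
  rw [← transferEigenvalue_conj, conj_mul_I, ← h.transferEigenvalue_crossing_sub h0 h1]
  congr 1
  ring

lemma ofReal_re_transferEigenvalue_middle (h : IsGroundState (pairShift n d) k ψ) (h0 : 0 ≤ d)
    (h1 : d < π / 3) (v : ℝ) :
    ((transferEigenvalue (pairShift n d) ψ (π / 3 + v * I)).re : ℂ) =
      transferEigenvalue (pairShift n d) ψ (π / 3 + v * I) := by
  have hconj : conj (π / 3 : ℂ) = π / 3 := by simp [Complex.conj_ofNat]
  rw [← Complex.conj_eq_iff_re, ← transferEigenvalue_conj,
    ← h.transferEigenvalue_crossing_sub h0 h1, map_add, conj_mul_I, hconj, crossing]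
  congr 1
  ring

end Symmetry

variable {m : ℕ} {d : ℝ} {ψ : (Fin (2 * m + 2) → Bool) → ℝ}

/-- On the imaginary axis two of the three eigenvalues in the functional equation are complex
conjugate and the third one is real. -/
lemma boundary_identity (h : IsGroundState (pairShift (2 * m) d) (m + 1) ψ) (h0 : 0 ≤ d)
    (h1 : d < π / 3) (v : ℝ) :
    (‖(-1) ^ (m + 1) * transferEigenvalue (pairShift (2 * m) d) ψ (v * I)‖ ^ 2 -
        ‖sinProd (pairShift (2 * m) d) (v * I + crossing)‖ ^ 2) *
        (transferEigenvalue (pairShift (2 * m) d) ψ (π / 3 + v * I)).re =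
      2 * axisWeight m d v *
        (((-1) ^ (m + 1) * transferEigenvalue (pairShift (2 * m) d) ψ (v * I) *
            conj (sinProd (pairShift (2 * m) d) (v * I + crossing))).re +
          ‖sinProd (pairShift (2 * m) d) (v * I + crossing)‖ ^ 2) := by
  have heq := h.functional_equation (by ring) (v * I)
  rw [h.transferEigenvalue_mul_I_add_crossing h0 h1,
    transferEigenvalue_mul_I_sub_crossing ⟨m + 1, by ring⟩,
    ← h.ofReal_re_transferEigenvalue_middle h0 h1, sinProd_pairShift_sub_crossing,
    sinProd_pairShift_mul_I] at heq
  generalize transferEigenvalue (pairShift (2 * m) d) ψ (v * I) = A at heq ⊢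
  generalize sinProd (pairShift (2 * m) d) (v * I + crossing) = s at heq ⊢
  generalize (transferEigenvalue (pairShift (2 * m) d) ψ (π / 3 + v * I)).re = B at heq ⊢
  generalize axisWeight m d v = t at heq ⊢
  rw [← Complex.normSq_eq_norm_sq, ← Complex.normSq_eq_norm_sq]
  rcases neg_one_pow_eq_or ℂ (m + 1) with hsign | hsign <;> rw [hsign] at heq ⊢ <;>
  · have hre := congrArg Complex.re heq
    simp only [Complex.mul_re, Complex.conj_re, Complex.conj_im, mul_neg, sub_neg_eq_add,
      Complex.ofReal_re, Complex.mul_im, Complex.ofReal_im, mul_zero, sub_zero, neg_mul, one_mul,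
      mul_one, neg_neg, Complex.add_re, Complex.neg_re, zero_mul, neg_zero, add_zero, neg_add_rev,
      Complex.re_ofNat, Complex.im_ofNat, Complex.neg_im, Complex.normSq_apply] at hre ⊢
    linear_combination hre

lemma norm_sinProd_le_norm_transferEigenvalue (h : IsGroundState (pairShift (2 * m) d) (m + 1) ψ)
    (h0 : 0 ≤ d) (h1 : d < π / 3) {v : ℝ}
    (hpos : 0 < (transferEigenvalue (pairShift (2 * m) d) ψ (π / 3 + v * I)).re) :
    ‖sinProd (pairShift (2 * m) d) (v * I + crossing)‖ ≤
      ‖transferEigenvalue (pairShift (2 * m) d) ψ (v * I)‖ := by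
  simpa using norm_le_of_boundary_identity (axisWeight_nonneg m d v) hpos
    (h.boundary_identity h0 h1 v)

lemma norm_transferEigenvalue_le_three_mul (h : IsGroundState (pairShift (2 * m) d) (m + 1) ψ)
    (h0 : 0 ≤ d) (h1 : d < π / 3) {v : ℝ}
    (hpos : 0 < (transferEigenvalue (pairShift (2 * m) d) ψ (π / 3 + v * I)).re)
    (hle : axisWeight m d v ≤ (transferEigenvalue (pairShift (2 * m) d) ψ (π / 3 + v * I)).re) :
    ‖transferEigenvalue (pairShift (2 * m) d) ψ (v * I)‖ ≤
      3 * ‖sinProd (pairShift (2 * m) d) (v * I + crossing)‖ := by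
  simpa using norm_le_three_mul_of_boundary_identity (axisWeight_nonneg m d v) hpos hle
    (h.boundary_identity h0 h1 v)

lemma re_transferEigenvalue_pi_div_three_pos
    (h : IsGroundState (pairShift (2 * m) d) (m + 1) ψ) (h0 : 0 ≤ d) (h1 : d < π / 3) :
    0 < (transferEigenvalue (pairShift (2 * m) d) ψ (π / 3)).re := by
  rw [transferEigenvalue_pi_div_three, Complex.ofReal_re]
  exact (h.le_centralEigenvalue_pairShift (by lia) h0 h1).trans_lt' (by positivity)

lemma re_transferEigenvalue_zero_ne_zero (h : IsGroundState (pairShift (2 * m) d) (m + 1) ψ)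
    (h0 : 0 ≤ d) (h1 : d < π / 3) :
    (transferEigenvalue (pairShift (2 * m) d) ψ 0).re ≠ 0 := fun hzero => by
  have hle := h.norm_sinProd_le_norm_transferEigenvalue h0 h1 (v := 0)
    (by simpa using h.re_transferEigenvalue_pi_div_three_pos h0 h1)
  rw [Complex.ofReal_zero, zero_mul, ← ofReal_re_transferEigenvalue_zero, hzero,
    Complex.ofReal_zero, norm_zero] at hle
  refine (boundaryBound_pos (m := m) h0 h1).not_ge ((boundaryBound_le h0 h1 0).trans ?_)
  simpa using hle

end IsGroundState

end Boundary

/-! ### The compact family of ground states for shifts in `[0, π / 3]` -/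

section CompactFamily

open scoped Matrix

section Continuity

variable {X : Type*} [TopologicalSpace X] {n : ℕ} {w : X → Fin n → ℝ}
  {ψ : X → (Fin n → Bool) → ℝ}

lemma continuous_ofReal_comp (hψ : Continuous ψ) :
    Continuous fun x => (Complex.ofReal ∘ ψ x : (Fin n → Bool) → ℂ) :=
  continuous_pi fun σ => Complex.continuous_ofReal.comp ((continuous_apply σ).comp hψ)

lemma continuous_transferEigenvalue (hw : Continuous w) (hψ : Continuous ψ) {u : X → ℂ}
    (hu : Continuous u) : Continuous fun x => transferEigenvalue (w x) (ψ x) (u x) := by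
  have hvec := (continuous_inhomTransfer crossing hw hu).matrix_mulVec (continuous_ofReal_comp hψ)
  exact continuous_finsetSum _ fun σ _ => (continuous_apply σ).comp hvec

lemma continuous_centralEigenvalue (hw : Continuous w) (hψ : Continuous ψ) :
    Continuous fun x => centralEigenvalue (w x) (ψ x) := by
  have hre := Complex.continuous_re.comp
    (continuous_transferEigenvalue hw hψ (continuous_const (y := (π / 3 : ℂ))))
  simpa only [Function.comp_def, transferEigenvalue_pi_div_three, Complex.ofReal_re] using hre

lemma isClosed_isGroundState (hw : Continuous w) (hψ : Continuous ψ) (k : ℕ) :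
    IsClosed {x | IsGroundState (w x) k (ψ x)} := by
  have happly (σ : Fin n → Bool) : Continuous fun x => ψ x σ := (continuous_apply σ).comp hψ
  have hset : {x | IsGroundState (w x) k (ψ x)} = {x | 0 ≤ ψ x} ∩
      (⋂ σ, ⋂ _ : numUp σ ≠ k, {x | ψ x σ = 0}) ∩ {x | ∑ σ, ψ x σ = 1} ∩
      ⋂ u, {x | inhomTransfer crossing (w x) u *ᵥ (Complex.ofReal ∘ ψ x) =
        transferEigenvalue (w x) (ψ x) u • (Complex.ofReal ∘ ψ x)} := by
    ext x
    simp only [Set.mem_inter_iff, Set.mem_iInter, Set.mem_ofPred_eq]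
    exact ⟨fun h => ⟨⟨⟨h.nonneg, h.eq_zero⟩, h.sum_eq_one⟩, h.mulVec_eq⟩,
      fun ⟨⟨⟨hnonneg, hzero⟩, hsum⟩, hmulVec⟩ => ⟨hnonneg, hzero, hsum, hmulVec⟩⟩
  rw [hset]
  refine ((isClosed_le continuous_const hψ).inter ?_).inter ?_ |>.inter ?_
  · exact isClosed_iInter fun σ => isClosed_iInter fun _ => isClosed_eq (happly σ) continuous_const
  · exact isClosed_eq (continuous_finsetSum _ fun σ _ => happly σ) continuous_const
  · exact isClosed_iInter fun u => isClosed_eq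
      ((continuous_inhomTransfer crossing hw continuous_const).matrix_mulVec
        (continuous_ofReal_comp hψ))
      ((continuous_transferEigenvalue hw hψ continuous_const).smul (continuous_ofReal_comp hψ))

end Continuity

lemma contDiff_pairShift (n : ℕ) (j : Fin (n + 2)) : ContDiff ℝ 1 fun d => pairShift n d j := by
  refine Fin.cases ?_ (Fin.cases ?_ fun j => ?_) j <;>
    simp only [pairShift, Fin.cons_zero, Fin.cons_succ, Pi.zero_apply] <;> fun_prop

lemma continuous_pairShift (n : ℕ) : Continuous (pairShift n) :=
  continuous_pi fun j => (contDiff_pairShift n j).continuous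

lemma pairShift_zero (n : ℕ) : pairShift n 0 = 0 := by
  funext j
  refine Fin.cases ?_ (Fin.cases ?_ fun j => ?_) j <;> simp [pairShift]

/-- The eigenvalue as a function of the shift, the ground state and the spectral parameter. -/
def pairEigenvalue (m : ℕ) (z : (ℝ × ((Fin (2 * m + 2) → Bool) → ℝ)) × ℂ) : ℂ :=
  transferEigenvalue (pairShift (2 * m) z.1.1) z.1.2 z.2

lemma contDiff_pairEigenvalue (m : ℕ) : ContDiff ℝ 1 (pairEigenvalue m) := by
  unfold pairEigenvalue
  refine contDiff_transferEigenvalue (𝕜 := ℝ) (r := 1)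
    (X := (ℝ × ((Fin (2 * m + 2) → Bool) → ℝ)) × ℂ) (w := fun z => pairShift (2 * m) z.1.1)
    (ψ := fun z => z.1.2) (u := fun z => z.2) (fun j => ?_) (fun σ => ?_) contDiff_snd
  · exact Complex.ofRealCLM.contDiff.comp ((contDiff_pairShift _ j).comp contDiff_fst.fst)
  · exact Complex.ofRealCLM.contDiff.comp (by fun_prop)

lemma continuous_pairEigenvalue (m : ℕ) : Continuous (pairEigenvalue m) :=
  (contDiff_pairEigenvalue m).continuous

/-- The pairs of a shift `d ∈ [0, π / 3]` and a balanced ground state for it. The bound on the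
central eigenvalue is automatic for `d < π / 3` and keeps the family closed at `d = π / 3` away
from degenerate eigenvectors. -/
def pairGroundStates (m : ℕ) : Set (ℝ × ((Fin (2 * m + 2) → Bool) → ℝ)) :=
  {x | x.1 ∈ Set.Icc 0 (π / 3) ∧ IsGroundState (pairShift (2 * m) x.1) (m + 1) x.2 ∧
    (√3 / 2) ^ (2 * m + 2) ≤ centralEigenvalue (pairShift (2 * m) x.1) x.2}

lemma isClosed_pairGroundStates (m : ℕ) : IsClosed (pairGroundStates m) := by
  have hw : Continuous fun x : ℝ × ((Fin (2 * m + 2) → Bool) → ℝ) => pairShift (2 * m) x.1 :=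
    (continuous_pairShift _).comp continuous_fst
  exact (isClosed_Icc.preimage continuous_fst).inter
    ((isClosed_isGroundState hw continuous_snd _).inter
      (isClosed_le continuous_const (continuous_centralEigenvalue hw continuous_snd)))

lemma isCompact_pairGroundStates (m : ℕ) : IsCompact (pairGroundStates m) := by
  refine (isCompact_Icc (a := 0) (b := π / 3)).prod (isCompact_Icc (a := 0) (b := 1))
    |>.of_isClosed_subset (isClosed_pairGroundStates m) ?_
  rintro ⟨d, ψ⟩ ⟨hd, hψ, -⟩
  refine ⟨hd, hψ.nonneg, fun σ => ?_⟩
  rw [Pi.one_apply, ← hψ.sum_eq_one]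
  exact Finset.single_le_sum (fun τ _ => hψ.nonneg τ) (Finset.mem_univ σ)

lemma IsGroundState.mem_pairGroundStates {m : ℕ} {d : ℝ} {ψ : (Fin (2 * m + 2) → Bool) → ℝ}
    (h : IsGroundState (pairShift (2 * m) d) (m + 1) ψ) (h0 : 0 ≤ d) (h1 : d < π / 3) :
    (d, ψ) ∈ pairGroundStates m :=
  ⟨⟨h0, h1.le⟩, h, h.le_centralEigenvalue_pairShift (by lia) h0 h1⟩

lemma exists_mem_pairGroundStates (m : ℕ) {d : ℝ} (h0 : 0 ≤ d) (h1 : d < π / 3) :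
    ∃ ψ, (d, ψ) ∈ pairGroundStates m := by
  obtain ⟨ψ, hψ⟩ := exists_isGroundState (abs_pairShift_lt (n := 2 * m) h0 h1)
    (k := m + 1) (by lia)
  exact ⟨ψ, hψ.mem_pairGroundStates h0 h1⟩

lemma pairGroundStates_unique {m : ℕ} {d : ℝ} {ψ φ : (Fin (2 * m + 2) → Bool) → ℝ}
    (hψ : (d, ψ) ∈ pairGroundStates m) (hφ : (d, φ) ∈ pairGroundStates m) (h1 : d < π / 3) :
    ψ = φ :=
  hψ.2.1.unique hφ.2.1 (abs_pairShift_lt hψ.1.1 h1)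

lemma exists_le_norm_pairEigenvalue (m : ℕ) : ∃ V, ∃ c > 0, ∀ x ∈ pairGroundStates m, ∀ u : ℂ,
    V < |u.im| → c ≤ ‖pairEigenvalue m (x, u)‖ := by
  unfold pairEigenvalue
  exact exists_le_norm_transferEigenvalue (w := fun x => pairShift (2 * m) x.1)
    (ψ := fun x => x.2) (by ring) (isCompact_pairGroundStates m)
    ((continuous_pairShift _).comp continuous_fst) continuous_snd fun _ hx => hx.2.1

lemma isClosed_fst_image_pairGroundStates {m : ℕ} {C : Set (ℝ × ((Fin (2 * m + 2) → Bool) → ℝ))}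
    (hC : IsClosed C) : IsClosed (Prod.fst '' (pairGroundStates m ∩ C)) :=
  (((isCompact_pairGroundStates m).inter_right hC).image continuous_fst).isClosed

lemma IsGroundState.re_transferEigenvalue_zero_nonneg {n k : ℕ} {ψ : (Fin n → Bool) → ℝ}
    (h : IsGroundState 0 k ψ) : 0 ≤ (transferEigenvalue 0 ψ 0).re := by
  have hreal : inhomTransfer crossing (0 : Fin n → ℝ) 0 =
      (transferMatrix fun _ : Fin n => laxOp (√3 / 2 : ℝ) 0 (√3 / 2)).map Complex.ofRealHom := by
    rw [transferMatrix_map, inhomTransfer]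
    refine congrArg transferMatrix (funext fun j => funext₂ fun s t => ?_)
    refine Eq.trans ?_ (laxOp_map (Complex.ofRealHom : ZeroHom ℝ ℂ) (√3 / 2) 0 (√3 / 2) s t).symm
    simp [trigLax, sin_crossing]
  rw [transferEigenvalue, hreal, map_ofRealHom_mulVec]
  simp only [Function.comp_apply, ← Complex.ofReal_sum, Complex.ofReal_re]
  refine Finset.sum_nonneg fun σ _ => Finset.sum_nonneg fun τ _ => mul_nonneg ?_ (h.nonneg τ)
  exact transferMatrix_laxOp_nonneg (fun _ => by positivity) (fun _ => le_rfl) (by positivity) σ τ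

/-- The sign at `d = 0` is known, and along `[0, d]` the value never vanishes. -/
lemma re_pairEigenvalue_zero_pos {m : ℕ} {d : ℝ} {ψ : (Fin (2 * m + 2) → Bool) → ℝ}
    (h : (d, ψ) ∈ pairGroundStates m) (h1 : d < π / 3) :
    0 < (pairEigenvalue m ((d, ψ), 0)).re := by
  refine lt_of_le_of_ne (le_of_not_gt fun hneg => ?_)
    (h.2.1.re_transferEigenvalue_zero_ne_zero h.1.1 h1).symm
  have hcont : Continuous fun x => (pairEigenvalue m (x, 0)).re :=
    Complex.continuous_re.comp ((continuous_pairEigenvalue m).comp (by fun_prop))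
  have hcover : Set.Icc 0 d ⊆
      Prod.fst '' (pairGroundStates m ∩ {x | 0 ≤ (pairEigenvalue m (x, 0)).re}) ∪
        Prod.fst '' (pairGroundStates m ∩ {x | (pairEigenvalue m (x, 0)).re ≤ 0}) := fun y hy => by
    obtain ⟨φ, hφ⟩ := exists_mem_pairGroundStates m hy.1 (hy.2.trans_lt h1)
    rcases le_total 0 (pairEigenvalue m ((y, φ), 0)).re with hle | hge
    · exact Or.inl ⟨(y, φ), ⟨hφ, hle⟩, rfl⟩
    · exact Or.inr ⟨(y, φ), ⟨hφ, hge⟩, rfl⟩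
  have hstart : (0 : ℝ) ∈ Prod.fst '' (pairGroundStates m ∩
      {x | 0 ≤ (pairEigenvalue m (x, 0)).re}) := by
    obtain ⟨φ, hφ⟩ := exists_mem_pairGroundStates m le_rfl (h.1.1.trans_lt h1)
    refine ⟨(0, φ), ⟨hφ, ?_⟩, rfl⟩
    have hground := hφ.2.1
    simp only [Set.mem_ofPred_eq, pairEigenvalue, pairShift_zero] at hground ⊢
    exact hground.re_transferEigenvalue_zero_nonneg
  obtain ⟨y, hy, ⟨⟨_, φ⟩, ⟨hφ, hle⟩, rfl⟩, ⟨_, φ'⟩, ⟨hφ', hge⟩, rfl⟩ :=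
    isPreconnected_closed_iff.1 (isPreconnected_Icc (a := 0) (b := d)) _ _
      (isClosed_fst_image_pairGroundStates (isClosed_le continuous_const hcont))
      (isClosed_fst_image_pairGroundStates (isClosed_le hcont continuous_const))
      hcover ⟨0, ⟨le_rfl, h.1.1⟩, hstart⟩ ⟨d, ⟨h.1.1, le_rfl⟩, (d, ψ), ⟨h, hneg.le⟩, rfl⟩
  have hlt := hy.2.trans_lt h1
  obtain rfl := pairGroundStates_unique hφ hφ' hlt
  exact hφ.2.1.re_transferEigenvalue_zero_ne_zero hy.1 hlt (le_antisymm hge hle)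

end CompactFamily

/-! ### Absence of zeros in the physical strip -/

section ZeroFree

open Complex (I sin)
open scoped Topology

lemma physicalStrip_crossing_sub {u : ℂ} (hu : u ∈ physicalStrip) :
    crossing - u ∈ physicalStrip := by
  rw [physicalStrip, Set.mem_preimage, Complex.sub_re, crossing_re]
  exact ⟨sub_nonneg.2 hu.2, sub_le_self _ hu.1⟩

namespace IsGroundState

variable {m : ℕ} {d : ℝ} {ψ : (Fin (2 * m + 2) → Bool) → ℝ}

lemma re_transferEigenvalue_middle_pos (h : IsGroundState (pairShift (2 * m) d) (m + 1) ψ)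
    (h0 : 0 ≤ d) (h1 : d < π / 3)
    (hne : ∀ u ∈ physicalStrip, transferEigenvalue (pairShift (2 * m) d) ψ u ≠ 0) (v : ℝ) :
    0 < (transferEigenvalue (pairShift (2 * m) d) ψ (π / 3 + v * I)).re := by
  by_contra! hneg
  have hcont : Continuous fun v : ℝ =>
      (transferEigenvalue (pairShift (2 * m) d) ψ (π / 3 + v * I)).re :=
    Complex.continuous_re.comp ((differentiable_transferEigenvalue _ _).continuous.comp
      (by fun_prop))
  obtain ⟨y, hy⟩ := mem_range_of_exists_le_of_exists_ge hcont ⟨v, hneg⟩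
    ⟨0, by simpa using (h.re_transferEigenvalue_pi_div_three_pos h0 h1).le⟩
  refine hne _ (pi_div_three_add_mul_I_mem_physicalStrip y) ?_
  have hre : (transferEigenvalue (pairShift (2 * m) d) ψ (π / 3 + y * I)).re = 0 := hy
  rw [← h.ofReal_re_transferEigenvalue_middle h0 h1, hre, Complex.ofReal_zero]

lemma exists_le_norm_of_lt_abs_im (h : IsGroundState (pairShift (2 * m) d) (m + 1) ψ)
    (h0 : 0 ≤ d) (h1 : d < π / 3) : ∃ V, ∃ c > 0, ∀ u ∈ physicalStrip, V < |u.im| →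
      c ≤ ‖transferEigenvalue (pairShift (2 * m) d) ψ u‖ := by
  obtain ⟨V, c, hc, hle⟩ := exists_le_norm_pairEigenvalue m
  exact ⟨V, c, hc, fun u _ hu => hle _ (h.mem_pairGroundStates h0 h1) u hu⟩

lemma boundaryBound_le_norm_transferEigenvalue
    (h : IsGroundState (pairShift (2 * m) d) (m + 1) ψ) (h0 : 0 ≤ d) (h1 : d < π / 3)
    (hne : ∀ u ∈ physicalStrip, transferEigenvalue (pairShift (2 * m) d) ψ u ≠ 0) {u : ℂ}
    (hu : u ∈ physicalStrip) :
    boundaryBound m d ≤ ‖transferEigenvalue (pairShift (2 * m) d) ψ u‖ := by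
  have hnorm : ‖(boundaryBound m d : ℂ)‖ = boundaryBound m d :=
    Complex.norm_of_nonneg (boundaryBound_pos h0 h1).le
  rw [← hnorm]
  refine norm_le_norm_of_crossing_symmetric (g := fun _ => (boundaryBound m d : ℂ))
    (by fun_prop) (differentiable_transferEigenvalue _ _) (.const _) hne
    (h.exists_le_norm_of_lt_abs_im h0 h1) (fun _ => rfl)
    (h.transferEigenvalue_crossing_sub h0 h1) (fun v => ?_) hu
  rw [hnorm]
  exact (boundaryBound_le h0 h1 v).trans (h.norm_sinProd_le_norm_transferEigenvalue h0 h1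
    (h.re_transferEigenvalue_middle_pos h0 h1 hne v))

end IsGroundState

lemma norm_mul_lt_norm_add_mul {κ x : ℝ} (hκ : 0 < κ) (hx : 0 < x) {u : ℂ} (hu : 0 ≤ u.re) :
    ‖κ * u‖ < ‖(x : ℂ) + κ * u‖ := by
  rw [← sq_lt_sq₀ (norm_nonneg _) (norm_nonneg _), ← Complex.normSq_eq_norm_sq,
    ← Complex.normSq_eq_norm_sq, Complex.normSq_apply, Complex.normSq_apply]
  simp only [Complex.add_re, Complex.add_im, Complex.re_ofReal_mul, Complex.im_ofReal_mul,
    Complex.ofReal_re, Complex.ofReal_im, zero_add]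
  nlinarith [mul_nonneg hκ.le hu, mul_pos hx hx]

/-- To first order `F (x, u) = F (x, 0) + κ * u`, and both summands lie in the right half plane. -/
lemma eventually_ne_zero_of_hasStrictFDerivAt {E : Type*} [NormedAddCommGroup E] [NormedSpace ℝ E]
    {F : E × ℂ → ℂ} {F' : E × ℂ →L[ℝ] ℂ} {x₀ : E} {κ : ℝ} (hF : HasStrictFDerivAt F F' (x₀, 0))
    (hκ : 0 < κ) (hderiv : HasDerivAt (fun u => F (x₀, u)) κ 0) :
    ∀ᶠ z in 𝓝 (x₀, (0 : ℂ)), ∀ r : ℝ, 0 < r → F (z.1, 0) = r → 0 ≤ z.2.re → F z ≠ 0 := by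
  have hF' (u : ℂ) : F' (0, u) = κ * u := by
    have hpartial : HasFDerivAt (fun u => F (x₀, u)) (F' ∘L .inr ℝ E ℂ) 0 :=
      hF.hasFDerivAt.comp (0 : ℂ) (hasFDerivAt_prodMk_right _ _)
    have heq := DFunLike.congr_fun (hpartial.unique (hderiv.hasFDerivAt.restrictScalars ℝ)) u
    simpa [mul_comm] using heq
  have hpath : Tendsto (fun z : E × ℂ => (z, (z.1, (0 : ℂ)))) (𝓝 (x₀, 0))
      (𝓝 ((x₀, 0), (x₀, 0))) := Continuous.tendsto' (by fun_prop) _ _ rfl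
  filter_upwards [(hF.isLittleO.comp_tendsto hpath).def hκ] with z hz r hr hzr hre hzero
  have hsub : z - (z.1, 0) = (0, z.2) := by ext <;> simp
  simp only [Function.comp_apply, hsub, hF', hzero, hzr, Prod.norm_mk, norm_zero,
    max_eq_right (norm_nonneg z.2)] at hz
  refine hz.not_gt ?_
  calc κ * ‖z.2‖ = ‖κ * z.2‖ := by rw [norm_mul, Complex.norm_of_nonneg hκ.le]
    _ < ‖(r : ℂ) + κ * z.2‖ := norm_mul_lt_norm_add_mul hκ hr hre
    _ = ‖0 - (r : ℂ) - κ * z.2‖ := by rw [← norm_neg]; congr 1; ring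

/-- The zeros of the eigenvalue in the left half of the strip, over all shifts `d < π / 3`. -/
def pairZeros (m : ℕ) : Set ((ℝ × ((Fin (2 * m + 2) → Bool) → ℝ)) × ℂ) :=
  {z | z.1 ∈ pairGroundStates m ∧ z.1.1 < π / 3 ∧ z.2.re ∈ Set.Icc 0 (π / 3) ∧
    pairEigenvalue m z = 0}

lemma closure_pairZeros_subset (m : ℕ) : closure (pairZeros m) ⊆
    {z | z.1 ∈ pairGroundStates m ∧ z.2.re ∈ Set.Icc 0 (π / 3) ∧ pairEigenvalue m z = 0} :=
  closure_minimal (fun _ hz => ⟨hz.1, hz.2.2⟩) <|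
    ((isClosed_pairGroundStates m).preimage continuous_fst).inter
      ((isClosed_Icc.preimage (Complex.continuous_re.comp continuous_snd)).inter
        (isClosed_eq (continuous_pairEigenvalue m) continuous_const))

section FusionPoint

variable {m : ℕ} {φ : (Fin (2 * m) → Bool) → ℝ} {ψ : (Fin (2 * m + 2) → Bool) → ℝ}

lemma pairEigenvalue_pi_div_three (hφ : IsGroundState 0 m φ)
    (hψ : (π / 3, ψ) ∈ pairGroundStates m) (u : ℂ) : pairEigenvalue m ((π / 3, ψ), u) =
      sin u * sin (u + π / 3) * transferEigenvalue 0 φ u :=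
  hψ.2.1.transferEigenvalue_pairShift_pi_div_three
    (hψ.2.2.trans_lt' (by positivity)).ne' hφ u

lemma eq_zero_of_pairEigenvalue_pi_div_three_eq_zero (hφ : IsGroundState 0 m φ)
    (hne : ∀ u ∈ physicalStrip, transferEigenvalue 0 φ u ≠ 0)
    (hψ : (π / 3, ψ) ∈ pairGroundStates m) {u : ℂ} (hu : u.re ∈ Set.Icc 0 (π / 3))
    (hzero : pairEigenvalue m ((π / 3, ψ), u) = 0) : u = 0 := by
  have hpi := Real.pi_pos
  have hshift : sin (u + π / 3) ≠ 0 := by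
    refine sin_ne_zero_of_re_mem_Ioo ?_
    have hre : (u + π / 3).re = u.re + π / 3 := by simp
    rw [hre]
    constructor <;> linarith [hu.1, hu.2]
  have hmid := hne u ⟨hu.1, by linarith [hu.2]⟩
  rw [pairEigenvalue_pi_div_three hφ hψ] at hzero
  exact eq_zero_of_sin_eq_zero hu.1 (by linarith [hu.2]) (by simpa [hshift, hmid] using hzero)

lemma hasDerivAt_pairEigenvalue_pi_div_three (hφ : IsGroundState 0 m φ)
    (hψ : (π / 3, ψ) ∈ pairGroundStates m) :
    HasDerivAt (fun u => pairEigenvalue m ((π / 3, ψ), u))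
      (√3 / 2 * (transferEigenvalue 0 φ 0).re : ℝ) 0 := by
  have hfactor : DifferentiableAt ℂ (fun u => sin (u + π / 3) * transferEigenvalue 0 φ u) 0 :=
    DifferentiableAt.mul (by fun_prop) (differentiable_transferEigenvalue _ _ 0)
  have hprod := (Complex.hasDerivAt_sin 0).mul hfactor.hasDerivAt
  simp only [pairEigenvalue_pi_div_three hφ hψ, mul_assoc]
  refine hprod.congr_deriv ?_
  simp [ofReal_re_transferEigenvalue_zero, sin_pi_div_three_eq, sin_crossing]

/-- At `d = π / 3` the only zero is the simple one at `u = 0`, and for `d` slightly smaller it has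
moved to the left of the strip. -/
lemma notMem_closure_pairZeros (hφ : IsGroundState 0 m φ)
    (hne : ∀ u ∈ physicalStrip, transferEigenvalue 0 φ u ≠ 0) {u : ℂ} :
    ((π / 3, ψ), u) ∉ closure (pairZeros m) := fun hz => by
  obtain ⟨hψ, hu, hzero⟩ := closure_pairZeros_subset m hz
  obtain rfl := eq_zero_of_pairEigenvalue_pi_div_three_eq_zero hφ hne hψ hu hzero
  have hpos : 0 < (transferEigenvalue 0 φ 0).re := by
    refine hφ.re_transferEigenvalue_zero_nonneg.lt_of_ne' fun hre => ?_
    refine hne 0 ⟨le_rfl, by positivity⟩ ?_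
    rw [← ofReal_re_transferEigenvalue_zero, hre, Complex.ofReal_zero]
  have hstrict := (contDiff_pairEigenvalue m).contDiffAt.hasStrictFDerivAt
    (x := ((π / 3, ψ), (0 : ℂ))) one_ne_zero
  have hevent := eventually_ne_zero_of_hasStrictFDerivAt hstrict (by positivity)
    (hasDerivAt_pairEigenvalue_pi_div_three hφ hψ)
  obtain ⟨⟨⟨d, χ⟩, u⟩, ⟨hχ, hlt, hu, hzero⟩, hne⟩ :=
    ((mem_closure_iff_frequently.1 hz).and_eventually hevent).exists
  exact hne _ (re_pairEigenvalue_zero_pos hχ hlt)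
    (ofReal_re_transferEigenvalue_zero (pairShift (2 * m) d) χ).symm hu.1 hzero

lemma isCompact_pairZeros (hφ : IsGroundState 0 m φ)
    (hne : ∀ u ∈ physicalStrip, transferEigenvalue 0 φ u ≠ 0) : IsCompact (pairZeros m) := by
  obtain ⟨V, c, hc, hle⟩ := exists_le_norm_pairEigenvalue m
  have hclosed : IsClosed (pairZeros m) := isClosed_of_closure_subset fun ⟨⟨d, χ⟩, u⟩ hz => by
    obtain ⟨hχ, hu⟩ := closure_pairZeros_subset m hz
    refine ⟨hχ, hχ.1.2.lt_of_ne ?_, hu⟩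
    rintro rfl
    exact notMem_closure_pairZeros hφ hne hz
  refine ((isCompact_pairGroundStates m).prod
    ((isCompact_Icc (a := 0) (b := π / 3)).reProdIm (isCompact_Icc (a := -V) (b := V))))
    |>.of_isClosed_subset hclosed ?_
  rintro ⟨x, u⟩ ⟨hx, -, hu, hzero⟩
  refine ⟨hx, hu, abs_le.1 (le_of_not_gt fun hV => ?_)⟩
  have hpos := hle x hx u hV
  rw [hzero, norm_zero] at hpos
  exact hc.not_ge hpos

end FusionPoint

lemma IsGroundState.transferEigenvalue_pairShift_ne_zero {m : ℕ} {d : ℝ}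
    {ψ : (Fin (2 * m + 2) → Bool) → ℝ} (h : IsGroundState (pairShift (2 * m) d) (m + 1) ψ)
    (h0 : 0 ≤ d) (h1 : d < π / 3) (hempty : ∀ u, ((d, ψ), u) ∉ pairZeros m) {u : ℂ}
    (hu : u ∈ physicalStrip) : transferEigenvalue (pairShift (2 * m) d) ψ u ≠ 0 := fun hzero => by
  have hmem := h.mem_pairGroundStates h0 h1
  rcases le_total u.re (π / 3) with hre | hre
  · exact hempty u ⟨hmem, h1, ⟨hu.1, hre⟩, hzero⟩
  · refine hempty (crossing - u) ⟨hmem, h1,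
      ⟨(physicalStrip_crossing_sub hu).1, ?_⟩, ?_⟩
    · rw [Complex.sub_re, crossing_re]
      linarith
    · exact (h.transferEigenvalue_crossing_sub h0 h1 u).trans hzero

/-- A zero with maximal shift `d` cannot exist: for shifts larger than `d` the eigenvalue is bounded
below by `boundaryBound`, and this bound survives in the limit. -/
lemma pairZeros_eq_empty {m : ℕ} {φ : (Fin (2 * m) → Bool) → ℝ} (hφ : IsGroundState 0 m φ)
    (hne : ∀ u ∈ physicalStrip, transferEigenvalue 0 φ u ≠ 0) : pairZeros m = ∅ := by
  by_contra hnonempty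
  obtain ⟨⟨⟨d, ψ⟩, u⟩, ⟨hψ, hlt, hu, hzero⟩, hmax⟩ := (isCompact_pairZeros hφ hne).exists_isMaxOn
    (Set.nonempty_iff_ne_empty.2 hnonempty) (f := fun z => z.1.1) (by fun_prop)
  have hstrip : u ∈ physicalStrip := ⟨hu.1, hu.2.trans (by linarith [Real.pi_pos])⟩
  have hclosed : IsClosed (Prod.fst '' (pairGroundStates m ∩
      {x | boundaryBound m x.1 ≤ ‖pairEigenvalue m (x, u)‖})) := by
    refine isClosed_fst_image_pairGroundStates (isClosed_le ?_ ?_)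
    · unfold boundaryBound
      fun_prop
    · exact ((continuous_pairEigenvalue m).comp (by fun_prop)).norm
  have hsubset : Set.Ioo d (π / 3) ⊆ Prod.fst '' (pairGroundStates m ∩
      {x | boundaryBound m x.1 ≤ ‖pairEigenvalue m (x, u)‖}) := fun y hy => by
    obtain ⟨χ, hχ⟩ := exists_mem_pairGroundStates m (hψ.1.1.trans hy.1.le) hy.2
    refine ⟨(y, χ), ⟨hχ, ?_⟩, rfl⟩
    refine hχ.2.1.boundaryBound_le_norm_transferEigenvalue hχ.1.1 hy.2 (fun u' hu' => ?_) hstrip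
    exact hχ.2.1.transferEigenvalue_pairShift_ne_zero hχ.1.1 hy.2
      (fun u'' hu'' => hy.1.not_ge (hmax hu'')) hu'
  have hd : d ∈ closure (Set.Ioo d (π / 3)) := by
    rw [closure_Ioo hlt.ne]
    exact Set.left_mem_Icc.2 hlt.le
  obtain ⟨⟨_, χ⟩, ⟨hχ, hle⟩, rfl⟩ := closure_minimal hsubset hclosed hd
  obtain rfl := pairGroundStates_unique hψ hχ hlt
  rw [Set.mem_ofPred_eq, hzero, norm_zero] at hle
  exact (boundaryBound_pos (m := m) hψ.1.1 hlt).not_ge hle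

lemma transferEigenvalue_of_isEmpty {φ : (Fin 0 → Bool) → ℝ} (hφ : ∑ σ, φ σ = 1)
    (w : Fin 0 → ℝ) (u : ℂ) : transferEigenvalue w φ u = 2 := by
  refine transferEigenvalue_eq_of_mulVec_eq hφ ?_
  ext σ
  simp [Matrix.mulVec, dotProduct, inhomTransfer, transferMatrix_apply, orderedProd_zero,
    Unique.eq_default σ]

theorem IsGroundState.transferEigenvalue_ne_zero {m : ℕ} {φ : (Fin (2 * m) → Bool) → ℝ}
    (hφ : IsGroundState 0 m φ) {u : ℂ} (hu : u ∈ physicalStrip) :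
    transferEigenvalue 0 φ u ≠ 0 := by
  induction m generalizing u with
  | zero =>
    rw [transferEigenvalue_of_isEmpty hφ.sum_eq_one]
    exact two_ne_zero
  | succ m ih =>
    have hpos : 0 < π / 3 := by positivity
    obtain ⟨χ, hχ⟩ := exists_isGroundState (n := 2 * m) (w := 0) (by simp [hpos]) (k := m)
      (by lia)
    have hempty := pairZeros_eq_empty hχ fun u hu => ih hχ hu
    have hshift : pairShift (2 * m) 0 = 0 := pairShift_zero _
    rw [← hshift] at hφ ⊢
    exact hφ.transferEigenvalue_pairShift_ne_zero le_rfl hpos (by simp [hempty]) hu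

end ZeroFree

/-! ### The balanced eigenvalue of the homogeneous model -/

section Comparison

open Complex (I sin)
open scoped ComplexConjugate

/-- The building block of the comparison function `κ = comparisonNum / comparisonDen`, which is
crossing symmetric, has no zeros in the strip, and satisfies `|κ(iv)| = |sin (iv + 2π/3)|`. -/
def comparisonFactor (z : ℂ) : ℂ := (2 * sin z + √3) * (2 * sin z + 1)

/-- The numerator of the comparison function `κ`. -/
def comparisonNum (u : ℂ) : ℂ := comparisonFactor (u / 2) * comparisonFactor (u / 2 + crossing)

/-- The denominator of the comparison function `κ`. -/
def comparisonDen (u : ℂ) : ℂ := 2 * comparisonFactor (crossing - u / 2)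

lemma comparisonFactor_pi_sub (z : ℂ) : comparisonFactor (π - z) = comparisonFactor z := by
  rw [comparisonFactor, Complex.sin_pi_sub, comparisonFactor]

lemma comparisonFactor_conj (z : ℂ) : comparisonFactor (conj z) = conj (comparisonFactor z) := by
  simp [comparisonFactor, Complex.sin_conj, Complex.conj_ofNat]

lemma differentiable_comparisonFactor : Differentiable ℂ comparisonFactor := by
  unfold comparisonFactor
  fun_prop

lemma hasExpGrowth_comparisonFactor (r : ℝ) (z : ℂ) :
    HasExpGrowth fun u => comparisonFactor (r * u + z) :=
  have hsin := (HasExpGrowth.const 2).mul (hasExpGrowth_sin r z)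
  (hsin.add (.const _)).mul (hsin.add (.const _))

lemma one_le_norm_two_mul_sin_add {z : ℂ} (hz : z.re ∈ Set.Icc 0 π) {x : ℝ} (hx : 1 ≤ x) :
    1 ≤ ‖2 * sin z + x‖ := by
  refine le_trans ?_ (Complex.re_le_norm _)
  have hnonneg := mul_nonneg (Real.sin_nonneg_of_mem_Icc hz) (Real.cosh_pos z.im).le
  have hre : (2 * sin z + x).re = 2 * (Real.sin z.re * Real.cosh z.im) + x := by
    rw [complex_sin_eq_re_add_im]
    simp [-Complex.ofReal_mul]
  linarith

lemma one_le_norm_comparisonFactor {z : ℂ} (hz : z.re ∈ Set.Icc 0 π) :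
    1 ≤ ‖comparisonFactor z‖ := by
  have hsqrt : 1 ≤ √3 := Real.one_le_sqrt.2 (by norm_num)
  rw [comparisonFactor, norm_mul]
  refine one_le_mul_of_one_le_of_one_le (one_le_norm_two_mul_sin_add hz hsqrt) ?_
  exact_mod_cast one_le_norm_two_mul_sin_add hz le_rfl

lemma norm_comparisonFactor_half_mul_I (v : ℝ) :
    ‖comparisonFactor (v * I / 2)‖ = 2 * ‖sin (v * I + crossing)‖ := by
  have hsin : sin (v * I / 2) = Real.sinh (v / 2) * I := by
    rw [mul_div_right_comm, Complex.sin_mul_I, Complex.ofReal_sinh, Complex.ofReal_div,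
      Complex.ofReal_ofNat]
  have hfactor (x : ℝ) : ‖2 * sin (v * I / 2) + x‖ ^ 2 = x ^ 2 + 4 * Real.sinh (v / 2) ^ 2 := by
    have heq : 2 * sin (v * I / 2) + x = x + (2 * Real.sinh (v / 2) : ℝ) * I := by
      rw [hsin]
      push_cast
      ring
    rw [heq, ← Complex.normSq_eq_norm_sq, Complex.normSq_add_mul_I]
    ring
  have hone := hfactor 1
  rw [Complex.ofReal_one] at hone
  have hre : (v * I + crossing).re = π - π / 3 := by
    rw [Complex.add_re, Complex.re_ofReal_mul, Complex.I_re, crossing_re]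
    ring
  have him : (v * I + crossing).im = 2 * (v / 2) := by
    rw [Complex.add_im, Complex.im_ofReal_mul, Complex.I_im, crossing_im]
    ring
  rw [← sq_eq_sq₀ (norm_nonneg _) (by positivity), mul_pow, norm_sin_sq, comparisonFactor, norm_mul,
    mul_pow, hfactor, hone, hre, him, Real.sin_pi_sub, Real.sin_pi_div_three, Real.sinh_two_mul]
  linear_combination 4 * Real.sinh (v / 2) ^ 2 * Real.sq_sqrt (zero_le_three (α := ℝ)) -
    16 * Real.sinh (v / 2) ^ 2 * Real.cosh_sq (v / 2)

lemma comparisonNum_crossing_sub (u : ℂ) : comparisonNum (crossing - u) = comparisonNum u := by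
  have hleft : (crossing - u) / 2 = π - (u / 2 + crossing) := by rw [crossing]; ring
  have hright : (crossing - u) / 2 + crossing = π - u / 2 := by rw [crossing]; ring
  rw [comparisonNum, hright, hleft, comparisonFactor_pi_sub, comparisonFactor_pi_sub, mul_comm,
    comparisonNum]

lemma comparisonDen_crossing_sub (u : ℂ) : comparisonDen (crossing - u) = comparisonDen u := by
  have hsub : crossing - (crossing - u) / 2 = π - (crossing - u / 2) := by rw [crossing]; ring
  rw [comparisonDen, hsub, comparisonFactor_pi_sub, comparisonDen]

lemma differentiable_comparisonNum : Differentiable ℂ comparisonNum :=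
  (differentiable_comparisonFactor.comp (by fun_prop)).mul
    (differentiable_comparisonFactor.comp (by fun_prop))

lemma differentiable_comparisonDen : Differentiable ℂ comparisonDen :=
  (differentiable_comparisonFactor.comp (by fun_prop)).const_mul 2

lemma hasExpGrowth_comparisonNum : HasExpGrowth comparisonNum := by
  convert (hasExpGrowth_comparisonFactor 2⁻¹ 0).mul
    (hasExpGrowth_comparisonFactor 2⁻¹ crossing) using 2 with u
  rw [comparisonNum]
  congr 2 <;> push_cast <;> ring

lemma hasExpGrowth_comparisonDen : HasExpGrowth comparisonDen := by
  convert (HasExpGrowth.const 2).mul (hasExpGrowth_comparisonFactor (-2⁻¹) crossing) using 2 with u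
  rw [comparisonDen]
  congr 2
  push_cast
  ring

lemma one_le_norm_comparisonNum {u : ℂ} (hu : u ∈ physicalStrip) : 1 ≤ ‖comparisonNum u‖ := by
  have hre : (u / 2).re = u.re / 2 := Complex.div_ofNat_re u 2
  have hpi := Real.pi_pos
  obtain ⟨h0, h1⟩ := hu
  rw [comparisonNum, norm_mul]
  refine one_le_mul_of_one_le_of_one_le (one_le_norm_comparisonFactor ?_)
    (one_le_norm_comparisonFactor ?_)
  · rw [hre]
    constructor <;> linarith
  · rw [Complex.add_re, hre, crossing_re]
    constructor <;> linarith

lemma one_le_norm_comparisonDen {u : ℂ} (hu : u ∈ physicalStrip) : 1 ≤ ‖comparisonDen u‖ := by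
  have hpi := Real.pi_pos
  obtain ⟨h0, h1⟩ := hu
  rw [comparisonDen, norm_mul, Complex.norm_ofNat]
  refine one_le_mul_of_one_le_of_one_le one_le_two (one_le_norm_comparisonFactor ?_)
  rw [Complex.sub_re, Complex.div_ofNat_re, crossing_re]
  constructor <;> linarith

lemma norm_comparisonNum_mul_I (v : ℝ) :
    ‖comparisonNum (v * I)‖ = ‖sin (v * I + crossing)‖ * ‖comparisonDen (v * I)‖ := by
  have hconj : crossing - v * I / 2 = conj (v * I / 2 + crossing) := by
    rw [map_add, map_div₀, conj_mul_I, conj_crossing, Complex.conj_ofNat]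
    ring
  rw [comparisonNum, comparisonDen, hconj, comparisonFactor_conj, norm_mul, norm_mul,
    Complex.norm_conj, norm_comparisonFactor_half_mul_I, Complex.norm_ofNat]
  ring

lemma comparisonNum_pi_div_three : comparisonNum (π / 3) = 4 / 3 * comparisonDen (π / 3) := by
  have hsix : sin (π / 3 / 2) = 1 / 2 := by
    have h := congrArg Complex.ofReal Real.sin_pi_div_six
    push_cast at h
    rw [div_div, ← h]
    norm_num
  have hnum : comparisonFactor (π / 3 / 2 + crossing) = comparisonFactor (π / 3 / 2) := by
    rw [← comparisonFactor_pi_sub, crossing]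
    ring_nf
  have hden : crossing - π / 3 / 2 = π / 2 := by rw [crossing]; ring
  have hsqrt : ((√3 : ℝ) : ℂ) ^ 2 = 3 := by
    rw [← Complex.ofReal_pow, Real.sq_sqrt zero_le_three, Complex.ofReal_ofNat]
  rw [comparisonNum, comparisonDen, hnum, hden, comparisonFactor, comparisonFactor, hsix,
    Complex.sin_pi_div_two]
  linear_combination 4 * hsqrt

lemma sinProd_pairShift_zero (n : ℕ) (u : ℂ) :
    sinProd (pairShift n 0) u = sin u ^ (n + 2) := by
  rw [sinProd_pairShift, Complex.ofReal_zero, sub_zero, add_zero]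
  ring

namespace IsGroundState

variable {m : ℕ} {ψ : (Fin (2 * m + 2) → Bool) → ℝ}

lemma transferEigenvalue_pairShift_zero_ne_zero
    (h : IsGroundState (pairShift (2 * m) 0) (m + 1) ψ) {u : ℂ} (hu : u ∈ physicalStrip) :
    transferEigenvalue (pairShift (2 * m) 0) ψ u ≠ 0 := by
  rw [pairShift_zero] at h ⊢
  exact h.transferEigenvalue_ne_zero (m := m + 1) hu

lemma norm_sin_pow_le_norm_transferEigenvalue
    (h : IsGroundState (pairShift (2 * m) 0) (m + 1) ψ) (v : ℝ) :
    ‖sin (v * I + crossing)‖ ^ (2 * m + 2) ≤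
      ‖transferEigenvalue (pairShift (2 * m) 0) ψ (v * I)‖ := by
  have hpi : 0 < π / 3 := by positivity
  have hpos := h.re_transferEigenvalue_middle_pos le_rfl hpi
    (fun u hu => h.transferEigenvalue_pairShift_zero_ne_zero hu) v
  rw [← norm_pow, ← sinProd_pairShift_zero]
  exact h.norm_sinProd_le_norm_transferEigenvalue le_rfl hpi hpos

lemma norm_sin_sub_pow_le_norm_transferEigenvalue
    (h : IsGroundState (pairShift (2 * m) 0) (m + 1) ψ) {u : ℂ} (hu : u ∈ physicalStrip) :
    ‖sin (u - π / 3) ^ (2 * m + 2)‖ ≤ ‖transferEigenvalue (pairShift (2 * m) 0) ψ u‖ := by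
  have hpi : 0 < π / 3 := by positivity
  refine norm_le_norm_of_crossing_symmetric (g := fun u => sin (u - π / 3) ^ (2 * m + 2))
    (by fun_prop) (differentiable_transferEigenvalue _ _) ?_
    (fun u hu => h.transferEigenvalue_pairShift_zero_ne_zero hu)
    (h.exists_le_norm_of_lt_abs_im le_rfl hpi) (fun u => ?_)
    (h.transferEigenvalue_crossing_sub le_rfl hpi) (fun v => ?_) hu
  · simpa [sub_eq_add_neg] using (hasExpGrowth_sin 1 (-(π / 3))).pow (2 * m + 2)
  · have hneg : crossing - u - π / 3 = -(u - π / 3) := by rw [crossing]; ring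
    rw [hneg, Complex.sin_neg, Even.neg_pow ⟨m + 1, by ring⟩]
  · have hshift : v * I - π / 3 = v * I + crossing - π := by rw [crossing]; ring
    rw [hshift, Complex.sin_sub_pi, norm_pow, norm_neg]
    exact h.norm_sin_pow_le_norm_transferEigenvalue v

lemma axisWeight_zero_le_re_transferEigenvalue
    (h : IsGroundState (pairShift (2 * m) 0) (m + 1) ψ) (v : ℝ) :
    axisWeight m 0 v ≤ (transferEigenvalue (pairShift (2 * m) 0) ψ (π / 3 + v * I)).re := by
  have hpi : 0 < π / 3 := by positivity
  have hpos := h.re_transferEigenvalue_middle_pos le_rfl hpi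
    (fun u hu => h.transferEigenvalue_pairShift_zero_ne_zero hu) v
  have hle := h.norm_sin_sub_pow_le_norm_transferEigenvalue
    (pi_div_three_add_mul_I_mem_physicalStrip v)
  rw [← h.ofReal_re_transferEigenvalue_middle le_rfl hpi, Complex.norm_of_nonneg hpos.le] at hle
  refine le_of_eq_of_le ?_ hle
  rw [add_sub_cancel_left, ← sinProd_pairShift_zero, sinProd_pairShift_mul_I, norm_mul, norm_pow,
    norm_neg, norm_one, one_pow, one_mul, Complex.norm_of_nonneg (axisWeight_nonneg m 0 v)]

lemma norm_transferEigenvalue_le_norm_sin_pow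
    (h : IsGroundState (pairShift (2 * m) 0) (m + 1) ψ) (v : ℝ) :
    ‖transferEigenvalue (pairShift (2 * m) 0) ψ (v * I)‖ ≤
      3 * ‖sin (v * I + crossing)‖ ^ (2 * m + 2) := by
  have hpi : 0 < π / 3 := by positivity
  have hpos := h.re_transferEigenvalue_middle_pos le_rfl hpi
    (fun u hu => h.transferEigenvalue_pairShift_zero_ne_zero hu) v
  rw [← norm_pow, ← sinProd_pairShift_zero]
  exact h.norm_transferEigenvalue_le_three_mul le_rfl hpi hpos
    (h.axisWeight_zero_le_re_transferEigenvalue v)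

lemma norm_comparisonNum_pow_le (h : IsGroundState (pairShift (2 * m) 0) (m + 1) ψ) {u : ℂ}
    (hu : u ∈ physicalStrip) : ‖comparisonNum u ^ (2 * m + 2)‖ ≤
      ‖transferEigenvalue (pairShift (2 * m) 0) ψ u * comparisonDen u ^ (2 * m + 2)‖ := by
  have hpi : 0 < π / 3 := by positivity
  have hden (u) (hu : u ∈ physicalStrip) : 1 ≤ ‖comparisonDen u ^ (2 * m + 2)‖ := by
    rw [norm_pow]
    exact one_le_pow₀ (one_le_norm_comparisonDen hu)
  refine norm_le_norm_of_crossing_symmetric (g := fun u => comparisonNum u ^ (2 * m + 2))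
    (h := fun u => transferEigenvalue (pairShift (2 * m) 0) ψ u * comparisonDen u ^ (2 * m + 2))
    (differentiable_comparisonNum.pow _)
    ((differentiable_transferEigenvalue _ _).mul (differentiable_comparisonDen.pow _))
    (hasExpGrowth_comparisonNum.pow _)
    (fun u hu => mul_ne_zero (h.transferEigenvalue_pairShift_zero_ne_zero hu)
      (norm_pos_iff.1 (one_pos.trans_le (hden u hu)))) ?_
    (fun u => by rw [comparisonNum_crossing_sub])
    (fun u => by rw [h.transferEigenvalue_crossing_sub le_rfl hpi, comparisonDen_crossing_sub])
    (fun v => ?_) hu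
  · obtain ⟨V, c, hc, hle⟩ := h.exists_le_norm_of_lt_abs_im le_rfl hpi
    refine ⟨V, c, hc, fun u hu hV => ?_⟩
    rw [norm_mul]
    exact (hle u hu hV).trans (le_mul_of_one_le_right (norm_nonneg _) (hden u hu))
  · rw [norm_pow, norm_comparisonNum_mul_I, mul_pow, norm_mul, norm_pow]
    gcongr
    exact h.norm_sin_pow_le_norm_transferEigenvalue v

lemma norm_mul_comparisonDen_pow_le (h : IsGroundState (pairShift (2 * m) 0) (m + 1) ψ) {u : ℂ}
    (hu : u ∈ physicalStrip) :
    ‖transferEigenvalue (pairShift (2 * m) 0) ψ u * comparisonDen u ^ (2 * m + 2)‖ ≤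
      ‖3 * comparisonNum u ^ (2 * m + 2)‖ := by
  have hpi : 0 < π / 3 := by positivity
  have hnum (u) (hu : u ∈ physicalStrip) : 1 ≤ ‖3 * comparisonNum u ^ (2 * m + 2)‖ := by
    rw [norm_mul, norm_pow, Complex.norm_ofNat]
    exact one_le_mul_of_one_le_of_one_le (by norm_num) (one_le_pow₀ (one_le_norm_comparisonNum hu))
  obtain ⟨C, hC⟩ := exists_norm_transferEigenvalue_le (pairShift (2 * m) 0) ψ
  have hgrowth : HasExpGrowth (transferEigenvalue (pairShift (2 * m) 0) ψ) := ⟨C, _, hC⟩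
  refine norm_le_norm_of_crossing_symmetric (h := fun u => 3 * comparisonNum u ^ (2 * m + 2))
    (g := fun u => transferEigenvalue (pairShift (2 * m) 0) ψ u * comparisonDen u ^ (2 * m + 2))
    ((differentiable_transferEigenvalue _ _).mul (differentiable_comparisonDen.pow _))
    ((differentiable_comparisonNum.pow _).const_mul _)
    (hgrowth.mul (hasExpGrowth_comparisonDen.pow _))
    (fun u hu => norm_pos_iff.1 (one_pos.trans_le (hnum u hu)))
    ⟨0, 1, one_pos, fun u hu _ => hnum u hu⟩
    (fun u => by rw [h.transferEigenvalue_crossing_sub le_rfl hpi, comparisonDen_crossing_sub])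
    (fun u => by rw [comparisonNum_crossing_sub]) (fun v => ?_) hu
  rw [norm_mul, norm_mul, norm_pow, norm_pow, norm_comparisonNum_mul_I, mul_pow, Complex.norm_ofNat,
    ← mul_assoc]
  gcongr
  exact h.norm_transferEigenvalue_le_norm_sin_pow v

/-- The two comparisons at `u = π / 3`, where the comparison function takes the value `4 / 3`. -/
lemma norm_transferEigenvalue_pi_div_three_mem_Icc
    (h : IsGroundState (pairShift (2 * m) 0) (m + 1) ψ) :
    ‖transferEigenvalue (pairShift (2 * m) 0) ψ (π / 3)‖ ∈
      Set.Icc ((4 / 3) ^ (2 * m + 2) : ℝ) (3 * (4 / 3) ^ (2 * m + 2)) := by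
  have hmem : (π / 3 : ℂ) ∈ physicalStrip := by
    simpa using pi_div_three_add_mul_I_mem_physicalStrip 0
  have hden : 0 < ‖comparisonDen (π / 3)‖ ^ (2 * m + 2) :=
    pow_pos (one_pos.trans_le (one_le_norm_comparisonDen hmem)) _
  have hratio : ‖comparisonNum (π / 3)‖ = 4 / 3 * ‖comparisonDen (π / 3)‖ := by
    rw [comparisonNum_pi_div_three, norm_mul]
    norm_num
  have hlower := h.norm_comparisonNum_pow_le hmem
  have hupper := h.norm_mul_comparisonDen_pow_le hmem
  rw [norm_mul, norm_pow, norm_pow, hratio, mul_pow] at hlower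
  rw [norm_mul, norm_mul, norm_pow, norm_pow, hratio, mul_pow, Complex.norm_ofNat,
    ← mul_assoc] at hupper
  exact ⟨le_of_mul_le_mul_right hlower hden, le_of_mul_le_mul_right hupper hden⟩

end IsGroundState

end Comparison

/-! ### The partition function as a trace -/

section PartitionFunction

variable {N M : ℕ}

/-- The row-to-row transfer matrix of the homogeneous six-vertex model on a row of `N` vertices. -/
def rowTransfer (a b c : ℝ) (N : ℕ) : Matrix (Fin N → Bool) (Fin N → Bool) ℝ :=
  transferMatrix fun _ : Fin N => laxOp a b c

lemma ite_inArrows_vWeight_eq_laxOp (a b c : ℝ) (ω : Cfg N M) (v : Fin N × Fin M) :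
    (if inArrows ω v = 2 then vWeight a b c ω v else 0) =
      laxOp a b c (ω.2 (v.1, predF v.2)) (ω.2 v) (ω.1 (predF v.1, v.2)) (ω.1 v) := by
  cases hs : ω.2 (v.1, predF v.2) <;> cases ht : ω.2 v <;>
    cases hα : ω.1 (predF v.1, v.2) <;> cases hβ : ω.1 v <;>
    simp [inArrows, vWeight, laxOp, hs, ht, hα, hβ]

lemma ite_isSixVertex_W_eq_prod_laxOp (a b c : ℝ) (ω : Cfg N M) :
    (if IsSixVertex ω then W a b c ω else 0) = ∏ v : Fin N × Fin M,
      laxOp a b c (ω.2 (v.1, predF v.2)) (ω.2 v) (ω.1 (predF v.1, v.2)) (ω.1 v) := by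
  simp only [← ite_inArrows_vWeight_eq_laxOp, Finset.prod_ite_zero, Finset.mem_univ, forall_const,
    W]

lemma prod_rowTransfer_eq_sum (hN : 0 < N) (a b c : ℝ) (h : Fin M → Fin N → Bool) :
    ∏ j, rowTransfer a b c N (h (predF j)) (h j) = ∑ g : Fin M → Fin N → Bool,
      ∏ j, ∏ i, laxOp a b c (h (predF j) i) (h j i) (g j (predF i)) (g j i) := by
  simp only [rowTransfer, transferMatrix_apply, trace_orderedProd hN]
  rw [Finset.prod_univ_sum, Fintype.piFinset_univ]

theorem Z_eq_trace_rowTransfer_pow (hN : 0 < N) (hM : 0 < M) (a b c : ℝ) :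
    Z N M a b c = (rowTransfer a b c N ^ M).trace := by
  simp only [Z, ite_isSixVertex_W_eq_prod_laxOp, ← orderedProd_const, trace_orderedProd hM,
    prod_rowTransfer_eq_sum hN]
  rw [Finset.sum_comm, ← Fintype.sum_prod_type']
  let rows : (Fin N × Fin M → Bool) ≃ (Fin M → Fin N → Bool) :=
    (Equiv.arrowCongr (Equiv.prodComm _ _) (Equiv.refl _)).trans (Equiv.curry _ _ _)
  refine Fintype.sum_equiv (rows.prodCongr rows) _ _ fun ω => ?_
  rw [Fintype.prod_prod_type_right]
  rfl

end PartitionFunction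

/-! ### Gluing two rows -/

section Gluing

open scoped Matrix

variable {n k : ℕ} {a b c : ℝ}

lemma submatrix_orderedProd {ι κ R : Type*} [Fintype ι] [DecidableEq ι] [Fintype κ]
    [DecidableEq κ] [CommSemiring R] (e : κ ≃ ι) (A : Fin n → Matrix ι ι R) :
    (orderedProd A).submatrix e e = orderedProd fun i => (A i).submatrix e e :=
  map_orderedProd (Matrix.reindexAlgEquiv R R e.symm) A

/-- The contribution to the transfer matrix of the horizontal edges that start and end with the
spin `α`. -/
def rowBlock (a b c : ℝ) (n : ℕ) (α : Bool) : Matrix (Fin n → Bool) (Fin n → Bool) ℝ :=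
  Matrix.of fun σ τ => orderedProd (fun j => laxOp a b c (σ j) (τ j)) α α

lemma rowTransfer_eq_rowBlock_add (a b c : ℝ) (n : ℕ) :
    rowTransfer a b c n = rowBlock a b c n true + rowBlock a b c n false := by
  ext σ τ
  simp [rowTransfer, transferMatrix_apply, Matrix.trace, rowBlock]

lemma rowBlock_apply_not (a b c : ℝ) (α : Bool) (σ τ : Fin n → Bool) :
    rowBlock a b c n α (fun j => !σ j) (fun j => !τ j) = rowBlock a b c n (!α) σ τ := by
  have hflip (s t : Bool) :
      laxOp a b c (!s) (!t) = (laxOp a b c s t).submatrix Equiv.boolNot Equiv.boolNot := by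
    ext α β
    cases s <;> cases t <;> cases α <;> cases β <;> rfl
  simp only [rowBlock, Matrix.of_apply, hflip, ← submatrix_orderedProd]
  rfl

lemma transpose_rowBlock (a c : ℝ) (n : ℕ) (α : Bool) :
    (rowBlock a a c n α)ᵀ = rowBlock a a c n (!α) := by
  have hflip (s t : Bool) :
      laxOp a a c t s = (laxOp a a c s t).submatrix Equiv.boolNot Equiv.boolNot := by
    ext α β
    cases s <;> cases t <;> cases α <;> cases β <;> rfl
  ext σ τ
  simp only [Matrix.transpose_apply, rowBlock, Matrix.of_apply]
  simp only [fun j => hflip (σ j) (τ j), ← submatrix_orderedProd]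
  rfl

lemma isSymm_rowTransfer (a c : ℝ) (n : ℕ) : (rowTransfer a a c n).IsSymm := by
  rw [Matrix.IsSymm, rowTransfer_eq_rowBlock_add, Matrix.transpose_add, transpose_rowBlock,
    transpose_rowBlock, Bool.not_true, Bool.not_false, add_comm]

lemma rowTransfer_nonneg (ha : 0 ≤ a) (hb : 0 ≤ b) (hc : 0 ≤ c) (σ τ : Fin n → Bool) :
    0 ≤ rowTransfer a b c n σ τ :=
  transferMatrix_laxOp_nonneg (fun _ => ha) (fun _ => hb) hc σ τ

lemma sum_rowBlock_mul_le_rowTransfer_append (ha : 0 ≤ a) (hb : 0 ≤ b) (hc : 0 ≤ c)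
    (σ τ : Fin n → Bool) (σ' τ' : Fin k → Bool) :
    ∑ α, rowBlock a b c n α σ τ * rowBlock a b c k α σ' τ' ≤
      rowTransfer a b c (n + k) (Fin.append σ σ') (Fin.append τ τ') := by
  rw [rowTransfer, transferMatrix_apply, orderedProd_append, Matrix.trace]
  simp only [Fin.append_left, Fin.append_right]
  refine Finset.sum_le_sum fun α _ => Finset.single_le_sum
    (f := fun β => orderedProd (fun j => laxOp a b c (σ j) (τ j)) α β *
      orderedProd (fun j => laxOp a b c (σ' j) (τ' j)) β α) (fun β _ => mul_nonneg ?_ ?_)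
    (Finset.mem_univ α) <;>
  exact orderedProd_apply_nonneg (fun j => laxOp_nonneg ha hb hc _ _) _ _

lemma sum_append {S R : Type*} [Fintype S] [AddCommMonoid R] (f : (Fin (n + k) → S) → R) :
    ∑ ρ, f ρ = ∑ σ : Fin n → S, ∑ τ : Fin k → S, f (Fin.append σ τ) := by
  rw [← (Fin.appendEquiv n k).sum_comp, Fintype.sum_prod_type]
  rfl

lemma sum_comp_not {R : Type*} [AddCommMonoid R] (f : (Fin n → Bool) → R) :
    ∑ σ : Fin n → Bool, f (fun j => !σ j) = ∑ σ, f σ :=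
  (Equiv.arrowCongr (Equiv.refl (Fin n)) Equiv.boolNot).sum_comp f

lemma numUp_append (σ : Fin n → Bool) (τ : Fin k → Bool) :
    numUp (Fin.append σ τ) = numUp σ + numUp τ := by
  simp only [numUp, Finset.card_filter, Fin.sum_univ_add, Fin.append_left, Fin.append_right]

variable {ψ : (Fin n → Bool) → ℝ}

lemma quadForm_rowBlock_comp_not (a b c : ℝ) (α : Bool) (ψ : (Fin n → Bool) → ℝ) :
    quadForm (rowBlock a b c n α) (fun σ => ψ fun j => !σ j) =
      quadForm (rowBlock a b c n (!α)) ψ := by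
  simp only [quadForm]
  rw [← sum_comp_not]
  simp only [← sum_comp_not fun τ => _ * rowBlock a b c n α _ τ * _, rowBlock_apply_not,
    Bool.not_not]

lemma quadForm_rowBlock_of_mulVec_eq {μ : ℝ} (h : rowTransfer a a c n *ᵥ ψ = μ • ψ) (α : Bool) :
    quadForm (rowBlock a a c n α) ψ = μ * (∑ σ, ψ σ ^ 2) / 2 := by
  have hsum := quadForm_of_mulVec_eq h
  have heq := quadForm_transpose (rowBlock a a c n false) ψ
  rw [rowTransfer_eq_rowBlock_add, quadForm_add] at hsum
  rw [transpose_rowBlock, Bool.not_false] at heq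
  cases α <;> linarith

/-- The vector `ψ ⊗ ψ̄` on a doubled row, where `ψ̄` is the image of `ψ` under spin reversal: it is
supported on balanced rows as soon as `ψ` has a definite number of up spins. -/
def mirrorTensor (ψ : (Fin n → Bool) → ℝ) (ρ : Fin (n + n) → Bool) : ℝ :=
  ψ (fun j => ρ (j.castAdd n)) * ψ fun j => !ρ (j.natAdd n)

lemma mirrorTensor_append (ψ : (Fin n → Bool) → ℝ) (σ τ : Fin n → Bool) :
    mirrorTensor ψ (Fin.append σ τ) = ψ σ * ψ fun j => !τ j := by
  simp only [mirrorTensor, Fin.append_left, Fin.append_right]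

lemma mirrorTensor_eq_zero (hψ : ∀ σ, numUp σ ≠ k → ψ σ = 0) {ρ : Fin (n + n) → Bool}
    (hρ : numUp ρ ≠ n) : mirrorTensor ψ ρ = 0 := by
  obtain ⟨⟨σ, τ⟩, rfl⟩ := (Fin.appendEquiv n n).surjective ρ
  change numUp (Fin.append σ τ) ≠ n at hρ
  change mirrorTensor ψ (Fin.append σ τ) = 0
  rw [numUp_append] at hρ
  rw [mirrorTensor_append]
  rcases eq_or_ne (numUp σ) k with hσ | hσ
  · have hτ := numUp_not_add τ
    rw [hψ (fun j => !τ j) (by omega), mul_zero]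
  · rw [hψ σ hσ, zero_mul]

lemma sum_mirrorTensor_sq (ψ : (Fin n → Bool) → ℝ) :
    ∑ ρ, mirrorTensor ψ ρ ^ 2 = (∑ σ, ψ σ ^ 2) ^ 2 := by
  simp only [sum_append, mirrorTensor_append, mul_pow, ← Finset.mul_sum,
    sum_comp_not fun τ => ψ τ ^ 2, ← Finset.sum_mul, sq (∑ σ, ψ σ ^ 2)]

lemma sum_quadForm_mul_le_quadForm_mirrorTensor (ha : 0 ≤ a) (hb : 0 ≤ b) (hc : 0 ≤ c)
    (hψ : ∀ σ, 0 ≤ ψ σ) :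
    ∑ α, quadForm (rowBlock a b c n α) ψ * quadForm (rowBlock a b c n (!α)) ψ ≤
      quadForm (rowTransfer a b c (n + n)) (mirrorTensor ψ) := by
  simp only [← quadForm_rowBlock_comp_not, quadForm_mul_quadForm, Fintype.sum_bool,
    ← Finset.sum_add_distrib]
  simp only [quadForm, sum_append, mirrorTensor_append]
  refine Finset.sum_le_sum fun σ _ => Finset.sum_le_sum fun σ' _ => Finset.sum_le_sum fun τ _ =>
    Finset.sum_le_sum fun τ' _ => ?_
  have hentry := sum_rowBlock_mul_le_rowTransfer_append ha hb hc σ τ σ' τ'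
  rw [Fintype.sum_bool] at hentry
  rw [← add_mul, ← mul_add]
  have hσ := mul_nonneg (hψ σ) (hψ fun j => !σ' j)
  have hτ := mul_nonneg (hψ τ) (hψ fun j => !τ' j)
  gcongr

theorem IsPerronPair.sq_le_two_mul (ha : 0 ≤ a) (hc : 0 ≤ c) {φ : (Fin (n + n) → Bool) → ℝ}
    {Λ μ : ℝ} (hψ : IsPerronPair (rowTransfer a a c n) {σ | numUp σ = k} ψ Λ)
    (hφ : IsPerronPair (rowTransfer a a c (n + n)) {σ | numUp σ = n} φ μ) : Λ ^ 2 ≤ 2 * μ := by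
  set S := ∑ σ, ψ σ ^ 2
  have hS : 0 < S := by
    obtain ⟨σ, hσ⟩ : ∃ σ, ψ σ ≠ 0 := by
      by_contra! h
      simpa [h] using hψ.sum_eq_one
    exact Finset.sum_pos' (fun σ _ => sq_nonneg _) ⟨σ, Finset.mem_univ σ, by positivity⟩
  have hlower := sum_quadForm_mul_le_quadForm_mirrorTensor ha ha hc hψ.nonneg
  have hupper : quadForm (rowTransfer a a c (n + n)) (mirrorTensor ψ) ≤ μ * S ^ 2 := by
    rw [← sum_mirrorTensor_sq]
    exact hφ.quadForm_le (rowTransfer_nonneg ha ha hc) (isSymm_rowTransfer a c (n + n))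
      fun ρ => mirrorTensor_eq_zero hψ.eq_zero
  simp only [quadForm_rowBlock_of_mulVec_eq hψ.mulVec_eq, Fintype.sum_bool] at hlower
  have h : Λ ^ 2 * S ^ 2 ≤ 2 * μ * S ^ 2 := by linarith
  exact le_of_mul_le_mul_right h (by positivity)

end Gluing

/-! ### Eigenvalue bounds for square ice -/

section SquareIce

open scoped Matrix

variable {N k : ℕ} {μ : ℝ} {ψ : (Fin N → Bool) → ℝ}

lemma isPrimitiveOn_rowTransfer {a b c : ℝ} (ha : 0 < a) (hb : 0 < b) (hc : 0 < c) (hk : k ≤ N) :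
    IsPrimitiveOn (rowTransfer a b c N) {σ | numUp σ = k} :=
  isPrimitiveOn_transferMatrix_laxOp (fun _ => ha) (fun _ => hb) hc hk

lemma centralTransfer_zero (n : ℕ) :
    centralTransfer (0 : Fin n → ℝ) = (√3 / 2) ^ n • rowTransfer 1 1 1 n := by
  have hscale := transferMatrix_smul (fun _ : Fin n => √3 / 2) fun _ => laxOp (1 : ℝ) 1 1
  simp only [laxOp_smul, mul_one, Finset.prod_const, Finset.card_univ, Fintype.card_fin] at hscale
  simp only [centralTransfer, Pi.zero_apply, add_zero, sub_zero, Real.sin_pi_div_three]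
  exact hscale

/-- Lieb's square ice constant: the exponential of the free energy of square ice. -/
def liebConstant : ℝ := (4 / 3 : ℝ) ^ (3 / 2 : ℝ)

lemma liebConstant_pos : 0 < liebConstant := by unfold liebConstant; positivity

lemma log_liebConstant : Real.log liebConstant = 3 / 2 * Real.log (4 / 3) :=
  Real.log_rpow (by norm_num) _

lemma sqrt_three_div_two_mul_liebConstant : √3 / 2 * liebConstant = 4 / 3 := by
  have hsqrt : √3 / 2 = (4 / 3 : ℝ) ^ (-(1 / 2) : ℝ) := by
    rw [Real.rpow_neg (by norm_num), ← Real.sqrt_eq_rpow, Real.sqrt_div (by norm_num),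
      show (4 : ℝ) = 2 ^ 2 by norm_num, Real.sqrt_sq (by norm_num), inv_div]
  rw [hsqrt, liebConstant, ← Real.rpow_add (by norm_num)]
  norm_num

theorem IsPerronPair.mem_Icc_of_balanced {m : ℕ} {ψ : (Fin (2 * m + 2) → Bool) → ℝ}
    (h : IsPerronPair (rowTransfer 1 1 1 (2 * m + 2)) {σ | numUp σ = m + 1} ψ μ) :
    μ ∈ Set.Icc (liebConstant ^ (2 * m + 2)) (3 * liebConstant ^ (2 * m + 2)) := by
  have hcentral := h.smul ((√3 / 2) ^ (2 * m + 2))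
  rw [← centralTransfer_zero, ← pairShift_zero (2 * m)] at hcentral
  have hground := hcentral.isGroundState
    (by simp [pairShift_zero, Real.pi_pos]) (by omega)
  have hmem := hground.norm_transferEigenvalue_pi_div_three_mem_Icc
  have hμ := h.eigenvalue_nonneg (rowTransfer_nonneg zero_le_one zero_le_one zero_le_one)
  rw [transferEigenvalue_pi_div_three, centralEigenvalue, hcentral.sum_mulVec, Complex.norm_real,
    Real.norm_of_nonneg (by positivity), ← sqrt_three_div_two_mul_liebConstant, mul_pow,
    mul_left_comm] at hmem
  have hpos : 0 < (√3 / 2) ^ (2 * m + 2) := by positivity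
  exact ⟨le_of_mul_le_mul_left hmem.1 hpos, le_of_mul_le_mul_left hmem.2 hpos⟩

lemma IsPerronPair.mem_Icc_of_eq_two_mul (hk : 0 < k) (hN : N = 2 * k)
    (h : IsPerronPair (rowTransfer 1 1 1 N) {σ | numUp σ = k} ψ μ) :
    μ ∈ Set.Icc (liebConstant ^ N) (3 * liebConstant ^ N) := by
  obtain ⟨m, rfl⟩ := Nat.exists_eq_succ_of_ne_zero hk.ne'
  subst hN
  exact h.mem_Icc_of_balanced

theorem IsPerronPair.le_sqrt_six_mul_pow (hN : 0 < N)
    (h : IsPerronPair (rowTransfer 1 1 1 N) {σ | numUp σ = k} ψ μ) :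
    μ ≤ √6 * liebConstant ^ N := by
  obtain ⟨φ, ν, hφ⟩ := (isPrimitiveOn_rowTransfer zero_lt_one zero_lt_one zero_lt_one
    (Nat.le_add_right N N)).exists_isPerronPair
  have hglue := h.sq_le_two_mul zero_le_one zero_le_one hφ
  have hν := (hφ.mem_Icc_of_eq_two_mul hN (two_mul N).symm).2
  have hL := liebConstant_pos
  refine le_of_sq_le_sq ?_ (by positivity)
  calc μ ^ 2 ≤ 6 * liebConstant ^ (N + N) := by linarith
    _ = (√6 * liebConstant ^ N) ^ 2 := by
      rw [mul_pow, Real.sq_sqrt (by norm_num), pow_add, sq (liebConstant ^ N)]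

section MaximalEigenvalue

variable {a b c : ℝ}

lemma exists_isPerronPair_rowTransfer_forall_le (ha : 0 < a) (hb : 0 < b) (hc : 0 < c) (N : ℕ) :
    ∃ k ≤ N, ∃ ψ Λ, IsPerronPair (rowTransfer a b c N) {σ | numUp σ = k} ψ Λ ∧
      ∀ l ≤ N, ∀ φ μ, IsPerronPair (rowTransfer a b c N) {σ | numUp σ = l} φ μ → μ ≤ Λ := by
  have hprim (l : Fin (N + 1)) := isPrimitiveOn_rowTransfer ha hb hc (Fin.is_le l)
  choose ψ μ hψ using fun l => (hprim l).exists_isPerronPair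
  obtain ⟨k, hk⟩ := Finite.exists_max μ
  refine ⟨k, k.is_le, ψ k, μ k, hψ k, fun l hl φ ν hφ => ?_⟩
  exact ((hprim ⟨l, Nat.lt_succ_of_le hl⟩).eigenvalue_le hφ (hψ _)).trans (hk _)

lemma trace_rowTransfer_pow_le (ha : 0 < a) (hb : 0 < b) (hc : 0 < c) {Λ : ℝ}
    (hΛ : ∀ k ≤ N, ∀ ψ μ, IsPerronPair (rowTransfer a b c N) {σ | numUp σ = k} ψ μ → μ ≤ Λ)
    (M : ℕ) : (rowTransfer a b c N ^ M).trace ≤ 2 ^ N * Λ ^ M := by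
  have hdiag (σ : Fin N → Bool) : (rowTransfer a b c N ^ M) σ σ ≤ Λ ^ M := by
    have hprim := isPrimitiveOn_rowTransfer ha hb hc (numUp_le σ)
    obtain ⟨ψ, μ, h⟩ := hprim.exists_isPerronPair
    exact (hprim.pow_apply_self_le h M rfl).trans
      (pow_le_pow_left₀ (h.eigenvalue_nonneg hprim.nonneg) (hΛ _ (numUp_le σ) _ _ h) M)
  exact (Finset.sum_le_sum fun σ _ => hdiag σ).trans_eq (by simp)

end MaximalEigenvalue

end SquareIce

/-! ### The two limits -/

section Limits

lemma tendsto_log_div_of_mul_pow_le {l : Filter ℕ} (hl : l ≤ atTop) {t : ℕ → ℝ} {μ c C : ℝ}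
    (hμ : 0 < μ) (hc : 0 < c) (hlower : ∀ᶠ n in l, c * μ ^ n ≤ t n)
    (hupper : ∀ᶠ n in l, t n ≤ C * μ ^ n) :
    Tendsto (fun n => Real.log (t n) / n) l (nhds (Real.log μ)) := by
  have hlim (K : ℝ) : Tendsto (fun n : ℕ => Real.log K / n + Real.log μ) l (nhds (Real.log μ)) := by
    simpa using
      ((tendsto_const_div_atTop_nhds_zero_nat (Real.log K)).mono_left hl).add_const (Real.log μ)
  have hlog {K : ℝ} (hK : 0 < K) {n : ℕ} (hn : 1 ≤ n) :
      Real.log K / n + Real.log μ = Real.log (K * μ ^ n) / n := by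
    rw [Real.log_mul hK.ne' (by positivity), Real.log_pow]
    field_simp
  have hpos : ∀ᶠ n in l, 1 ≤ n := (eventually_ge_atTop 1).filter_mono hl
  refine tendsto_of_tendsto_of_tendsto_of_le_of_le' (hlim c) (hlim C) ?_ ?_
  · filter_upwards [hlower, hpos] with n hn hn1
    rw [hlog hc hn1]
    gcongr
  · filter_upwards [hlower, hupper, hpos] with n hn hn' hn1
    have ht : 0 < t n := lt_of_lt_of_le (by positivity) hn
    have hC : 0 < C := pos_of_mul_pos_left (ht.trans_le hn') (by positivity)
    rw [hlog hC hn1]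
    gcongr

theorem exists_tendsto_log_Z_one_div {N : ℕ} (hN : Even N) (hN2 : 2 ≤ N) :
    ∃ Λ ∈ Set.Icc (liebConstant ^ N) (√6 * liebConstant ^ N),
      Tendsto (fun M : ℕ => Real.log (Z N M 1 1 1) / M) atTop (nhds (Real.log Λ)) := by
  obtain ⟨k, hk, ψ, Λ, h, hmax⟩ :=
    exists_isPerronPair_rowTransfer_forall_le zero_lt_one zero_lt_one zero_lt_one N
  obtain ⟨l, hl⟩ := hN.two_dvd
  have hlower : liebConstant ^ N ≤ Λ := by
    obtain ⟨φ, μ, hφ⟩ := (isPrimitiveOn_rowTransfer zero_lt_one zero_lt_one zero_lt_one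
      (by omega : l ≤ N)).exists_isPerronPair
    exact (hφ.mem_Icc_of_eq_two_mul (by omega) hl).1.trans (hmax l (by omega) φ μ hφ)
  have hΛ : 0 < Λ := (pow_pos liebConstant_pos N).trans_le hlower
  obtain ⟨c, hc, htrace⟩ := (isPrimitiveOn_rowTransfer zero_lt_one zero_lt_one zero_lt_one
    hk).exists_mul_pow_le_trace_pow h hΛ
  refine ⟨Λ, ⟨hlower, h.le_sqrt_six_mul_pow (by omega)⟩, ?_⟩
  have hlim := tendsto_log_div_of_mul_pow_le le_rfl hΛ hc htrace
    (.of_forall (trace_rowTransfer_pow_le zero_lt_one zero_lt_one zero_lt_one hmax))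
  refine hlim.congr' ?_
  filter_upwards [eventually_gt_atTop 0] with M hM
  rw [Z_eq_trace_rowTransfer_pow (by omega) hM]

end Limits

/-- **Free energy of the six-vertex model at a = b = c = 1** (square ice):
the free energy exists and equals `(3/2) log(4/3)`. -/
theorem free_energy_square_ice :
    FreeEnergyIs 1 1 1 ((3/2) * Real.log (4/3)) := by
  choose! Λ hΛ hlim using fun (N : ℕ) (hN : Even N ∧ 2 ≤ N) =>
    exists_tendsto_log_Z_one_div hN.1 hN.2
  refine ⟨fun N => Real.log (Λ N) / N, fun N hN hN2 => ?_, ?_⟩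
  · simp only [← div_div]
    exact (hlim N ⟨hN, hN2⟩).div_const (N : ℝ)
  · have hadmissible : ∀ᶠ N : ℕ in atTop ⊓ 𝓟 {N | Even N}, Even N ∧ 2 ≤ N :=
      .and (mem_inf_of_right (mem_principal_self _))
        ((eventually_ge_atTop 2).filter_mono inf_le_left)
    rw [← log_liebConstant]
    exact tendsto_log_div_of_mul_pow_le inf_le_left liebConstant_pos zero_lt_one
      (hadmissible.mono fun N hN => (one_mul _).trans_le (hΛ N hN).1)
      (hadmissible.mono fun N hN => (hΛ N hN).2)

end SixVertexFE
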